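/- arXiv:math/0110223 — 2 statements merged into one kernel-verified Lean document; each statement's English description precedes it below -/
import Mathlib

section
/- Let H be a non-semisimple Hopf algebra over k of dimension pq, where p ≤ q are odd primes, with antipode S. Then S^{4p} = id_H, and the trace of the linear map S^{2p} on H equals p²·d (as an element of k) for some odd integer d. -/
open scoped TensorProduct

/-- A group-like element of a coalgebra: a nonzero element `a` with `Δ a = a ⊗ a`. -/
def IsGroupLike (k : Type*) {H : Type*} [CommSemiring k] [AddCommMonoid H] [Module k H]
    [Coalgebra k H] (a : H) : Prop :=
  a ≠ 0 ∧ Coalgebra.comul (R := k) a = a ⊗ₜ[k] a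

/-- The convolution product on the dual of a coalgebra. -/
noncomputable def conv {k H : Type*} [CommSemiring k] [AddCommMonoid H] [Module k H]
    [Coalgebra k H] (f g : Module.Dual k H) : Module.Dual k H :=
  LinearMap.mul' k k ∘ₗ TensorProduct.map f g ∘ₗ Coalgebra.comul

/-- `l ∈ H*` is a right integral of `H*`: `l * β = β(1) • l` for the convolution product. -/
def IsRightIntegralDual (k : Type*) {H : Type*} [CommSemiring k] [Semiring H]
    [HopfAlgebra k H] (l : Module.Dual k H) : Prop :=
  ∀ f : Module.Dual k H, conv l f = f 1 • l

/-- `Λ ∈ H` is a left integral of `H`: `a * Λ = ε(a) • Λ` for all `a`. -/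
def IsLeftIntegral (k : Type*) {H : Type*} [CommSemiring k] [Semiring H]
    [HopfAlgebra k H] (L : H) : Prop :=
  ∀ a : H, a * L = Coalgebra.counit (R := k) a • L

/-- `Λ ∈ H` is a right integral of `H`: `Λ * a = ε(a) • Λ` for all `a`. -/
def IsRightIntegral (k : Type*) {H : Type*} [CommSemiring k] [Semiring H]
    [HopfAlgebra k H] (L : H) : Prop :=
  ∀ a : H, L * a = Coalgebra.counit (R := k) a • L

/-- `g` is the distinguished group-like element of `H`: it is group-like and
`β * λ = β(g) • λ` for some nonzero right integral `λ` of `H*`. -/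
def IsDistinguishedGroupLike (k : Type*) {H : Type*} [CommSemiring k] [Semiring H]
    [HopfAlgebra k H] (g : H) : Prop :=
  IsGroupLike k g ∧ ∃ l : Module.Dual k H, l ≠ 0 ∧ IsRightIntegralDual k l ∧
    ∀ f : Module.Dual k H, conv f l = f g • l

/-- `α` is the distinguished group-like element of `H*`: an algebra map `H → k` with
`Λ * a = α(a) • Λ` for some nonzero left integral `Λ` of `H`. -/
def IsDistinguishedGroupLikeDual (k : Type*) {H : Type*} [CommSemiring k] [Semiring H]
    [HopfAlgebra k H] (α : H →ₐ[k] k) : Prop :=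
  ∃ L : H, L ≠ 0 ∧ IsLeftIntegral k L ∧ ∀ a : H, L * a = α a • L

/-- `IsHopfIndex k g n` : `n` is the index of the Hopf algebra `H` with distinguished
group-like element `g`, i.e. the smallest positive integer `n` with `S ^ (4 n) = id` and
`g ^ n = 1`, where `S` is the antipode. -/
def IsHopfIndex (k : Type*) {H : Type*} [CommSemiring k] [Semiring H] [HopfAlgebra k H]
    (g : H) (n : ℕ) : Prop :=
  0 < n ∧ (HopfAlgebra.antipode (R := k) (A := H) : Module.End k H) ^ (4 * n) = 1 ∧ g ^ n = 1 ∧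
    ∀ m : ℕ, 0 < m → (HopfAlgebra.antipode (R := k) (A := H) : Module.End k H) ^ (4 * m) = 1 →
      g ^ m = 1 → n ≤ m

/-- The simultaneous eigenspace `H^ω_{a,i,j} = {u ∈ H | S² u = (-1)^a ω^i • u, u * g = ω^j • u}`
for `(a,i,j) ∈ ℤ/2 × ℤ/n × ℤ/n`. -/
noncomputable def hopfEigenspace {k H : Type*} [CommRing k] [Ring H] [HopfAlgebra k H]
    (g : H) (ω : k) {n : ℕ} (t : ZMod 2 × ZMod n × ZMod n) : Submodule k H :=
  Module.End.eigenspace ((HopfAlgebra.antipode (R := k) (A := H) : Module.End k H) ^ 2)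
      ((-1 : k) ^ t.1.val * ω ^ t.2.1.val) ⊓
    Module.End.eigenspace (LinearMap.mulRight k g : Module.End k H) (ω ^ t.2.2.val)

/-- Convolution powers of an element of the dual; the zeroth power is the counit,
the unit of the convolution algebra. -/
noncomputable def convPow {k H : Type*} [CommSemiring k] [AddCommMonoid H] [Module k H]
    [Coalgebra k H] (f : Module.Dual k H) : ℕ → Module.Dual k H
  | 0 => Coalgebra.counit
  | m + 1 => conv f (convPow f m)

/-!
Let `g` and `α` be the distinguished group-like element of `H` and the distinguished character.
Radford's formula writes `S⁴` as a product of commuting operators built from `g` and `α`, so the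
order of `S²` divides `2 r` whenever the orders of `g` and `α` divide `r`.

The functional `f ↦ Tr(y ↦ f(y₁) S²(y₂) x)` on `H*` is evaluation at a left integral of `H`. When
`H` is not semisimple, every character kills the left integrals (for `ε` this is Maschke's theorem),
hence `S²` composed with right multiplication by any element, or with the hit action of any
character, has trace zero.

The orders of `g` and `α` divide `p q`; trace zero excludes that they multiply to `p q` with
`α(g) = 1`, and `dim H` being odd excludes that both are trivial. So both divide one prime
`r ∈ {p, q}`, and one of the corresponding operators, `T`, has order `r`. Its eigenspaces all have
dimension `s = p q / r`. On each of them `S²` has trace zero, so `Tr(S^{2r})` is there an odd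
multiple of `r`; in particular `r ≤ s`, which forces `r = p`. Finally `Tr(S^{2r} T)² =
Tr(S^{2r}) Tr(S^{2r} T)` forces all these multiples to be equal.
-/

namespace HopfPQ

section RootsOfUnity

open Polynomial

variable {k : Type*} [Field k] [CharZero k]

lemma exists_isPrimitiveRoot [IsAlgClosed k] {m : ℕ} (hm : m ≠ 0) : ∃ ω : k, IsPrimitiveRoot ω m :=
  have : NeZero (m : k) := ⟨Nat.cast_ne_zero.2 hm⟩
  HasEnoughRootsOfUnity.exists_primitiveRoot k m

lemma aeval_primitiveRoot_transfer {K : Type*} [Field K] [CharZero K] {m : ℕ} (hm : 0 < m)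
    {ω : k} (hω : IsPrimitiveRoot ω m) {ζ : K} (hζ : IsPrimitiveRoot ζ m) {P : ℚ[X]}
    (h : aeval ω P = 0) : aeval ζ P = 0 := by
  rw [← minpoly.dvd_iff, ← cyclotomic_eq_minpoly_rat hζ hm, cyclotomic_eq_minpoly_rat hω hm]
  exact minpoly.dvd ℚ ω h

lemma eq_one_of_norm_eq_one_of_re_eq_one {z : ℂ} (hz : ‖z‖ = 1) (hre : z.re = 1) : z = 1 :=
  Complex.ext hre <| by simpa using Complex.abs_re_eq_norm.1 (by rw [hre, hz, abs_one])

-- After transfer to `ℂ` this is the equality case of the triangle inequality.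
lemma eq_zero_of_sum_natCast_mul_pow_eq_sum {m : ℕ} {ω : k} (hω : IsPrimitiveRoot ω m)
    {d : Fin m → ℕ} (h : ∑ l, (d l : k) * ω ^ (l : ℕ) = ∑ l, (d l : k)) {l : Fin m}
    (hl : (l : ℕ) ≠ 0) : d l = 0 := by
  have hm : m ≠ 0 := (Fin.pos l).ne'
  obtain ⟨ζ, hζ⟩ : ∃ ζ : ℂ, IsPrimitiveRoot ζ m := ⟨_, Complex.isPrimitiveRoot_exp m hm⟩
  have hnorm (j : ℕ) : ‖ζ ^ j‖ = 1 := by rw [norm_pow, hζ.norm'_eq_one hm, one_pow]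
  have hsum := aeval_primitiveRoot_transfer hm.bot_lt hω hζ
    (P := ∑ j : Fin m, (d j : ℚ[X]) * (1 - X ^ (j : ℕ))) (by simp [mul_sub, h])
  simp only [map_sum, map_mul, map_sub, map_pow, map_natCast, map_one, aeval_X] at hsum
  have hre : ∑ j : Fin m, d j * (1 - (ζ ^ (j : ℕ)).re) = 0 := by
    simpa using congrArg Complex.re hsum
  have hnonneg (j : Fin m) : 0 ≤ d j * (1 - (ζ ^ (j : ℕ)).re) :=
    mul_nonneg (Nat.cast_nonneg _) (sub_nonneg.2 ((Complex.re_le_norm _).trans_eq (hnorm j)))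
  have hterm := (Finset.sum_eq_zero_iff_of_nonneg fun j _ ↦ hnonneg j).1 hre l (Finset.mem_univ l)
  refine Nat.cast_eq_zero.1 ((mul_eq_zero.1 hterm).resolve_right fun hl1 ↦ ?_)
  exact hζ.pow_ne_one_of_pos_of_lt hl l.2
    (eq_one_of_norm_eq_one_of_re_eq_one (hnorm l) (sub_eq_zero.1 hl1).symm)

variable {r : ℕ} {ω : k} {c : Fin r → ℤ}

lemma eq_of_sum_intCast_mul_pow_eq_zero (hr : r.Prime) (hω : IsPrimitiveRoot ω r)
    (h : ∑ l, (c l : k) * ω ^ (l : ℕ) = 0) (i j : Fin r) : c i = c j := by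
  obtain ⟨n, rfl⟩ := Nat.exists_eq_succ_of_ne_zero hr.ne_zero
  have hdeg : (minpoly ℚ ω).natDegree = n := by
    rw [← cyclotomic_eq_minpoly_rat hω hr.pos, natDegree_cyclotomic, Nat.totient_prime hr,
      Nat.succ_sub_one]
  have hgeom : ∑ l : Fin (n + 1), ω ^ (l : ℕ) = 0 := by
    rw [Fin.sum_univ_eq_sum_range (ω ^ ·), hω.geom_sum_eq_zero hr.one_lt]
  have hrel : ∑ l : Fin n, ((c l.castSucc - c (Fin.last n) : ℤ) : ℚ) • ω ^ (l : ℕ) = 0 := by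
    rw [Fin.sum_univ_castSucc] at h hgeom
    simp only [Fin.val_castSucc, Fin.val_last] at h hgeom
    simp only [Algebra.smul_def, map_intCast]
    simp only [Int.cast_sub, sub_mul, Finset.sum_sub_distrib, ← Finset.mul_sum]
    linear_combination h - (c (Fin.last n) : k) * hgeom
  have hlast (l : Fin (n + 1)) : c l = c (Fin.last n) := by
    refine Fin.lastCases rfl (fun l ↦ ?_) l
    have := Fintype.linearIndependent_iff.1 (hdeg ▸ linearIndependent_pow (K := ℚ) ω) _ hrel l
    exact sub_eq_zero.1 (Int.cast_eq_zero.1 this)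
  rw [hlast i, hlast j]

lemma eq_zero_of_sum_intCast_mul_pow_eq_sum (hr : r.Prime) (hω : IsPrimitiveRoot ω r)
    (h : ∑ l, (c l : k) * ω ^ (l : ℕ) = ∑ l, (c l : k)) {i : Fin r} (hi : (i : ℕ) ≠ 0) :
    c i = 0 := by
  have : NeZero r := ⟨hr.ne_zero⟩
  let b : Fin r → ℤ := c - Pi.single 0 (∑ j, c j)
  have hb : ∑ l, (b l : k) * ω ^ (l : ℕ) = 0 := by
    simp [b, sub_mul, h, Pi.single_apply]
  have hconst (l : Fin r) : b l = b i := eq_of_sum_intCast_mul_pow_eq_zero hr hω hb l i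
  have hsum : ∑ l, b l = 0 := by simp [b]
  have hi0 : i ≠ 0 := fun h0 ↦ hi (by rw [h0, Fin.val_zero])
  have hbi : b i = 0 := by simpa [hconst, hr.ne_zero] using hsum
  simpa [b, hi0] using hbi

end RootsOfUnity

section FiniteOrder

open Module Module.End

variable {k : Type*} [Field k] {V : Type*} [AddCommGroup V] [Module k V] {T W : End k V}

/-- The endomorphism induced on the `μ`-eigenspace of `T` by an endomorphism `W` that commutes
with `T`. Its trace refines the trace of `W` when `T` is diagonalizable. -/
def eigenRestrict (h : Commute T W) (μ : k) : End k (T.eigenspace μ) :=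
  W.restrict (mapsTo_genEigenspace_of_comm h μ 1)

@[simp]
lemma coe_eigenRestrict_apply (h : Commute T W) (μ : k) (x : T.eigenspace μ) :
    (eigenRestrict h μ x : V) = W x :=
  rfl

lemma eigenRestrict_one (μ : k) : eigenRestrict (Commute.one_right T) μ = 1 :=
  rfl

lemma eigenRestrict_pow (h : Commute T W) (μ : k) (j : ℕ) :
    eigenRestrict h μ ^ j = eigenRestrict (h.pow_right j) μ :=
  Module.End.pow_restrict j _

lemma eigenRestrict_mul_pow (h : Commute T W) (μ : k) (j : ℕ) :
    eigenRestrict (h.mul_right ((Commute.refl T).pow_right j)) μ = μ ^ j • eigenRestrict h μ := by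
  ext x
  have hx : (T ^ j) x = μ ^ j • (x : V) := by
    induction j with
    | zero => simp
    | succ j ih => rw [pow_succ', mul_apply, ih, map_smul, mem_eigenspace_iff.1 x.2, smul_smul,
        pow_succ]
  simp [hx]

variable [IsAlgClosed k] [FiniteDimensional k V] {m : ℕ} [NeZero m] {ω : k}

lemma isInternal_eigenspace (hω : IsPrimitiveRoot ω m) (hT : T ^ m = 1) :
    DirectSum.IsInternal fun l : Fin m ↦ T.eigenspace (ω ^ (l : ℕ)) := by
  have hinj : Function.Injective fun l : Fin m ↦ ω ^ (l : ℕ) := fun i j hij ↦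
    Fin.ext (hω.pow_inj i.2 j.2 hij)
  refine DirectSum.isInternal_submodule_of_iSupIndep_of_iSup_eq_top
    (T.eigenspaces_iSupIndep.comp hinj) ?_
  have hss : T.IsSemisimple := isSemisimple_of_squarefree_aeval_eq_zero
    (Polynomial.X_pow_sub_one_separable_iff.2 (hω.neZero').out).squarefree (by simp [hT])
  rw [eq_top_iff, ← hss.iSup_eigenspace_eq_top]
  refine iSup_le fun μ x hx ↦ ?_
  obtain rfl | hx0 := eq_or_ne x 0
  · exact zero_mem _
  have hμ : μ ^ m = 1 := by
    have hpow := (HasEigenvector.pow_apply ⟨hx, hx0⟩ m).symm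
    rw [hT, one_apply] at hpow
    exact smul_left_injective k hx0 (hpow.trans (one_smul k x).symm)
  obtain ⟨i, hi, rfl⟩ := hω.eq_pow_of_pow_eq_one hμ
  exact le_iSup (fun l : Fin m ↦ T.eigenspace (ω ^ (l : ℕ))) ⟨i, hi⟩ hx

lemma trace_eq_sum_trace_eigenRestrict (hω : IsPrimitiveRoot ω m) (hT : T ^ m = 1)
    (h : Commute T W) :
    LinearMap.trace k V W =
      ∑ l : Fin m, LinearMap.trace k _ (eigenRestrict h (ω ^ (l : ℕ))) :=
  LinearMap.trace_eq_sum_trace_restrict (isInternal_eigenspace hω hT) _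

lemma trace_mul_pow_eq_sum (hω : IsPrimitiveRoot ω m) (hT : T ^ m = 1) (h : Commute T W) (j : ℕ) :
    LinearMap.trace k V (W * T ^ j) =
      ∑ l : Fin m, LinearMap.trace k _ (eigenRestrict h (ω ^ (l : ℕ))) * (ω ^ (l : ℕ)) ^ j := by
  rw [trace_eq_sum_trace_eigenRestrict hω hT (h.mul_right ((Commute.refl T).pow_right j))]
  exact Finset.sum_congr rfl fun l _ ↦ by
    rw [eigenRestrict_mul_pow h, map_smul, smul_eq_mul, mul_comm]

lemma trace_pow_eq_sum_finrank (hω : IsPrimitiveRoot ω m) (hT : T ^ m = 1) (j : ℕ) :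
    LinearMap.trace k V (T ^ j) =
      ∑ l : Fin m, (finrank k (T.eigenspace (ω ^ (l : ℕ))) : k) * (ω ^ (l : ℕ)) ^ j := by
  simpa [eigenRestrict_one] using trace_mul_pow_eq_sum hω hT (Commute.one_right T) j

lemma trace_eigenRestrict_eq_zero (hω : IsPrimitiveRoot ω m) (hT : T ^ m = 1) (h : Commute T W)
    (h0 : ∀ j, LinearMap.trace k V (W * T ^ j) = 0) (l : Fin m) :
    LinearMap.trace k _ (eigenRestrict h (ω ^ (l : ℕ))) = 0 :=
  congrFun (Matrix.eq_zero_of_forall_pow_sum_mul_pow_eq_zero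
    (fun i j hij ↦ Fin.ext (hω.pow_inj i.2 j.2 hij))
    fun j ↦ (trace_mul_pow_eq_sum hω hT h j).symm.trans (h0 j)) l

lemma trace_eigenRestrict_one_eq_zero [CharZero k] (hT : IsOfFinOrder T) (h : Commute T W)
    (h0 : ∀ j, LinearMap.trace k V (W * T ^ j) = 0) :
    LinearMap.trace k _ (eigenRestrict h 1) = 0 := by
  have : NeZero (orderOf T) := ⟨hT.orderOf_pos.ne'⟩
  obtain ⟨ω, hω⟩ := exists_isPrimitiveRoot (k := k) (NeZero.ne (orderOf T))
  have h := trace_eigenRestrict_eq_zero hω (pow_orderOf_eq_one T) h h0 0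
  rwa [Fin.val_zero, pow_zero] at h

variable [CharZero k]

lemma mul_finrank_eigenspace (hω : IsPrimitiveRoot ω m) (hT : T ^ m = 1)
    (h0 : ∀ j, 0 < j → j < m → LinearMap.trace k V (T ^ j) = 0) (l : Fin m) :
    m * finrank k (T.eigenspace (ω ^ (l : ℕ))) = finrank k V := by
  have hzero := Matrix.eq_zero_of_forall_pow_sum_mul_pow_eq_zero (R := k)
    (v := fun l : Fin m ↦ m * (finrank k (T.eigenspace (ω ^ (l : ℕ))) : k) - finrank k V)
    (fun i j hij ↦ Fin.ext (hω.pow_inj i.2 j.2 hij)) fun j ↦ ?_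
  · exact_mod_cast sub_eq_zero.1 (congrFun hzero l)
  simp only [sub_mul, mul_assoc, Finset.sum_sub_distrib, ← Finset.mul_sum,
    ← trace_pow_eq_sum_finrank hω hT]
  obtain hj | hj := Nat.eq_zero_or_pos j
  · simp [hj, mul_comm]
  · have hgeom : ∑ i : Fin m, (ω ^ (i : ℕ)) ^ (j : ℕ) = 0 := by
      simp only [← pow_mul, mul_comm _ (j : ℕ)]
      simp only [pow_mul, Fin.sum_univ_eq_sum_range (fun i ↦ (ω ^ (j : ℕ)) ^ i)]
      rw [geom_sum_eq (hω.pow_ne_one_of_pos_of_lt hj.ne' j.2), ← pow_mul, mul_comm, pow_mul,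
        hω.pow_eq_one, one_pow, sub_self, zero_div]
    rw [h0 j hj j.2, hgeom, mul_zero, mul_zero, sub_zero]

lemma exists_trace_eq_sub_of_sq_eq_one (hT : T ^ 2 = 1) :
    ∃ a b : ℕ, finrank k V = a + b ∧ LinearMap.trace k V T = a - b := by
  have hω := IsPrimitiveRoot.neg_one (R := k) 0 (by norm_num)
  have h0 := trace_pow_eq_sum_finrank hω hT 0
  have h1 := trace_pow_eq_sum_finrank hω hT 1
  rw [Fin.sum_univ_two] at h0 h1
  simp only [pow_zero, LinearMap.trace_one, pow_one, mul_one, Fin.val_zero, Fin.val_one] at h0 h1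
  refine ⟨_, _, mod_cast h0, by rw [h1]; ring⟩

lemma eq_one_of_trace_eq_finrank (hT : T ^ m = 1) (h : LinearMap.trace k V T = finrank k V) :
    T = 1 := by
  obtain ⟨ω, hω⟩ := exists_isPrimitiveRoot (k := k) (NeZero.ne m)
  have h0 := trace_pow_eq_sum_finrank hω hT 0
  have h1 := trace_pow_eq_sum_finrank hω hT 1
  simp only [pow_zero, LinearMap.trace_one, pow_one, mul_one] at h0 h1
  have hzero (l : Fin m) (hl : l ≠ 0) : finrank k (T.eigenspace (ω ^ (l : ℕ))) = 0 :=
    eq_zero_of_sum_natCast_mul_pow_eq_sum hω (h1.symm.trans (h.trans h0))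
      fun h ↦ hl (Fin.ext (h.trans (Fin.val_zero m).symm))
  rw [Finset.sum_eq_single_of_mem 0 (Finset.mem_univ _) fun l _ hl ↦ by rw [hzero l hl]; simp]
    at h0
  rw [Fin.val_zero, pow_zero, Nat.cast_inj] at h0
  have htop : T.eigenspace 1 = ⊤ := Submodule.eq_top_of_finrank_eq h0.symm
  ext x
  simpa using mem_eigenspace_iff.1 (htop ▸ Submodule.mem_top : x ∈ T.eigenspace 1)

lemma trace_pow_eq_zero_of_lt_orderOf
    (hsq : ∀ j, LinearMap.trace k V (T ^ j) ^ 2 = finrank k V * LinearMap.trace k V (T ^ j)) {j : ℕ}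
    (hj0 : 0 < j) (hj : j < orderOf T) : LinearMap.trace k V (T ^ j) = 0 := by
  have : NeZero (orderOf T) := ⟨(hj0.trans hj).ne'⟩
  by_contra h0
  refine pow_ne_one_of_lt_orderOf hj0.ne' hj
    (eq_one_of_trace_eq_finrank (m := orderOf T) ?_ (mul_right_cancel₀ h0 ?_))
  · rw [← pow_mul, mul_comm, pow_mul, pow_orderOf_eq_one, one_pow]
  · rw [← sq, hsq]

lemma orderOf_mul_finrank_eigenspace (hT : IsOfFinOrder T)
    (hsq : ∀ j, LinearMap.trace k V (T ^ j) ^ 2 = finrank k V * LinearMap.trace k V (T ^ j)) :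
    orderOf T * finrank k (T.eigenspace 1) = finrank k V := by
  have : NeZero (orderOf T) := ⟨hT.orderOf_pos.ne'⟩
  obtain ⟨ω, hω⟩ := exists_isPrimitiveRoot (k := k) (NeZero.ne (orderOf T))
  have h := mul_finrank_eigenspace hω (pow_orderOf_eq_one T)
    (fun j ↦ trace_pow_eq_zero_of_lt_orderOf hsq) 0
  rwa [Fin.val_zero, pow_zero] at h

end FiniteOrder

section Count

open Module LinearMap

variable {k : Type*} [Field k] [IsAlgClosed k] [CharZero k] {V : Type*} [AddCommGroup V]
  [Module k V] [FiniteDimensional k V] {r : ℕ} {σ : End k V}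

-- Split `σ` into its `r`-part `σ ^ (r + 1)` and its involution `σ ^ r`: as `Tr σ` vanishes, the
-- involution has the same trace on every eigenspace of the `r`-part.
lemma exists_trace_pow_eq_mul (hr : r.Prime) (hrodd : Odd r) (hσ : σ ^ (2 * r) = 1)
    (htr : trace k V σ = 0) : ∃ c : ℤ, trace k V (σ ^ r) = r * c := by
  have : NeZero r := ⟨hr.ne_zero⟩
  obtain ⟨ω, hω⟩ := exists_isPrimitiveRoot (k := k) hr.ne_zero
  obtain ⟨t, ht⟩ := hrodd.add_odd odd_one
  have hρ : (σ ^ (r + 1)) ^ r = 1 := by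
    rw [← pow_mul, ht, show (t + t) * r = 2 * r * t by ring, pow_mul, hσ, one_pow]
  have hστ : Commute (σ ^ (r + 1)) (σ ^ r) := (Commute.refl σ).pow_pow _ _
  have hσ_eq : σ ^ r * (σ ^ (r + 1)) ^ 1 = σ := by
    rw [pow_one, ← pow_add, ← add_assoc, ← two_mul, pow_succ, hσ, one_mul]
  have hint (l : Fin r) :
      ∃ c : ℤ, trace k _ (eigenRestrict hστ (ω ^ (l : ℕ))) = c := by
    have hsq : eigenRestrict hστ (ω ^ (l : ℕ)) ^ 2 = 1 := by
      ext x
      simp [eigenRestrict_pow, ← pow_mul, mul_comm r, hσ]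
    obtain ⟨a, b, -, hab⟩ := exists_trace_eq_sub_of_sq_eq_one hsq
    exact ⟨a - b, by simpa using hab⟩
  choose c hc using hint
  have hsum := trace_mul_pow_eq_sum hω hρ hστ 1
  rw [hσ_eq, htr] at hsum
  simp only [hc, pow_one] at hsum
  refine ⟨c 0, ?_⟩
  rw [trace_eq_sum_trace_eigenRestrict hω hρ hστ]
  simp [hc, eq_of_sum_intCast_mul_pow_eq_zero hr hω hsum.symm _ 0]

lemma exists_odd_trace_pow_eq_mul (hr : r.Prime) (hrodd : Odd r) (hσ : σ ^ (2 * r) = 1)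
    (htr : trace k V σ = 0) (hV : Odd (finrank k V)) :
    r ≤ finrank k V ∧ ∃ c : ℤ, Odd c ∧ trace k V (σ ^ r) = r * c := by
  obtain ⟨c, hc⟩ := exists_trace_pow_eq_mul hr hrodd hσ htr
  obtain ⟨a, b, hab, htrab⟩ := exists_trace_eq_sub_of_sq_eq_one (T := σ ^ r)
    (by rw [← pow_mul, mul_comm, hσ])
  have hrc : (r : ℤ) * c = a - b := by exact_mod_cast hc.symm.trans htrab
  have hodd : Odd ((r : ℤ) * c) := by
    rw [hrc, Int.odd_sub, ← Int.odd_add]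
    exact_mod_cast hab ▸ hV
  have hcodd : Odd c := (Int.odd_mul.1 hodd).2
  refine ⟨?_, c, hcodd, hc⟩
  have hc0 : 1 ≤ |c| := Int.one_le_abs fun h ↦ by simp [h] at hcodd
  have hle : |(r : ℤ) * c| ≤ a + b := by rw [hrc, abs_le]; constructor <;> linarith
  rw [abs_mul, Nat.abs_cast] at hle
  zify
  rw [hab]
  push_cast
  nlinarith

lemma le_and_exists_trace_pow_eq_sq_mul_odd {T : End k V} {s : ℕ} (hr : r.Prime) (hrodd : Odd r)
    (hs : Odd s) (hV : finrank k V = r * s) (hc : Commute T σ) (hσ : σ ^ (2 * r) = 1)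
    (hT : T ^ r = 1) (hTtr : ∀ j, 0 < j → j < r → trace k V (T ^ j) = 0)
    (hσT : ∀ j, trace k V (σ * T ^ j) = 0)
    (hsq : trace k V (σ ^ r * T) ^ 2 = trace k V (σ ^ r) * trace k V (σ ^ r * T)) :
    r ≤ s ∧ ∃ d : ℤ, Odd d ∧ trace k V (σ ^ r) = (r : k) ^ 2 * d := by
  have : NeZero r := ⟨hr.ne_zero⟩
  have hr0 : (r : k) ≠ 0 := Nat.cast_ne_zero.2 hr.ne_zero
  obtain ⟨ω, hω⟩ := exists_isPrimitiveRoot (k := k) hr.ne_zero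
  have hdim (l : Fin r) : finrank k (T.eigenspace (ω ^ (l : ℕ))) = s :=
    Nat.eq_of_mul_eq_mul_left hr.pos ((mul_finrank_eigenspace hω hT hTtr l).trans hV)
  have hblock (l : Fin r) : r ≤ s ∧ ∃ c : ℤ, Odd c ∧
      trace k _ (eigenRestrict (hc.pow_right r) (ω ^ (l : ℕ))) = r * c := by
    have h := exists_odd_trace_pow_eq_mul (σ := eigenRestrict hc (ω ^ (l : ℕ))) hr hrodd
      (by ext; simp [eigenRestrict_pow, hσ]) (trace_eigenRestrict_eq_zero hω hT hc hσT l)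
      (by rwa [hdim])
    rwa [hdim, eigenRestrict_pow] at h
  choose hrs c hcodd hctr using hblock
  have hτ : trace k V (σ ^ r) = r * ∑ l, (c l : k) := by
    rw [trace_eq_sum_trace_eigenRestrict hω hT (hc.pow_right r), Finset.mul_sum]
    exact Finset.sum_congr rfl fun l _ ↦ hctr l
  have hτT : trace k V (σ ^ r * T) = r * ∑ l, (c l : k) * ω ^ (l : ℕ) := by
    have h := trace_mul_pow_eq_sum hω hT (hc.pow_right r) 1
    simpa only [pow_one, hctr, mul_assoc, ← Finset.mul_sum] using h
  refine ⟨hrs 0, c 0, hcodd 0, ?_⟩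
  -- The `c l` are odd, so the second alternative, which kills all but one of them, cannot occur.
  obtain h0 | h1 : ∑ l, (c l : k) * ω ^ (l : ℕ) = 0 ∨
      ∑ l, (c l : k) * ω ^ (l : ℕ) = ∑ l, (c l : k) := by
    rw [hτ, hτT, mul_pow, mul_mul_mul_comm, ← sq, mul_right_inj' (pow_ne_zero 2 hr0), sq,
      ← sub_eq_zero, ← sub_mul, mul_eq_zero, sub_eq_zero] at hsq
    exact hsq.symm
  · have hconst (l : Fin r) : c l = c 0 := eq_of_sum_intCast_mul_pow_eq_zero hr hω h0 l 0
    simp [hτ, hconst, sq, mul_assoc]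
  · have hc1 := hcodd ⟨1, hr.one_lt⟩
    rw [eq_zero_of_sum_intCast_mul_pow_eq_sum hr hω h1 one_ne_zero] at hc1
    exact absurd hc1 (by decide)

end Count

section Hit

open Coalgebra LinearMap WithConv

variable {k : Type*} [Field k] {C : Type*} [AddCommGroup C] [Module k C] [Coalgebra k C]

/-- The left hit action `f ⇀ x = x₁ f(x₂)` of the dual `C*` of a coalgebra on `C`. -/
noncomputable def leftHit : Module.Dual k C →ₗ[k] Module.End k C where
  toFun f := (TensorProduct.rid k C).toLinearMap ∘ₗ lTensor C f ∘ₗ comul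
  map_add' f g := by
    ext x
    simp [lTensor_add]
  map_smul' c f := by
    ext x
    simp [lTensor_smul]

/-- The right hit action `x ↼ f = f(x₁) x₂` of the dual `C*` of a coalgebra on `C`, with the
functional written first. -/
noncomputable def rightHit : Module.Dual k C →ₗ[k] Module.End k C where
  toFun f := (TensorProduct.lid k C).toLinearMap ∘ₗ rTensor C f ∘ₗ comul
  map_add' f g := by
    ext x
    simp [rTensor_add]
  map_smul' c f := by
    ext x
    simp [rTensor_smul]

lemma leftHit_eq_sum {ι : Type*} {x : C} (X : Coalgebra.Repr k x ι) (f : Module.Dual k C) :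
    leftHit f x = ∑ i ∈ X.index, f (X.right i) • X.left i := by
  simp [leftHit, ← X.eq]

lemma rightHit_eq_sum {ι : Type*} {x : C} (X : Coalgebra.Repr k x ι) (f : Module.Dual k C) :
    rightHit f x = ∑ i ∈ X.index, f (X.left i) • X.right i := by
  simp [rightHit, ← X.eq]

lemma conv_eq_sum {ι : Type*} {x : C} (X : Coalgebra.Repr k x ι) (f g : Module.Dual k C) :
    conv f g x = ∑ i ∈ X.index, f (X.left i) * g (X.right i) :=
  X.convMul_apply (toConv f) (toConv g)

lemma conv_assoc (f g h : Module.Dual k C) : conv (conv f g) h = conv f (conv g h) :=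
  congrArg ofConv (mul_assoc (toConv f) (toConv g) (toConv h))

lemma conv_counit (f : Module.Dual k C) : conv f counit = f :=
  congrArg ofConv (mul_one (toConv f))

lemma counit_conv (f : Module.Dual k C) : conv counit f = f :=
  congrArg ofConv (one_mul (toConv f))

lemma apply_leftHit (f g : Module.Dual k C) (x : C) : g (leftHit f x) = conv g f x := by
  simp only [leftHit_eq_sum (ℛ k x), conv_eq_sum (ℛ k x), map_sum, map_smul, smul_eq_mul, mul_comm]

lemma apply_rightHit (f g : Module.Dual k C) (x : C) : g (rightHit f x) = conv f g x := by
  simp only [rightHit_eq_sum (ℛ k x), conv_eq_sum (ℛ k x), map_sum, map_smul, smul_eq_mul]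

lemma eq_of_forall_dual_apply_eq {V : Type*} [AddCommGroup V] [Module k V] {x y : V}
    (h : ∀ f : Module.Dual k V, f x = f y) : x = y :=
  sub_eq_zero.1 ((Module.forall_dual_apply_eq_zero_iff k (x - y)).1 fun f ↦ by
    rw [map_sub, h, sub_self])

lemma leftHit_conv (f g : Module.Dual k C) : leftHit (conv f g) = leftHit f * leftHit g := by
  ext x
  refine eq_of_forall_dual_apply_eq (k := k) fun h ↦ ?_
  rw [Module.End.mul_apply, apply_leftHit, apply_leftHit, apply_leftHit, conv_assoc]

lemma rightHit_conv (f g : Module.Dual k C) : rightHit (conv f g) = rightHit g * rightHit f := by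
  ext x
  refine eq_of_forall_dual_apply_eq (k := k) fun h ↦ ?_
  rw [Module.End.mul_apply, apply_rightHit, apply_rightHit, apply_rightHit, conv_assoc]

lemma leftHit_counit : leftHit (counit (R := k) (A := C)) = 1 := by
  ext x
  refine eq_of_forall_dual_apply_eq (k := k) fun f ↦ ?_
  rw [apply_leftHit, conv_counit, Module.End.one_apply]

lemma rightHit_counit : rightHit (counit (R := k) (A := C)) = 1 := by
  ext x
  refine eq_of_forall_dual_apply_eq (k := k) fun f ↦ ?_
  rw [apply_rightHit, counit_conv, Module.End.one_apply]

lemma counit_leftHit (f : Module.Dual k C) (x : C) : counit (R := k) (leftHit f x) = f x := by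
  rw [apply_leftHit, counit_conv]

lemma counit_rightHit (f : Module.Dual k C) (x : C) : counit (R := k) (rightHit f x) = f x := by
  rw [apply_rightHit, conv_counit]

lemma leftHit_pow (f : Module.Dual k C) (n : ℕ) :
    leftHit f ^ n = leftHit (toConv f ^ n).ofConv := by
  induction n with
  | zero => exact leftHit_counit.symm
  | succ n ih =>
    rw [pow_succ, ih, pow_succ]
    exact (leftHit_conv _ f).symm

lemma rightHit_pow (f : Module.Dual k C) (n : ℕ) :
    rightHit f ^ n = rightHit (toConv f ^ n).ofConv := by
  induction n with
  | zero => exact rightHit_counit.symm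
  | succ n ih =>
    rw [pow_succ', ih, pow_succ]
    exact (rightHit_conv _ f).symm

lemma leftHit_eq_one_iff {f : Module.Dual k C} : leftHit f = 1 ↔ f = counit := by
  refine ⟨fun h ↦ LinearMap.ext fun x ↦ ?_, fun h ↦ h ▸ leftHit_counit⟩
  rw [← counit_leftHit, h, Module.End.one_apply]

lemma rightHit_eq_one_iff {f : Module.Dual k C} : rightHit f = 1 ↔ f = counit := by
  refine ⟨fun h ↦ LinearMap.ext fun x ↦ ?_, fun h ↦ h ▸ rightHit_counit⟩
  rw [← counit_rightHit, h, Module.End.one_apply]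

lemma orderOf_leftHit (f : Module.Dual k C) : orderOf (leftHit f) = orderOf (toConv f) :=
  orderOf_eq_orderOf_iff.2 fun n ↦ by
    rw [leftHit_pow, leftHit_eq_one_iff]
    exact ofConv_injective.eq_iff (b := 1)

lemma orderOf_rightHit (f : Module.Dual k C) : orderOf (rightHit f) = orderOf (toConv f) :=
  orderOf_eq_orderOf_iff.2 fun n ↦ by
    rw [rightHit_pow, rightHit_eq_one_iff]
    exact ofConv_injective.eq_iff (b := 1)

lemma commute_rightHit (φ : C →ₗc[k] C) {f : Module.Dual k C} (hf : f ∘ₗ φ.toLinearMap = f) :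
    Commute φ.toLinearMap (rightHit f) := by
  ext x
  refine eq_of_forall_dual_apply_eq (k := k) fun g ↦ ?_
  have h := congrArg (fun F ↦ F x) (convMul_comp_coalgHom_distrib (toConv f) (toConv g) φ)
  rw [ofConv_toConv, hf] at h
  rw [Module.End.mul_apply, Module.End.mul_apply, apply_rightHit]
  exact (apply_rightHit f (g ∘ₗ φ.toLinearMap) x).trans h.symm

lemma commute_leftHit (φ : C →ₗc[k] C) {f : Module.Dual k C} (hf : f ∘ₗ φ.toLinearMap = f) :
    Commute φ.toLinearMap (leftHit f) := by
  ext x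
  refine eq_of_forall_dual_apply_eq (k := k) fun g ↦ ?_
  have h := congrArg (fun F ↦ F x) (convMul_comp_coalgHom_distrib (toConv g) (toConv f) φ)
  rw [ofConv_toConv, ofConv_toConv, hf] at h
  rw [Module.End.mul_apply, Module.End.mul_apply, apply_leftHit]
  exact (apply_leftHit f (g ∘ₗ φ.toLinearMap) x).trans h.symm

lemma leftHit_of_isGroupLikeElem {g : C} (hg : IsGroupLikeElem k g) (f : Module.Dual k C) :
    leftHit f g = f g • g := by
  simp [leftHit, hg.comul_eq_tmul_self]

lemma rightHit_of_isGroupLikeElem {g : C} (hg : IsGroupLikeElem k g) (f : Module.Dual k C) :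
    rightHit f g = f g • g := by
  simp [rightHit, hg.comul_eq_tmul_self]

lemma rightHit_pow_apply_of_isGroupLikeElem {g : C} (hg : IsGroupLikeElem k g)
    (f : Module.Dual k C) (n : ℕ) : (rightHit f ^ n) g = f g ^ n • g := by
  induction n with
  | zero => simp
  | succ n ih =>
    rw [pow_succ', Module.End.mul_apply, ih, map_smul, rightHit_of_isGroupLikeElem hg, smul_smul,
      pow_succ]

variable {A : Type*} [Ring A] [Algebra k A]

lemma toConv_comp_leftHit (g : C →ₗ[k] A) (f : Module.Dual k C) :
    toConv (g ∘ₗ leftHit f) = toConv g * toConv (Algebra.linearMap k A ∘ₗ f) := by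
  ext x
  simp [leftHit_eq_sum (ℛ k x), (ℛ k x).convMul_apply, Algebra.algebraMap_eq_smul_one]

lemma toConv_comp_rightHit (g : C →ₗ[k] A) (f : Module.Dual k C) :
    toConv (g ∘ₗ rightHit f) = toConv (Algebra.linearMap k A ∘ₗ f) * toConv g := by
  ext x
  simp [rightHit_eq_sum (ℛ k x), (ℛ k x).convMul_apply, Algebra.algebraMap_eq_smul_one]

lemma toConv_mulLeft_comp_mul (a : A) (f g : C →ₗ[k] A) :
    toConv (mulLeft k a ∘ₗ f) * toConv g =
      toConv (mulLeft k a ∘ₗ (toConv f * toConv g).ofConv) := by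
  ext x
  simp [(ℛ k x).convMul_apply, mul_assoc]

lemma toConv_mul_mulRight_comp (a : A) (f g : C →ₗ[k] A) :
    toConv f * toConv (mulRight k a ∘ₗ g) =
      toConv (mulRight k a ∘ₗ (toConv f * toConv g).ofConv) := by
  ext x
  simp [(ℛ k x).convMul_apply, mul_assoc]

end Hit

section Bialgebra

open Coalgebra LinearMap WithConv Algebra.TensorProduct

variable {k : Type*} [Field k] {B : Type*} [Ring B] [Bialgebra k B]

lemma toConv_comul : toConv (comul (R := k) (A := B)) =
    toConv (includeLeft : B →ₐ[k] B ⊗[k] B).toLinearMap *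
      toConv (includeRight : B →ₐ[k] B ⊗[k] B).toLinearMap := by
  ext x
  simp [(ℛ k x).convMul_apply, ← (ℛ k x).eq]

lemma comul_comp_rightHit (f : Module.Dual k B) : comul (R := k) (A := B) ∘ₗ rightHit f =
    TensorProduct.map (rightHit f) LinearMap.id ∘ₗ comul := by
  have hmap (F : Module.End k B) : toConv (TensorProduct.map F LinearMap.id ∘ₗ comul) =
      toConv ((includeLeft : B →ₐ[k] B ⊗[k] B).toLinearMap ∘ₗ F) *
        toConv (includeRight : B →ₐ[k] B ⊗[k] B).toLinearMap := by
    ext x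
    simp [(ℛ k x).convMul_apply, ← (ℛ k x).eq]
  refine toConv_injective ?_
  rw [hmap, toConv_comp_rightHit, toConv_comp_rightHit, toConv_comul, mul_assoc]

lemma comul_comp_mulRight {g : B} (hg : IsGroupLikeElem k g) : comul ∘ₗ mulRight k g =
    TensorProduct.map (mulRight k g) (mulRight k g) ∘ₗ comul := by
  ext x
  simp [hg.comul_eq_tmul_self, ← (ℛ k x).eq, Finset.sum_mul]

lemma leftHit_one (f : Module.Dual k B) : leftHit f (1 : B) = f 1 • (1 : B) := by
  simp [leftHit, Algebra.TensorProduct.one_def]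

lemma rightHit_mul {ι : Type*} {y : B} (Y : Coalgebra.Repr k y ι) (f : Module.Dual k B) (x : B) :
    rightHit f (x * y) = ∑ j ∈ Y.index, rightHit (f ∘ₗ mulRight k (Y.left j)) x * Y.right j := by
  simp only [rightHit_eq_sum ((ℛ k x).mul Y), rightHit_eq_sum (ℛ k x), Coalgebra.Repr.mul_index,
    Finset.sum_product, Finset.sum_mul]
  rw [Finset.sum_comm]
  simp

lemma leftHit_map_mul (α : B →ₐ[k] k) (x y : B) :
    leftHit α.toLinearMap (x * y) = leftHit α.toLinearMap x * leftHit α.toLinearMap y :=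
  map_mul (((Algebra.TensorProduct.rid k k B).toAlgHom.comp
    (Algebra.TensorProduct.map (AlgHom.id k B) α)).comp (Bialgebra.comulAlgHom k B)) x y

lemma rightHit_map_mul (α : B →ₐ[k] k) (x y : B) :
    rightHit α.toLinearMap (x * y) = rightHit α.toLinearMap x * rightHit α.toLinearMap y :=
  map_mul (((Algebra.TensorProduct.lid k B).toAlgHom.comp
    (Algebra.TensorProduct.map α (AlgHom.id k B))).comp (Bialgebra.comulAlgHom k B)) x y

lemma exists_algHom_rightHit_pow (α : B →ₐ[k] k) (n : ℕ) :
    ∃ β : B →ₐ[k] k, rightHit α.toLinearMap ^ n = rightHit β.toLinearMap := by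
  induction n with
  | zero => exact ⟨Bialgebra.counitAlgHom k B, rightHit_counit.symm⟩
  | succ n ih =>
    obtain ⟨β, hβ⟩ := ih
    exact ⟨(toConv α * toConv β).ofConv, by rw [pow_succ, hβ]; exact (rightHit_conv _ _).symm⟩

variable (k B) in
/-- The inclusion of the bialgebra endomorphisms of `B` into its linear endomorphisms. -/
def bialgEndToEnd : (B →ₐc[k] B) →* Module.End k B where
  toFun φ := φ.toCoalgHom.toLinearMap
  map_one' := rfl
  map_mul' _ _ := rfl

lemma comul_comp_bialgEndToEnd (φ : B →ₐc[k] B) : comul ∘ₗ bialgEndToEnd k B φ =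
    TensorProduct.map (bialgEndToEnd k B φ) (bialgEndToEnd k B φ) ∘ₗ comul :=
  (CoalgHomClass.map_comp_comul φ).symm

/-- The linear map `x ⊗ y ↦ (x ⊗ 1) F(y)` on `B ⊗ B`; for `F = Δ` it is the Galois map of `B`, which
is bijective when `B` is a Hopf algebra. -/
noncomputable def shear (F : B →ₗ[k] B ⊗[k] B) : Module.End k (B ⊗[k] B) :=
  mul' k (B ⊗[k] B) ∘ₗ TensorProduct.map (includeLeft : B →ₐ[k] B ⊗[k] B).toLinearMap F

lemma shear_tmul (F : B →ₗ[k] B ⊗[k] B) (x y : B) : shear F (x ⊗ₜ y) = (x ⊗ₜ 1) * F y := by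
  simp [shear]

lemma shear_tmul_one_mul (F : B →ₗ[k] B ⊗[k] B) (x : B) (t : B ⊗[k] B) :
    shear F ((x ⊗ₜ 1) * t) = (x ⊗ₜ 1) * shear F t := by
  induction t with
  | zero => simp
  | add a b ha hb => rw [mul_add, map_add, ha, hb, map_add, mul_add]
  | tmul a b => simp [shear_tmul, ← mul_assoc]

end Bialgebra

section Antipode

open Coalgebra LinearMap HopfAlgebra WithConv Algebra.TensorProduct

variable {k : Type*} [Field k] {H : Type*} [Ring H] [HopfAlgebra k H]
  {A : Type*} [Ring A] [Algebra k A]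

lemma toConv_comp_antipode_mul (j : H →ₐ[k] A) :
    toConv (j.toLinearMap ∘ₗ antipode k) * toConv j.toLinearMap = 1 := by
  ext x
  simp [(ℛ k x).convMul_apply, ← map_mul, ← map_sum,
    sum_antipode_mul_eq_algebraMap_counit (ℛ k x)]

lemma toConv_comul_comp_antipode : toConv (comul ∘ₗ antipode k (A := H)) =
    toConv ((includeRight : H →ₐ[k] H ⊗[k] H).toLinearMap ∘ₗ antipode k) *
      toConv ((includeLeft : H →ₐ[k] H ⊗[k] H).toLinearMap ∘ₗ antipode k) := by
  refine (left_inv_eq_right_inv ?_ comul_right_inv).symm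
  rw [toConv_comul, mul_assoc, ← mul_assoc _ (toConv includeLeft.toLinearMap),
    toConv_comp_antipode_mul, one_mul, toConv_comp_antipode_mul]

lemma comul_antipode {ι : Type*} {x : H} (X : Coalgebra.Repr k x ι) :
    comul (antipode k x) = ∑ i ∈ X.index, antipode k (X.right i) ⊗ₜ[k] antipode k (X.left i) := by
  have h := congrArg (fun F ↦ F.ofConv x) (toConv_comul_comp_antipode (k := k) (H := H))
  simpa [X.convMul_apply] using h

lemma conv_comp_antipode (f g : Module.Dual k H) :
    conv f g ∘ₗ antipode k = conv (g ∘ₗ antipode k) (f ∘ₗ antipode k) := by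
  ext x
  rw [conv_eq_sum (ℛ k x), comp_apply, conv]
  simp [comul_antipode (ℛ k x), mul_comm]

end Antipode

section Integral

open Coalgebra LinearMap HopfAlgebra WithConv Algebra.TensorProduct

variable {k : Type*} [Field k] {H : Type*} [Ring H] [HopfAlgebra k H]

lemma sum_antipode_rightHit_mul {ι : Type*} {a : H} (X : Coalgebra.Repr k a ι)
    (f : Module.Dual k H) :
    ∑ i ∈ X.index, antipode k (rightHit f (X.left i)) * X.right i = f a • (1 : H) := by
  have h := congrArg (fun F ↦ F.ofConv a)
    (congrArg (· * toConv LinearMap.id) (toConv_comp_rightHit (antipode k (A := H)) f))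
  rw [mul_assoc, antipode_mul_id, mul_one] at h
  simpa [X.convMul_apply, Algebra.algebraMap_eq_smul_one] using h

lemma antipode_antipode_rightHit_comp_mulLeft {ι : Type*} {a : H} (X : Coalgebra.Repr k a ι)
    (f : Module.Dual k H) (y : H) :
    antipode k (antipode k (rightHit (f ∘ₗ mulLeft k a) y)) =
      ∑ i ∈ X.index, antipode k (X.right i) *
        antipode k (antipode k (rightHit f (X.left i * y))) := by
  have hterm : ∀ i ∈ X.index,
      antipode k (X.right i) * antipode k (antipode k (rightHit f (X.left i * y))) =
        ∑ j ∈ (ℛ k y).index, antipode k (antipode k ((ℛ k y).right j) *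
          (antipode k (rightHit (f ∘ₗ mulRight k ((ℛ k y).left j)) (X.left i)) * X.right i)) := by
    intro i _
    rw [rightHit_mul (ℛ k y), ← antipode_mul_antidistrib, map_sum, Finset.sum_mul, map_sum]
    simp only [antipode_mul_antidistrib, mul_assoc]
  rw [Finset.sum_congr rfl hterm, Finset.sum_comm, rightHit_eq_sum (ℛ k y), map_sum, map_sum]
  refine Finset.sum_congr rfl fun j _ ↦ ?_
  rw [← map_sum, ← Finset.mul_sum, sum_antipode_rightHit_mul X]
  simp

-- The right-hand side has trace `1`, so one of the trace integrals below does not vanish.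
lemma sum_mulRight_antipode_mul_rightHit_coord {ι : Type*} [Fintype ι] (b : Module.Basis ι k H) :
    ∑ i, mulRight k (antipode k (b i)) * (antipode k * antipode k) * rightHit (b.coord i) =
      (counit (R := k) (A := H)).smulRight (1 : H) := by
  ext y
  have hsum : ∀ j ∈ (ℛ k y).index, ∑ i, b.coord i ((ℛ k y).left j) •
      (antipode k (antipode k ((ℛ k y).right j)) * antipode k (b i)) =
        antipode k ((ℛ k y).left j * antipode k ((ℛ k y).right j)) := by
    intro j _
    conv_rhs => rw [antipode_mul_antidistrib, ← b.sum_repr ((ℛ k y).left j), map_sum,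
      Finset.mul_sum]
    simp
  simp only [LinearMap.sum_apply, Module.End.mul_apply, rightHit_eq_sum (ℛ k y), map_sum, map_smul,
    mulRight_apply, smulRight_apply]
  rw [Finset.sum_comm, Finset.sum_congr rfl hsum, ← map_sum, sum_mul_antipode_eq_smul, map_smul,
    antipode_one]

section TraceIntegral

variable [FiniteDimensional k H]

/-- The element `Λ` of `H` with `f(Λ) = Tr(y ↦ f(y₁) S²(y₂) x)` for all functionals `f`. -/
noncomputable def traceIntegral (k : Type*) [Field k] {H : Type*} [Ring H] [HopfAlgebra k H]
    [FiniteDimensional k H] (x : H) : H :=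
  (Module.evalEquiv k H).symm
    (trace k H ∘ₗ mulLeft k (mulRight k x * (antipode k * antipode k)) ∘ₗ rightHit)

lemma apply_traceIntegral (x : H) (f : Module.Dual k H) : f (traceIntegral k x) =
    trace k H (mulRight k x * (antipode k * antipode k) * rightHit f) :=
  congrArg (fun F ↦ F f) ((Module.evalEquiv k H).apply_symm_apply _)

lemma isLeftIntegral_traceIntegral (x : H) : IsLeftIntegral k (traceIntegral k x) := by
  intro a
  refine eq_of_forall_dual_apply_eq (k := k) fun f ↦ ?_
  let P (f : Module.Dual k H) : Module.End k H :=
    mulRight k x * (antipode k * antipode k) * rightHit f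
  have hP : P (f ∘ₗ mulLeft k a) = ∑ i ∈ (ℛ k a).index,
      mulLeft k (antipode k ((ℛ k a).right i)) * P f * mulLeft k ((ℛ k a).left i) := by
    ext y
    simp only [P, Module.End.mul_apply, antipode_antipode_rightHit_comp_mulLeft (ℛ k a),
      LinearMap.sum_apply, mulRight_apply, mulLeft_apply, Finset.sum_mul, mul_assoc]
  calc f (a * traceIntegral k x) = trace k H (P (f ∘ₗ mulLeft k a)) :=
        apply_traceIntegral x (f ∘ₗ mulLeft k a)
    _ = ∑ i ∈ (ℛ k a).index,
          trace k H (mulLeft k ((ℛ k a).left i * antipode k ((ℛ k a).right i)) * P f) := by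
        rw [hP, map_sum]
        refine Finset.sum_congr rfl fun i _ ↦ ?_
        rw [trace_mul_comm, ← mul_assoc, mulLeft_mul, ← Module.End.mul_eq_comp]
    _ = trace k H (counit (R := k) a • P f) := by
        rw [← map_sum, ← Finset.sum_mul]
        congr 1
        ext y
        simp only [Module.End.mul_apply, LinearMap.sum_apply, mulLeft_apply, ← Finset.sum_mul,
          sum_mul_antipode_eq_smul (ℛ k a), LinearMap.smul_apply, smul_mul_assoc, one_mul]
    _ = f (counit (R := k) a • traceIntegral k x) := by
        rw [map_smul, map_smul, apply_traceIntegral]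

variable (k H) in
lemma exists_isLeftIntegral_ne_zero : ∃ L : H, L ≠ 0 ∧ IsLeftIntegral k L := by
  by_contra! hne
  have hzero (x : H) : traceIntegral k x = 0 := by
    by_contra hx
    exact hne _ hx (isLeftIntegral_traceIntegral x)
  have htrace := congrArg (trace k H)
    (sum_mulRight_antipode_mul_rightHit_coord (Module.finBasis k H))
  rw [map_sum, trace_smulRight] at htrace
  simp [← apply_traceIntegral, hzero] at htrace

end TraceIntegral

/-- The element `L₁ ⊗ S(L₂)`, which is a Casimir element when `L` is a left integral. -/
noncomputable def casimirElement (k : Type*) [Field k] {H : Type*} [Ring H] [HopfAlgebra k H] :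
    H →ₗ[k] H ⊗[k] H :=
  lTensor H (antipode k) ∘ₗ comul

lemma casimirElement_eq_sum {ι : Type*} {L : H} (X : Coalgebra.Repr k L ι) :
    casimirElement k L = ∑ i ∈ X.index, X.left i ⊗ₜ[k] antipode k (X.right i) := by
  simp [casimirElement, ← X.eq]

lemma sum_tmul_one_mul_casimirElement_mul {ι : Type*} {a : H} (X : Coalgebra.Repr k a ι) (L : H) :
    ∑ i ∈ X.index, X.left i ⊗ₜ[k] 1 * casimirElement k L * 1 ⊗ₜ[k] antipode k (X.right i) =
      casimirElement k (a * L) := by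
  simp only [casimirElement_eq_sum (X.mul (ℛ k L)), casimirElement_eq_sum (ℛ k L),
    Coalgebra.Repr.mul_index, Finset.sum_product, Finset.mul_sum, Finset.sum_mul,
    Coalgebra.Repr.mul_left, Coalgebra.Repr.mul_right, antipode_mul_antidistrib,
    tmul_mul_tmul, one_mul, mul_one]

lemma tmul_one_mul_casimirElement {L : H} (hL : IsLeftIntegral k L) (a : H) :
    a ⊗ₜ[k] 1 * casimirElement k L = casimirElement k L * 1 ⊗ₜ[k] a := by
  set c := casimirElement k L with hc
  let j₁ : H →ₐ[k] H ⊗[k] H := includeLeft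
  let j₂ : H →ₐ[k] H ⊗[k] H := includeRight
  have hright : toConv (mulRight k c ∘ₗ j₁.toLinearMap) * toConv (j₂.toLinearMap ∘ₗ antipode k) =
      toConv (mulLeft k c ∘ₗ Algebra.linearMap k (H ⊗[k] H) ∘ₗ counit) := by
    ext a
    have h := sum_tmul_one_mul_casimirElement_mul (ℛ k a) L
    rw [hL a, map_smul, ← hc] at h
    simpa [(ℛ k a).convMul_apply, j₁, j₂, Algebra.algebraMap_eq_smul_one] using h
  have hcomp :
      toConv (mulRight k c ∘ₗ j₁.toLinearMap) = toConv (mulLeft k c ∘ₗ j₂.toLinearMap) := by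
    rw [← mul_one (toConv (mulRight k c ∘ₗ _)), ← toConv_comp_antipode_mul j₂, ← mul_assoc, hright,
      toConv_mulLeft_comp_mul, ← LinearMap.convOne_def, one_mul]
  exact congrArg (fun F ↦ F.ofConv a) hcomp

section Maschke

variable {V W : Type*} [AddCommGroup V] [Module k V] [Module H V] [IsScalarTower k H V]
  [AddCommGroup W] [Module k W] [Module H W] [IsScalarTower k H W]

/-- The `H`-linear map `v ↦ L₁ f(S(L₂) v)` obtained by averaging a linear map `f` over a left
integral `L`. -/
noncomputable def averageHom {L : H} (hL : IsLeftIntegral k L) (f : V →ₗ[k] W) : V →ₗ[H] W where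
  toFun v := ∑ i ∈ (ℛ k L).index, (ℛ k L).left i • f (antipode k ((ℛ k L).right i) • v)
  map_add' v w := by
    simp only [smul_add, map_add, Finset.sum_add_distrib]
  map_smul' a v := by
    let φ : H ⊗[k] H →ₗ[k] W := TensorProduct.lift ((Algebra.lsmul k k W).toLinearMap.compl₂
      (f ∘ₗ (LinearMap.toSpanSingleton H V v).restrictScalars k))
    have h := congrArg φ (tmul_one_mul_casimirElement hL a)
    simpa [φ, casimirElement_eq_sum (ℛ k L), Finset.mul_sum, Finset.sum_mul, Finset.smul_sum,
      mul_smul] using h.symm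

lemma averageHom_apply {L : H} (hL : IsLeftIntegral k L) {f : V →ₗ[k] W} {v : V} {w : W}
    (hf : ∀ a : H, f (a • v) = a • w) : averageHom hL f v = counit (R := k) L • w := by
  simp only [averageHom, LinearMap.coe_mk, AddHom.coe_mk, hf, ← mul_smul, ← Finset.sum_smul,
    sum_mul_antipode_eq_smul, smul_assoc, one_smul]

theorem isSemisimpleRing_of_isLeftIntegral {L : H} (hL : IsLeftIntegral k L)
    (hε : counit (R := k) L ≠ 0) : IsSemisimpleRing H := by
  refine (isSemisimpleModule_iff H H).2 ⟨fun I ↦ ?_⟩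
  obtain ⟨f, hf⟩ := LinearMap.exists_leftInverse_of_injective
    (I.subtype.restrictScalars k) (LinearMap.ker_eq_bot.2 I.subtype_injective)
  have hfI (w : I) (a : H) : f (a • (w : H)) = a • w := congrArg (fun F ↦ F (a • w)) hf
  refine ⟨_, LinearMap.isCompl_of_proj (f := (counit (R := k) L)⁻¹ • averageHom (W := I) hL f)
    fun w ↦ ?_⟩
  rw [LinearMap.smul_apply, averageHom_apply hL (hfI w), inv_smul_smul₀ hε]

end Maschke

end Integral

section Frobenius

open Coalgebra LinearMap HopfAlgebra

variable {k : Type*} [Field k] {H : Type*} [Ring H] [HopfAlgebra k H]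

/-- The map `f ↦ L₁ f(S(L₂))` from `H*` to `H`, which is the Frobenius isomorphism when `L` is a
nonzero left integral. -/
noncomputable def frobeniusMap (L : H) : Module.Dual k H →ₗ[k] H :=
  leftHit.flip L ∘ₗ (antipode k).dualMap

lemma frobeniusMap_apply (L : H) (f : Module.Dual k H) :
    frobeniusMap L f = leftHit (f ∘ₗ antipode k) L :=
  rfl

lemma mul_frobeniusMap {L : H} (hL : IsLeftIntegral k L) (f : Module.Dual k H) (a : H) :
    a * frobeniusMap L f = frobeniusMap L (f ∘ₗ mulRight k a) := by
  have h := congrArg (fun t ↦ TensorProduct.rid k H (lTensor H f t))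
    (tmul_one_mul_casimirElement hL a)
  simpa [frobeniusMap_apply, leftHit_eq_sum (ℛ k L), casimirElement_eq_sum (ℛ k L),
    Finset.mul_sum, Finset.sum_mul] using h

lemma frobeniusMap_conv (L : H) (f g : Module.Dual k H) :
    frobeniusMap L (conv f g) = leftHit (g ∘ₗ antipode k) (frobeniusMap L f) := by
  rw [frobeniusMap_apply, frobeniusMap_apply, conv_comp_antipode, leftHit_conv,
    Module.End.mul_apply]

lemma sum_conv_coord_comp_antipode {ι : Type*} [Fintype ι] (b : Module.Basis ι k H)
    (f : Module.Dual k H) :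
    ∑ i, conv (b.coord i) (f ∘ₗ mulRight k (antipode k (antipode k (b i))) ∘ₗ antipode k) =
      f 1 • counit := by
  ext x
  have hsum : ∀ j ∈ (ℛ k x).index, ∑ i, b.coord i ((ℛ k x).left j) *
      f (antipode k ((ℛ k x).right j) * antipode k (antipode k (b i))) =
        f (antipode k (antipode k ((ℛ k x).left j) * (ℛ k x).right j)) := by
    intro j _
    conv_rhs => rw [antipode_mul_antidistrib, ← b.sum_repr ((ℛ k x).left j), map_sum, map_sum,
      Finset.mul_sum, map_sum]
    simp
  simp only [LinearMap.sum_apply, conv_eq_sum (ℛ k x), comp_apply, mulRight_apply]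
  rw [Finset.sum_comm, Finset.sum_congr rfl hsum, ← map_sum, ← map_sum, sum_antipode_mul_eq_smul]
  simp [mul_comm]

lemma apply_one_smul_eq_sum_leftHit_frobeniusMap {ι : Type*} [Fintype ι] (b : Module.Basis ι k H)
    (L : H) (f : Module.Dual k H) :
    f 1 • L = ∑ i, leftHit (b.coord i)
      (frobeniusMap L (f ∘ₗ mulRight k (antipode k (antipode k (b i))))) := by
  have h := congrArg (fun g ↦ leftHit g L) (sum_conv_coord_comp_antipode b f)
  simpa [leftHit_conv, leftHit_counit, frobeniusMap_apply, comp_assoc] using h.symm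

variable [FiniteDimensional k H]

lemma frobeniusMap_injective {L : H} (hL0 : L ≠ 0) (hL : IsLeftIntegral k L) :
    Function.Injective (frobeniusMap (k := k) L) := by
  refine (injective_iff_map_eq_zero _).2 fun f hf ↦ LinearMap.ext fun a ↦ ?_
  have h := apply_one_smul_eq_sum_leftHit_frobeniusMap (Module.finBasis k H) L (f ∘ₗ mulRight k a)
  simp only [← mul_frobeniusMap hL, hf, mul_zero, map_zero, Finset.sum_const_zero] at h
  simpa [hL0] using h

lemma frobeniusMap_surjective {L : H} (hL0 : L ≠ 0) (hL : IsLeftIntegral k L) :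
    Function.Surjective (frobeniusMap (k := k) L) :=
  (LinearMap.injective_iff_surjective_of_finrank_eq_finrank Subspace.dual_finrank_eq).1
    (frobeniusMap_injective hL0 hL)

variable (k H) in
theorem antipode_bijective : Function.Bijective (antipode k (A := H)) := by
  obtain ⟨L, hL0, hL⟩ := exists_isLeftIntegral_ne_zero k H
  have hsurj : Function.Surjective (antipode k (A := H)) := by
    rw [← LinearMap.dualMap_injective_iff]
    exact Function.Injective.of_comp (f := leftHit.flip L) (frobeniusMap_injective hL0 hL)
  exact ⟨LinearMap.injective_iff_surjective.2 hsurj, hsurj⟩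

end Frobenius

section IntegralPair

open Coalgebra LinearMap HopfAlgebra WithConv Algebra.TensorProduct

variable {k : Type*} [Field k] {H : Type*} [Ring H] [HopfAlgebra k H]

lemma rightHit_of_isRightIntegralDual {l : Module.Dual k H} (hl : IsRightIntegralDual k l)
    (x : H) : rightHit l x = l x • (1 : H) := by
  refine eq_of_forall_dual_apply_eq (k := k) fun f ↦ ?_
  rw [apply_rightHit, hl, map_smul, LinearMap.smul_apply, smul_eq_mul, smul_eq_mul, mul_comm]

lemma rightHit_comp_mulRight {l : Module.Dual k H} (hl : IsRightIntegralDual k l) (x y : H) :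
    rightHit (l ∘ₗ mulRight k x) y = antipode k (rightHit (l ∘ₗ mulLeft k y) x) := by
  let U : H →ₗ[k] H := ∑ i ∈ (ℛ k y).index,
    (l ∘ₗ mulLeft k ((ℛ k y).left i)).smulRight ((ℛ k y).right i)
  have hU (x : H) : U x = rightHit (l ∘ₗ mulRight k x) y := by
    simp [U, rightHit_eq_sum (ℛ k y), LinearMap.sum_apply]
  have hUid : toConv U * toConv LinearMap.id =
      toConv (Algebra.linearMap k H ∘ₗ l ∘ₗ mulLeft k y) := by
    ext x
    have h := rightHit_mul (ℛ k x) l y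
    rw [rightHit_of_isRightIntegralDual hl] at h
    simpa [(ℛ k x).convMul_apply, hU, Algebra.algebraMap_eq_smul_one] using h.symm
  have hUS : toConv U = toConv (antipode k ∘ₗ rightHit (l ∘ₗ mulLeft k y)) := by
    rw [toConv_comp_rightHit, ← hUid, mul_assoc, id_mul_antipode, mul_one]
  rw [← hU]
  exact congrArg (fun F ↦ F.ofConv x) hUS

variable (k H) in
/-- A right integral `lam` of `H*` and a right integral `T` of `H`, normalized by `lam T = 1`. -/
structure IntegralPair where
  lam : Module.Dual k H
  T : H
  isRightIntegralDual_lam : IsRightIntegralDual k lam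
  isRightIntegral_T : IsRightIntegral k T
  lam_T : lam T = 1

variable (k H) in
theorem nonempty_integralPair [FiniteDimensional k H] : Nonempty (IntegralPair k H) := by
  obtain ⟨L, hL0, hL⟩ := exists_isLeftIntegral_ne_zero k H
  obtain ⟨l, hl⟩ := frobeniusMap_surjective (k := k) hL0 hL 1
  refine ⟨⟨l, antipode k L, fun f ↦ frobeniusMap_injective hL0 hL ?_, fun a ↦ ?_, ?_⟩⟩
  · rw [frobeniusMap_conv, hl, leftHit_one, map_smul, hl, comp_apply, antipode_one]
  · obtain ⟨b, rfl⟩ := (antipode_bijective k H).surjective a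
    rw [← antipode_mul_antidistrib, hL, map_smul, counit_antipode]
  · have h := counit_leftHit (l ∘ₗ antipode k) L
    rwa [← frobeniusMap_apply, hl, Bialgebra.counit_one, eq_comm] at h

namespace IntegralPair

variable (D : IntegralPair k H)

lemma lam_comp_mulLeft_T : D.lam ∘ₗ mulLeft k D.T = counit := by
  ext x
  simp [D.isRightIntegral_T x, D.lam_T]

lemma rightHit_lam_comp_mulRight_T (x : H) :
    rightHit (D.lam ∘ₗ mulRight k x) D.T = antipode k x := by
  rw [rightHit_comp_mulRight D.isRightIntegralDual_lam, lam_comp_mulLeft_T, rightHit_counit,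
    Module.End.one_apply]

section FiniteDimensional

variable [FiniteDimensional k H]

lemma rightHit_flip_T_bijective : Function.Bijective (rightHit.flip D.T : Module.Dual k H → H) := by
  have hsurj : Function.Surjective (rightHit.flip D.T : Module.Dual k H → H) := fun y ↦ by
    obtain ⟨x, rfl⟩ := (antipode_bijective k H).surjective y
    exact ⟨_, D.rightHit_lam_comp_mulRight_T x⟩
  exact ⟨(LinearMap.injective_iff_surjective_of_finrank_eq_finrank
    Subspace.dual_finrank_eq).2 hsurj, hsurj⟩

lemma exists_eq_lam_comp_mulRight (f : Module.Dual k H) : ∃ a, f = D.lam ∘ₗ mulRight k a := by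
  obtain ⟨a, ha⟩ := (antipode_bijective k H).surjective (rightHit f D.T)
  refine ⟨a, D.rightHit_flip_T_bijective.injective ?_⟩
  rw [LinearMap.flip_apply, LinearMap.flip_apply, rightHit_lam_comp_mulRight_T, ha]

lemma eq_smul_lam {l : Module.Dual k H} (hl : IsRightIntegralDual k l) : l = l D.T • D.lam := by
  apply D.rightHit_flip_T_bijective.injective
  rw [map_smul, LinearMap.flip_apply, LinearMap.flip_apply, rightHit_of_isRightIntegralDual hl,
    rightHit_of_isRightIntegralDual D.isRightIntegralDual_lam, D.lam_T, one_smul]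

lemma eq_smul_T {T' : H} (hT' : IsRightIntegral k T') : T' = D.lam T' • D.T := by
  refine eq_of_forall_dual_apply_eq (k := k) fun f ↦ ?_
  obtain ⟨a, rfl⟩ := D.exists_eq_lam_comp_mulRight f
  rw [map_smul, comp_apply, comp_apply, mulRight_apply, mulRight_apply, hT' a,
    D.isRightIntegral_T a, map_smul, map_smul, D.lam_T, smul_eq_mul, smul_eq_mul, smul_eq_mul,
    mul_one, mul_comm]

end FiniteDimensional

/-- The distinguished group-like element `g = T₁ lam(T₂)` of `H`, characterized by
`x₁ lam(x₂) = lam(x) g`. -/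
noncomputable def distinguishedGroupLike : H := leftHit D.lam D.T

variable [FiniteDimensional k H]

lemma conv_lam (f : Module.Dual k H) : conv f D.lam = f D.distinguishedGroupLike • D.lam := by
  have hint : IsRightIntegralDual k (conv f D.lam) := fun h ↦ by
    rw [conv_assoc, D.isRightIntegralDual_lam]
    ext x
    simp [conv_eq_sum (ℛ k x), Finset.mul_sum, mul_left_comm]
  rw [distinguishedGroupLike, apply_leftHit]
  exact D.eq_smul_lam hint

lemma leftHit_lam (x : H) : leftHit D.lam x = D.lam x • D.distinguishedGroupLike := by
  refine eq_of_forall_dual_apply_eq (k := k) fun f ↦ ?_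
  rw [apply_leftHit, conv_lam, map_smul, LinearMap.smul_apply, smul_eq_mul, smul_eq_mul, mul_comm]

lemma isGroupLikeElem_distinguishedGroupLike : IsGroupLikeElem k D.distinguishedGroupLike := by
  set g := D.distinguishedGroupLike with hg
  let j₁ : H →ₐ[k] H ⊗[k] H := includeLeft
  let j₂ : H →ₐ[k] H ⊗[k] H := includeRight
  have hj₂ : j₂.toLinearMap ∘ₗ leftHit D.lam =
      mulRight k (1 ⊗ₜ[k] g) ∘ₗ Algebra.linearMap k (H ⊗[k] H) ∘ₗ D.lam := by
    ext x
    simp [j₂, leftHit_lam, hg, Algebra.algebraMap_eq_smul_one]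
  have hcomul : toConv (comul ∘ₗ leftHit D.lam) =
      toConv (mulRight k (1 ⊗ₜ[k] g) ∘ₗ j₁.toLinearMap ∘ₗ leftHit D.lam) := by
    rw [toConv_comp_leftHit, toConv_comul, mul_assoc, ← toConv_comp_leftHit, hj₂,
      toConv_mul_mulRight_comp, ← toConv_comp_leftHit, ofConv_toConv]
  have hT := congrArg (fun F ↦ F.ofConv D.T) hcomul
  refine ⟨by rw [hg, distinguishedGroupLike, counit_leftHit, D.lam_T], ?_⟩
  have hmul : (g ⊗ₜ[k] (1 : H)) * (1 ⊗ₜ[k] g) = g ⊗ₜ g := by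
    rw [tmul_mul_tmul, mul_one, one_mul]
  exact hT.trans hmul

lemma mul_T_eq_lam_smul_T (a : H) : a * D.T = D.lam (a * D.T) • D.T :=
  D.eq_smul_T fun b ↦ by rw [mul_assoc, D.isRightIntegral_T, mul_smul_comm]

/-- The distinguished character `α : a ↦ lam(a T)` of `H`, characterized by `a T = α(a) T`. -/
noncomputable def distinguishedCharacter : H →ₐ[k] k :=
  AlgHom.ofLinearMap (D.lam ∘ₗ mulRight k D.T) (by simp [D.lam_T]) fun a b ↦ by
    simp only [comp_apply, mulRight_apply]
    rw [mul_assoc, D.mul_T_eq_lam_smul_T b, mul_smul_comm, map_smul, map_smul, D.lam_T,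
      smul_eq_mul, smul_eq_mul, mul_one, mul_comm]

lemma leftHit_lam_comp_mulLeft (x y : H) : leftHit (D.lam ∘ₗ mulLeft k y) x =
    antipode k (leftHit (D.lam ∘ₗ mulRight k x) y) * D.distinguishedGroupLike := by
  let N : H →ₗ[k] H := ∑ i ∈ (ℛ k x).index,
    (D.lam ∘ₗ mulRight k ((ℛ k x).right i)).smulRight ((ℛ k x).left i)
  have hN (y : H) : N y = leftHit (D.lam ∘ₗ mulLeft k y) x := by
    simp [N, leftHit_eq_sum (ℛ k x), LinearMap.sum_apply]
  have hidN : toConv LinearMap.id * toConv N = toConv (mulRight k D.distinguishedGroupLike ∘ₗ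
      Algebra.linearMap k H ∘ₗ D.lam ∘ₗ mulRight k x) := by
    ext y
    have h := D.leftHit_lam (y * x)
    rw [leftHit_eq_sum ((ℛ k y).mul (ℛ k x))] at h
    simpa [(ℛ k y).convMul_apply, hN, leftHit_eq_sum (ℛ k x), Finset.mul_sum, Finset.sum_product,
      Algebra.algebraMap_eq_smul_one] using h
  have hNS : toConv N = toConv (mulRight k D.distinguishedGroupLike ∘ₗ
      antipode k ∘ₗ leftHit (D.lam ∘ₗ mulRight k x)) := by
    rw [← one_mul (toConv N), ← antipode_mul_id, mul_assoc, hidN, toConv_mul_mulRight_comp,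
      ← toConv_comp_leftHit, ofConv_toConv]
  rw [← hN]
  exact congrArg (fun F ↦ F.ofConv y) hNS

theorem radford_formula : rightHit D.distinguishedCharacter.toLinearMap =
    antipode k ^ 4 * (mulLeft k (antipode k D.distinguishedGroupLike) *
      mulRight k D.distinguishedGroupLike * leftHit D.distinguishedCharacter.toLinearMap) := by
  ext y
  obtain ⟨n, hn⟩ := D.exists_eq_lam_comp_mulRight (D.lam ∘ₗ mulLeft k y)
  have hright : rightHit D.distinguishedCharacter.toLinearMap y = antipode k (antipode k n) := by
    rw [← D.rightHit_lam_comp_mulRight_T n, ← hn]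
    exact rightHit_comp_mulRight D.isRightIntegralDual_lam D.T y
  have hleft : leftHit (D.lam ∘ₗ mulRight k n) D.T =
      antipode k (leftHit D.distinguishedCharacter.toLinearMap y) * D.distinguishedGroupLike := by
    rw [← hn]
    exact D.leftHit_lam_comp_mulLeft D.T y
  have hn' : n = antipode k (leftHit (D.lam ∘ₗ mulRight k n) D.T) * D.distinguishedGroupLike := by
    rw [← D.leftHit_lam_comp_mulLeft, lam_comp_mulLeft_T, leftHit_counit, Module.End.one_apply]
  have hg := D.isGroupLikeElem_distinguishedGroupLike.antipode_antipode
  rw [hright, hn', hleft]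
  simp [pow_succ, antipode_mul_antidistrib, hg, mul_assoc]

end IntegralPair

end IntegralPair

section Translation

open Coalgebra LinearMap HopfAlgebra WithConv Algebra.TensorProduct

variable {k : Type*} [Field k] {H : Type*} [Ring H] [HopfAlgebra k H]

lemma toConv_mul_comp_antipode (α : H →ₐ[k] k) :
    toConv α.toLinearMap * toConv (α.toLinearMap ∘ₗ antipode k) = 1 := by
  ext x
  simp [(ℛ k x).convMul_apply, ← map_mul, ← map_sum,
    sum_mul_antipode_eq_algebraMap_counit (ℛ k x)]

lemma algHom_comp_antipode_antipode (α : H →ₐ[k] k) :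
    (α.toLinearMap ∘ₗ antipode k) ∘ₗ antipode k = α.toLinearMap := by
  have hinv : toConv (α.toLinearMap ∘ₗ antipode k) *
      toConv ((α.toLinearMap ∘ₗ antipode k) ∘ₗ antipode k) = 1 := by
    refine ofConv_injective ((conv_comp_antipode (α.toLinearMap ∘ₗ antipode k)
      α.toLinearMap).symm.trans ?_)
    have h : conv (α.toLinearMap ∘ₗ antipode k) α.toLinearMap = counit :=
      congrArg ofConv (toConv_comp_antipode_mul α)
    rw [h]
    ext x
    simp
  exact congrArg ofConv (left_inv_eq_right_inv (toConv_mul_comp_antipode α) hinv).symm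

lemma orderOf_mulRight (g : H) : orderOf (mulRight k g : Module.End k H) = orderOf g := by
  refine orderOf_eq_orderOf_iff.2 fun n ↦ ?_
  rw [pow_mulRight]
  refine ⟨fun h ↦ ?_, fun h ↦ by rw [h, mulRight_one, Module.End.one_eq_id]⟩
  simpa using congrArg (fun F : Module.End k H ↦ F 1) h

variable (k H) in
/-- The square of the antipode, as a bialgebra endomorphism. -/
noncomputable def antipodeSq : H →ₐc[k] H :=
  .ofAlgHom (AlgHom.ofLinearMap (antipode k ∘ₗ antipode k) (by simp)
    fun x y ↦ by simp [antipode_mul_antidistrib]) (by ext x; simp) (by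
      ext x
      let X : Coalgebra.Repr k (antipode k x) (H × H) :=
        ⟨_, _, _, (comul_antipode (ℛ k x)).symm⟩
      exact Eq.symm ((comul_antipode X).trans (by simp [X, ← (ℛ k x).eq])))

lemma bialgEndToEnd_antipodeSq_pow (n : ℕ) :
    bialgEndToEnd k H (antipodeSq k H ^ n) = (antipode k ^ 2) ^ n := by
  rw [map_pow, sq]
  rfl

lemma shear_comul_mul_shear : shear (comul (R := k) (A := H)) *
    shear (toConv ((includeLeft : H →ₐ[k] H ⊗[k] H).toLinearMap ∘ₗ antipode k) *
      toConv (includeRight : H →ₐ[k] H ⊗[k] H).toLinearMap).ofConv = 1 := by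
  let j₁ : H →ₐ[k] H ⊗[k] H := includeLeft
  let j₂ : H →ₐ[k] H ⊗[k] H := includeRight
  have hcomul (y : H) : shear (comul (R := k) (A := H))
      ((toConv (j₁.toLinearMap ∘ₗ antipode k) * toConv j₂.toLinearMap) y) = 1 ⊗ₜ y := by
    have h : toConv (j₁.toLinearMap ∘ₗ antipode k) * toConv comul = toConv j₂.toLinearMap := by
      rw [toConv_comul, ← mul_assoc, toConv_comp_antipode_mul, one_mul]
    refine Eq.trans ?_ (congrArg (fun F ↦ F.ofConv y) h)
    simp [(ℛ k y).convMul_apply, j₁, j₂, shear_tmul]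
  refine TensorProduct.ext' fun x y ↦ ?_
  rw [Module.End.mul_apply, shear_tmul, shear_tmul_one_mul]
  refine (congrArg (x ⊗ₜ[k] 1 * ·) (hcomul y)).trans ?_
  simp

-- The automorphism `x ⊗ y ↦ (x ⊗ 1) Δ(y)` of `H ⊗ H` conjugates `X ⊗ Y` into `W ⊗ Z`.
lemma trace_mul_trace_eq [FiniteDimensional k H] {X Y W Z : Module.End k H}
    (hcomul : comul ∘ₗ Y = TensorProduct.map W Z ∘ₗ comul)
    (hmul : ∀ x y, W (x * y) = X x * W y) :
    trace k H X * trace k H Y = trace k H W * trace k H Z := by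
  set Φ := shear (comul (R := k) (A := H))
  obtain ⟨Ψ, hΨ⟩ : ∃ Ψ, Φ * Ψ = 1 := ⟨_, shear_comul_mul_shear⟩
  have hΦ : Φ * TensorProduct.map X Y = TensorProduct.map W Z * Φ := by
    refine TensorProduct.ext' fun x y ↦ ?_
    have h : comul (Y y) = TensorProduct.map W Z (comul y) := congrArg (fun F ↦ F y) hcomul
    rw [Module.End.mul_apply, Module.End.mul_apply, TensorProduct.map_tmul, shear_tmul,
      shear_tmul, h, ← (ℛ k y).eq]
    simp [Finset.mul_sum, hmul]
  rw [← trace_tensorProduct', ← trace_tensorProduct', ← mul_one (TensorProduct.map W Z), ← hΨ,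
    ← mul_assoc, ← hΦ, mul_assoc, trace_mul_comm, mul_assoc, mul_eq_one_comm.1 hΨ, mul_one]

lemma trace_sq_mulRight [FiniteDimensional k H] (φ : H →ₐc[k] H) {g : H}
    (hg : IsGroupLikeElem k g) : trace k H (bialgEndToEnd k H φ * mulRight k g) ^ 2 =
      trace k H (bialgEndToEnd k H φ) * trace k H (bialgEndToEnd k H φ * mulRight k g) := by
  rw [sq]
  refine (trace_mul_trace_eq ?_ fun x y ↦ ?_).symm
  · rw [Module.End.mul_eq_comp, ← comp_assoc, comul_comp_bialgEndToEnd, comp_assoc,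
      comul_comp_mulRight hg, ← comp_assoc, ← TensorProduct.map_comp]
  · simp only [Module.End.mul_apply, mulRight_apply, mul_assoc]
    exact map_mul φ x (y * g)

lemma trace_sq_rightHit [FiniteDimensional k H] (φ : H →ₐc[k] H) (α : H →ₐ[k] k) :
    trace k H (bialgEndToEnd k H φ * rightHit α.toLinearMap) ^ 2 =
      trace k H (bialgEndToEnd k H φ) *
        trace k H (bialgEndToEnd k H φ * rightHit α.toLinearMap) := by
  rw [sq, mul_comm (trace k H (bialgEndToEnd k H φ))]
  refine trace_mul_trace_eq ?_ fun x y ↦ ?_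
  · rw [Module.End.mul_eq_comp, ← comp_assoc, comul_comp_bialgEndToEnd, comp_assoc,
      comul_comp_rightHit, ← comp_assoc, ← TensorProduct.map_comp, comp_id]
  · simp only [Module.End.mul_apply, rightHit_map_mul]
    exact map_mul φ _ _

lemma commute_antipode_sq_mulRight {g : H} (hg : IsGroupLikeElem k g) :
    Commute (antipode k ^ 2 : Module.End k H) (mulRight k g) := by
  ext x
  simp [sq, antipode_mul_antidistrib, hg.antipode_antipode]

lemma commute_antipode_sq_mulLeft {g : H} (hg : IsGroupLikeElem k g) :
    Commute (antipode k ^ 2 : Module.End k H) (mulLeft k g) := by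
  ext x
  simp [sq, antipode_mul_antidistrib, hg.antipode_antipode]

lemma commute_antipode_sq_rightHit (α : H →ₐ[k] k) :
    Commute (antipode k ^ 2) (rightHit α.toLinearMap) := by
  rw [sq]
  exact commute_rightHit (antipodeSq k H).toCoalgHom (algHom_comp_antipode_antipode α)

lemma commute_antipode_sq_leftHit (α : H →ₐ[k] k) :
    Commute (antipode k ^ 2) (leftHit α.toLinearMap) := by
  rw [sq]
  exact commute_leftHit (antipodeSq k H).toCoalgHom (algHom_comp_antipode_antipode α)

lemma trace_sq_antipode_sq_pow_mul_mulRight [FiniteDimensional k H] {g : H}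
    (hg : IsGroupLikeElem k g) (n : ℕ) : trace k H ((antipode k ^ 2) ^ n * mulRight k g) ^ 2 =
      trace k H ((antipode k ^ 2) ^ n) * trace k H ((antipode k ^ 2) ^ n * mulRight k g) := by
  rw [← bialgEndToEnd_antipodeSq_pow, trace_sq_mulRight _ hg]

lemma trace_sq_antipode_sq_pow_mul_rightHit [FiniteDimensional k H] (α : H →ₐ[k] k) (n : ℕ) :
    trace k H ((antipode k ^ 2) ^ n * rightHit α.toLinearMap) ^ 2 =
      trace k H ((antipode k ^ 2) ^ n) *
        trace k H ((antipode k ^ 2) ^ n * rightHit α.toLinearMap) := by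
  rw [← bialgEndToEnd_antipodeSq_pow, trace_sq_rightHit]

lemma commute_mulLeft_mul_mulRight_leftHit {g : H} (hg : IsGroupLikeElem k g) (α : H →ₐ[k] k) :
    Commute (mulLeft k (antipode k g) * mulRight k g) (leftHit α.toLinearMap) := by
  have hα : α (antipode k g) * α g = 1 := by rw [← map_mul, hg.antipode_mul_cancel, map_one]
  ext x
  simp [leftHit_map_mul, leftHit_of_isGroupLikeElem hg, leftHit_of_isGroupLikeElem hg.antipode,
    smul_smul, mul_comm (α g), hα]

lemma mulLeft_antipode_pow_eq_one {g : H} (hg : IsGroupLikeElem k g) {n : ℕ} (hn : g ^ n = 1) :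
    mulLeft k (antipode k g) ^ n = 1 := by
  have hc : Commute (antipode k g) g := hg.antipode_mul_cancel.trans hg.mul_antipode_cancel.symm
  have h := hc.mul_pow n
  rw [hg.antipode_mul_cancel, one_pow, hn, mul_one] at h
  rw [pow_mulLeft, ← h, mulLeft_one, Module.End.one_eq_id]

namespace IntegralPair

theorem antipode_sq_pow_eq_one [FiniteDimensional k H] (D : IntegralPair k H) {n : ℕ}
    (hg : orderOf D.distinguishedGroupLike ∣ n)
    (hα : orderOf (rightHit D.distinguishedCharacter.toLinearMap) ∣ n) :
    (antipode k ^ 2 : Module.End k H) ^ (2 * n) = 1 := by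
  have hgl := D.isGroupLikeElem_distinguishedGroupLike
  set g := D.distinguishedGroupLike
  set α := D.distinguishedCharacter
  have hL : leftHit α.toLinearMap ^ n = 1 := by
    rwa [← orderOf_dvd_iff_pow_eq_one, orderOf_leftHit, ← orderOf_rightHit]
  have hM : (mulRight k g : Module.End k H) ^ n = 1 := by
    rwa [← orderOf_dvd_iff_pow_eq_one, orderOf_mulRight]
  have hLM : Commute (mulLeft k (antipode k g)) (mulRight k g) := commute_mulLeft_right _ _
  have hS : Commute (antipode k ^ 4)
      (mulLeft k (antipode k g) * mulRight k g * leftHit α.toLinearMap) := by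
    rw [show 4 = 2 * 2 from rfl, pow_mul]
    exact (((commute_antipode_sq_mulLeft hgl.antipode).mul_right
      (commute_antipode_sq_mulRight hgl)).mul_right (commute_antipode_sq_leftHit α)).pow_left 2
  have h := orderOf_dvd_iff_pow_eq_one.1 hα
  rw [D.radford_formula, hS.mul_pow, (commute_mulLeft_mul_mulRight_leftHit hgl α).mul_pow,
    hLM.mul_pow, mulLeft_antipode_pow_eq_one hgl (orderOf_dvd_iff_pow_eq_one.1 hg), hM, hL,
    mul_one, mul_one, mul_one] at h
  rwa [← pow_mul, ← mul_assoc, pow_mul]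

end IntegralPair

end Translation

section NonSemisimple

open Coalgebra LinearMap HopfAlgebra

variable {k : Type*} [Field k] {H : Type*} [Ring H] [HopfAlgebra k H]

lemma algHom_apply_eq_zero_of_isLeftIntegral (hss : ¬ IsSemisimpleRing H) {L : H}
    (hL : IsLeftIntegral k L) (α : H →ₐ[k] k) : α L = 0 := by
  by_contra hα
  have hε (a : H) : α a = counit a := mul_right_cancel₀ hα (by
    rw [← map_mul, hL a, map_smul, smul_eq_mul])
  exact hss (isSemisimpleRing_of_isLeftIntegral hL (hε L ▸ hα))

variable [FiniteDimensional k H]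

lemma trace_mulRight_mul_antipode_sq_mul_rightHit (hss : ¬ IsSemisimpleRing H) (x : H)
    (α : H →ₐ[k] k) : trace k H (mulRight k x * antipode k ^ 2 * rightHit α.toLinearMap) = 0 := by
  rw [sq, ← apply_traceIntegral]
  exact algHom_apply_eq_zero_of_isLeftIntegral hss (isLeftIntegral_traceIntegral x) α

lemma trace_antipode_sq_mul_mulRight (hss : ¬ IsSemisimpleRing H) (x : H) :
    trace k H (antipode k ^ 2 * mulRight k x) = 0 := by
  have h := trace_mulRight_mul_antipode_sq_mul_rightHit hss x (Bialgebra.counitAlgHom k H)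
  rwa [show (Bialgebra.counitAlgHom k H).toLinearMap = counit from rfl, rightHit_counit, mul_one,
    trace_mul_comm] at h

lemma trace_antipode_sq_mul_rightHit (hss : ¬ IsSemisimpleRing H) (α : H →ₐ[k] k) :
    trace k H (antipode k ^ 2 * rightHit α.toLinearMap) = 0 := by
  have h := trace_mulRight_mul_antipode_sq_mul_rightHit hss 1 α
  rwa [mulRight_one, ← Module.End.one_eq_id, one_mul] at h

lemma trace_antipode_sq (hss : ¬ IsSemisimpleRing H) :
    trace k H (antipode k ^ 2) = 0 := by
  have h := trace_antipode_sq_mul_mulRight (k := k) hss 1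
  rwa [mulRight_one, ← Module.End.one_eq_id, mul_one] at h

lemma trace_antipode_sq_mul_mulRight_pow (hss : ¬ IsSemisimpleRing H) (x : H) (j : ℕ) :
    trace k H (antipode k ^ 2 * mulRight k x ^ j) = 0 := by
  rw [pow_mulRight, trace_antipode_sq_mul_mulRight hss]

lemma trace_antipode_sq_mul_rightHit_pow (hss : ¬ IsSemisimpleRing H) (α : H →ₐ[k] k) (j : ℕ) :
    trace k H (antipode k ^ 2 * rightHit α.toLinearMap ^ j) = 0 := by
  obtain ⟨β, hβ⟩ := exists_algHom_rightHit_pow α j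
  rw [hβ, trace_antipode_sq_mul_rightHit hss]

end NonSemisimple

section Order

open LinearMap HopfAlgebra

variable {k : Type*} [Field k] {H : Type*} [Ring H] [HopfAlgebra k H]

lemma algHom_apply_eq_one_of_coprime {g : H} (hg : IsGroupLikeElem k g) (α : H →ₐ[k] k)
    (h : (orderOf g).Coprime (orderOf (rightHit α.toLinearMap))) : α g = 1 := by
  have hdvd_g : orderOf (α g) ∣ orderOf g := orderOf_map_dvd (α : H →* k) g
  have hdvd_α : orderOf (α g) ∣ orderOf (rightHit α.toLinearMap) := by
    have h' := rightHit_pow_apply_of_isGroupLikeElem hg α.toLinearMap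
      (orderOf (rightHit α.toLinearMap))
    rw [pow_orderOf_eq_one, Module.End.one_apply] at h'
    refine orderOf_dvd_of_pow_eq_one (smul_left_injective k hg.ne_zero ?_)
    simpa using h'.symm
  exact orderOf_eq_one_iff.1 (Nat.eq_one_of_dvd_coprimes h hdvd_g hdvd_α)

lemma finrank_span_pow_of_isGroupLikeElem {g : H} (hg : IsGroupLikeElem k g) :
    Module.finrank k (Submodule.span k (Set.range fun i : Fin (orderOf g) ↦ g ^ (i : ℕ))) =
      orderOf g := by
  have hli : LinearIndependent k fun i : Fin (orderOf g) ↦ g ^ (i : ℕ) :=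
    (linearIndep_groupLikeVal (R := k) (A := H)).comp
      (fun i : Fin (orderOf g) ↦ (⟨g ^ (i : ℕ), hg.pow⟩ : GroupLike k H)) fun i j hij ↦
        Fin.ext (pow_injOn_Iio_orderOf i.2 j.2 (congrArg GroupLike.val hij))
  rw [finrank_span_eq_card hli, Fintype.card_fin]

variable [FiniteDimensional k H]

lemma isOfFinOrder_of_isGroupLikeElem {g : H} (hg : IsGroupLikeElem k g) : IsOfFinOrder g := by
  have : Finite (GroupLike k H) := (linearIndep_groupLikeVal (R := k) (A := H)).finite
  let γ : GroupLike k H := ⟨g, hg⟩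
  exact (GroupLike.valMonoidHom k H).isOfFinOrder (isOfFinOrder_of_finite γ)

lemma finite_algHom : Finite (H →ₐ[k] k) := by
  have h : LinearIndependent k fun α : H →ₐ[k] k ↦ (α : H → k) :=
    (linearIndependent_monoidHom H k).comp (fun α : H →ₐ[k] k ↦ (α : H →* k))
      fun α β (hαβ : (α : H →* k) = β) ↦ AlgHom.ext fun x ↦
        congrArg (fun F : H →* k ↦ F x) hαβ
  exact (LinearIndependent.of_comp (v := AlgHom.toLinearMap) (LinearMap.ltoFun k H k k) h).finite

lemma isOfFinOrder_rightHit (α : H →ₐ[k] k) : IsOfFinOrder (rightHit α.toLinearMap) := by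
  have : Finite (H →ₐ[k] k) := finite_algHom
  have hinv : rightHit α.toLinearMap * rightHit (α.toLinearMap ∘ₗ antipode k) = 1 := by
    rw [← rightHit_conv, rightHit_eq_one_iff]
    exact congrArg WithConv.ofConv (toConv_comp_antipode_mul α)
  obtain ⟨u, hu⟩ := IsUnit.of_mul_eq_one _ hinv
  rw [← hu, Units.isOfFinOrder_val, ← finite_powers]
  refine .of_finite_image ((Set.finite_range fun β : H →ₐ[k] k ↦ rightHit β.toLinearMap).subset ?_)
    Units.val_injective.injOn
  rintro _ ⟨_, ⟨j, rfl⟩, rfl⟩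
  obtain ⟨β, hβ⟩ := exists_algHom_rightHit_pow α j
  exact ⟨β, by simp [hu, hβ]⟩

lemma trace_sq_mulRight_pow {g : H} (hg : IsGroupLikeElem k g) (j : ℕ) :
    trace k H (mulRight k g ^ j) ^ 2 = Module.finrank k H * trace k H (mulRight k g ^ j) := by
  have h := trace_sq_antipode_sq_pow_mul_mulRight (hg.pow (n := j)) 0
  rwa [pow_zero, one_mul, trace_one, ← pow_mulRight] at h

lemma trace_sq_rightHit_pow (α : H →ₐ[k] k) (j : ℕ) :
    trace k H (rightHit α.toLinearMap ^ j) ^ 2 =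
      Module.finrank k H * trace k H (rightHit α.toLinearMap ^ j) := by
  obtain ⟨β, hβ⟩ := exists_algHom_rightHit_pow α j
  have h := trace_sq_antipode_sq_pow_mul_rightHit β 0
  rwa [pow_zero, one_mul, trace_one, ← hβ] at h

end Order

lemma dvd_and_dvd_of_dvd_prime_mul_prime {a b p q : ℕ} (hp : p.Prime) (hq : q.Prime)
    (ha : a ∣ p * q) (hb : b ∣ p * q) (ha' : a ≠ p * q) (hb' : b ≠ p * q)
    (hab : a.Coprime b → a * b ≠ p * q) : (a ∣ p ∧ b ∣ p) ∨ (a ∣ q ∧ b ∣ q) := by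
  have hdvd {m : ℕ} (hm : m ∣ p * q) (hm' : m ≠ p * q) : m = 1 ∨ m = p ∨ m = q := by
    obtain ⟨c, d, hc, hd, rfl⟩ := Nat.dvd_mul.1 hm
    rcases (Nat.dvd_prime hp).1 hc with rfl | rfl <;>
      rcases (Nat.dvd_prime hq).1 hd with rfl | rfl <;> simp_all
  rcases eq_or_ne p q with rfl | hpq
  · rcases hdvd ha ha' with rfl | rfl | rfl <;> rcases hdvd hb hb' with rfl | rfl | rfl <;> simp
  · have hcop := (Nat.coprime_primes hp hq).2 hpq
    have hcases := hdvd ha ha'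
    rcases hdvd hb hb' with rfl | rfl | rfl <;> rcases hcases with rfl | rfl | rfl <;>
      simp_all [mul_comm, Nat.coprime_comm]

section Main

open LinearMap HopfAlgebra

variable {k : Type*} [Field k] [IsAlgClosed k] [CharZero k] {H : Type*} [Ring H]
  [HopfAlgebra k H] [FiniteDimensional k H]

lemma orderOf_rightHit_mul_finrank_eigenspace (α : H →ₐ[k] k) :
    orderOf (rightHit α.toLinearMap) *
      Module.finrank k ((rightHit α.toLinearMap).eigenspace 1) = Module.finrank k H :=
  orderOf_mul_finrank_eigenspace (isOfFinOrder_rightHit α) (trace_sq_rightHit_pow α)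

lemma orderOf_dvd_finrank {g : H} (hg : IsGroupLikeElem k g) :
    orderOf g ∣ Module.finrank k H := by
  have hfin : IsOfFinOrder (mulRight k g : Module.End k H) := by
    rw [← orderOf_pos_iff, orderOf_mulRight, orderOf_pos_iff]
    exact isOfFinOrder_of_isGroupLikeElem hg
  rw [← orderOf_mulRight (k := k) g]
  exact ⟨_, (orderOf_mul_finrank_eigenspace hfin (trace_sq_mulRight_pow hg)).symm⟩

lemma orderOf_rightHit_dvd_finrank (α : H →ₐ[k] k) :
    orderOf (rightHit α.toLinearMap) ∣ Module.finrank k H :=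
  ⟨_, (orderOf_rightHit_mul_finrank_eigenspace α).symm⟩

lemma eigenspace_rightHit_one_eq_span_pow {g : H} (hg : IsGroupLikeElem k g) {α : H →ₐ[k] k}
    (hαg : α g = 1)
    (h : orderOf g * orderOf (rightHit α.toLinearMap) = Module.finrank k H) :
    (rightHit α.toLinearMap).eigenspace 1 =
      Submodule.span k (Set.range fun i : Fin (orderOf g) ↦ g ^ (i : ℕ)) := by
  refine (Submodule.eq_of_le_of_finrank_eq ?_ ?_).symm
  · rw [Submodule.span_le]
    rintro _ ⟨i, rfl⟩
    refine Module.End.mem_eigenspace_iff.2 ?_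
    rw [rightHit_of_isGroupLikeElem hg.pow, AlgHom.toLinearMap_apply, map_pow, hαg, one_pow]
  · rw [finrank_span_pow_of_isGroupLikeElem hg]
    rw [← orderOf_rightHit_mul_finrank_eigenspace α, mul_comm] at h
    exact Nat.eq_of_mul_eq_mul_left (isOfFinOrder_rightHit α).orderOf_pos h

-- Otherwise `S²` is trace-free on the fixed space of the action of `α`; but that space is spanned
-- by the powers of `g`, on which `S²` is the identity.
lemma isSemisimpleRing_of_orderOf_mul_orderOf {g : H} (hg : IsGroupLikeElem k g) {α : H →ₐ[k] k}
    (hαg : α g = 1)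
    (h : orderOf g * orderOf (rightHit α.toLinearMap) = Module.finrank k H) :
    IsSemisimpleRing H := by
  by_contra hss
  have hspan := eigenspace_rightHit_one_eq_span_pow hg hαg h
  have hS : Submodule.span k (Set.range fun i : Fin (orderOf g) ↦ g ^ (i : ℕ)) ≤
      LinearMap.eqLocus (antipode k ^ 2) 1 := by
    rw [Submodule.span_le]
    rintro _ ⟨i, rfl⟩
    exact (hg.pow (n := i)).antipode_antipode
  have hone : eigenRestrict (commute_antipode_sq_rightHit α).symm 1 = 1 :=
    LinearMap.ext fun x ↦ Subtype.ext (hS (hspan ▸ x.2))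
  have htr := trace_eigenRestrict_one_eq_zero (isOfFinOrder_rightHit α)
    (commute_antipode_sq_rightHit α).symm (trace_antipode_sq_mul_rightHit_pow hss α)
  rw [hone, trace_one, hspan, finrank_span_pow_of_isGroupLikeElem hg, Nat.cast_eq_zero] at htr
  exact (isOfFinOrder_of_isGroupLikeElem hg).orderOf_pos.ne' htr

namespace IntegralPair

variable (D : IntegralPair k H)

lemma orderOf_ne_one (hss : ¬ IsSemisimpleRing H) (hodd : Odd (Module.finrank k H)) :
    orderOf D.distinguishedGroupLike ≠ 1 ∨
      orderOf (rightHit D.distinguishedCharacter.toLinearMap) ≠ 1 := by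
  by_contra! h
  obtain ⟨a, b, hdim, htr⟩ := exists_trace_eq_sub_of_sq_eq_one
    (D.antipode_sq_pow_eq_one (n := 1) h.1.dvd h.2.dvd)
  rw [trace_antipode_sq hss, eq_comm, sub_eq_zero, Nat.cast_inj] at htr
  rw [hdim, htr, ← two_mul] at hodd
  exact Nat.not_odd_iff_even.2 (even_two_mul b) hodd

lemma trace_antipode_sq_pow (hss : ¬ IsSemisimpleRing H) {r s : ℕ} (hr : r.Prime)
    (hrodd : Odd r) (hs : Odd s) (hdim : Module.finrank k H = r * s)
    (hg : orderOf D.distinguishedGroupLike ∣ r)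
    (hα : orderOf (rightHit D.distinguishedCharacter.toLinearMap) ∣ r) :
    (antipode k ^ 2 : Module.End k H) ^ (2 * r) = 1 ∧ r ≤ s ∧
      ∃ d : ℤ, Odd d ∧ trace k H ((antipode k ^ 2) ^ r) = (r : k) ^ 2 * d := by
  have hgl := D.isGroupLikeElem_distinguishedGroupLike
  have hσ := D.antipode_sq_pow_eq_one hg hα
  refine ⟨hσ, ?_⟩
  rcases D.orderOf_ne_one hss (hdim ▸ hrodd.mul hs) with hne | hne
  · have hord := (orderOf_mulRight (k := k) D.distinguishedGroupLike).trans
      ((hr.eq_one_or_self_of_dvd _ hg).resolve_left hne)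
    exact le_and_exists_trace_pow_eq_sq_mul_odd hr hrodd hs hdim
      (commute_antipode_sq_mulRight hgl).symm hσ (orderOf_dvd_iff_pow_eq_one.1 hord.dvd)
      (fun j hj0 hj ↦ trace_pow_eq_zero_of_lt_orderOf (trace_sq_mulRight_pow hgl) hj0
        (hord.symm ▸ hj))
      (trace_antipode_sq_mul_mulRight_pow hss _) (trace_sq_antipode_sq_pow_mul_mulRight hgl r)
  · have hord := (hr.eq_one_or_self_of_dvd _ hα).resolve_left hne
    exact le_and_exists_trace_pow_eq_sq_mul_odd hr hrodd hs hdim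
      (commute_antipode_sq_rightHit _).symm hσ (orderOf_dvd_iff_pow_eq_one.1 hord.dvd)
      (fun j hj0 hj ↦ trace_pow_eq_zero_of_lt_orderOf (trace_sq_rightHit_pow _) hj0
        (hord.symm ▸ hj))
      (trace_antipode_sq_mul_rightHit_pow hss _) (trace_sq_antipode_sq_pow_mul_rightHit _ r)

lemma exists_prime_orderOf_dvd (hss : ¬ IsSemisimpleRing H) {p q : ℕ} (hp : p.Prime)
    (hq : q.Prime) (hdim : Module.finrank k H = p * q) :
    (orderOf D.distinguishedGroupLike ∣ p ∧
      orderOf (rightHit D.distinguishedCharacter.toLinearMap) ∣ p) ∨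
    (orderOf D.distinguishedGroupLike ∣ q ∧
      orderOf (rightHit D.distinguishedCharacter.toLinearMap) ∣ q) := by
  have hgl := D.isGroupLikeElem_distinguishedGroupLike
  have hne {g : H} (hg : IsGroupLikeElem k g) {α : H →ₐ[k] k} (hαg : α g = 1) :
      orderOf g * orderOf (rightHit α.toLinearMap) ≠ p * q :=
    hdim ▸ mt (isSemisimpleRing_of_orderOf_mul_orderOf hg hαg) hss
  refine dvd_and_dvd_of_dvd_prime_mul_prime hp hq (hdim ▸ orderOf_dvd_finrank hgl)
    (hdim ▸ orderOf_rightHit_dvd_finrank _) ?_ ?_ fun hcop ↦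
      hne hgl (algHom_apply_eq_one_of_coprime hgl _ hcop)
  · simpa [rightHit_counit] using hne hgl (α := Bialgebra.counitAlgHom k H) hgl.counit_eq_one
  · simpa using hne .one (map_one D.distinguishedCharacter)

end IntegralPair

end Main

end HopfPQ

/-- Theorem 6.4. If `H` is a non-semisimple Hopf algebra of dimension `p q`,
where `p ≤ q` are odd primes, over an algebraically closed field of characteristic `0`, then
`S^{4p} = id` and `Tr(S^{2p}) = p² d` for some odd integer `d`. -/
theorem stmt3 (k : Type*) [Field k] [IsAlgClosed k] [CharZero k]
    (p q : ℕ) (hp : p.Prime) (hq : q.Prime) (hpodd : Odd p) (hqodd : Odd q) (hpq : p ≤ q)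
    (H : Type*) [Ring H] [HopfAlgebra k H] [FiniteDimensional k H]
    (hdim : Module.finrank k H = p * q) (hss : ¬ IsSemisimpleRing H) :
    (HopfAlgebra.antipode (R := k) (A := H) : Module.End k H) ^ (4 * p) = 1 ∧
      ∃ d : ℤ, Odd d ∧
        LinearMap.trace k H ((HopfAlgebra.antipode (R := k) (A := H) : Module.End k H) ^ (2 * p))
          = (p : k) ^ 2 * (d : k) := by
  obtain ⟨D⟩ := HopfPQ.nonempty_integralPair k H
  rw [show 4 * p = 2 * (2 * p) by ring, pow_mul _ 2 (2 * p), pow_mul (HopfAlgebra.antipode k) 2 p]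
  rcases D.exists_prime_orderOf_dvd hss hp hq hdim with ⟨hg, hα⟩ | ⟨hg, hα⟩
  · obtain ⟨hS, -, htr⟩ := D.trace_antipode_sq_pow hss hp hpodd hqodd hdim hg hα
    exact ⟨hS, htr⟩
  · obtain ⟨hS, hqp, htr⟩ := D.trace_antipode_sq_pow hss hq hqodd hpodd
      (hdim.trans (mul_comm p q)) hg hα
    obtain rfl : p = q := le_antisymm hpq hqp
    exact ⟨hS, htr⟩
end

section
/- Let p be an odd prime and H a non-semisimple Hopf algebra over k of dimension p² with antipode S. Then S^{2p} = id_H, and the order of S² (the smallest positive integer m with S^{2m} = id_H) equals p. -/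
open scoped TensorProduct

/-!
Let `t` be a nonzero left integral of `H` and `l` the right integral of `H*` with `l t = 1`. Since
`(t, l)` is a Frobenius pair, Radford's formula expresses `S⁴` through conjugation by the modular
element `g` and the two hit actions of the modular character `α`, and `tr (x ↦ S² x · z)` is a
multiple of `ε(t)`, which vanishes by Maschke's theorem as `H` is not semisimple.

A group-like element acts on `H` by right multiplication, a character acts on `H*` by convolution,
and both situations have the same shape: the powers of an operator `R` move `1` to linearly
independent vectors, `tr (S² R ^ m) = 0` for all `m`, and `(tr R)² = dim H · tr R` by the Galois map
`x ⊗ y ↦ ∑ x y₁ ⊗ y₂`. The order of `R` divides `p`: were it `p²`, the orbit of `1` would be a basis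
fixed by `S²`, and `S² = 1` has nonzero trace. Hence `S ^ (4p) = 1` by Radford's formula.

If `R ≠ 1`, its eigenspaces have dimension `p`. On each of them `S²` is the product of the
involution `σ = S ^ (2p)` and an operator of order dividing `p`, so `tr S² = 0` and Galois
conjugation of the `p`-th roots of unity make `tr σ` divisible by `p`. Thus `σ = ±1` there, with
sign `+` because `σ` fixes the nonzero projection of `1`. If instead `g` and `α` are both trivial,
then `S²` is an involution of trace zero, which is impossible in the odd dimension `p²`.
-/

namespace FiniteDimHopf

open Coalgebra HopfAlgebra

section IsLinearMap

variable {R M N P Q A : Type*} [CommSemiring R] [AddCommMonoid M] [Module R M]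
  [AddCommMonoid N] [Module R N] [AddCommMonoid P] [Module R P] [AddCommMonoid Q] [Module R Q]
  [Semiring A] [Algebra R A]

attribute [fun_prop] IsLinearMap

@[fun_prop]
lemma isLinearMap_id : IsLinearMap R fun x : M => x := ⟨fun _ _ => rfl, fun _ _ => rfl⟩

@[fun_prop]
lemma isLinearMap_comp {f : N → P} {g : M → N} (hf : IsLinearMap R f) (hg : IsLinearMap R g) :
    IsLinearMap R fun x => f (g x) :=
  ⟨fun x y => by rw [hg.map_add, hf.map_add], fun c x => by rw [hg.map_smul, hf.map_smul]⟩

@[fun_prop]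
lemma isLinearMap_coe {F : Type*} [FunLike F M N] [LinearMapClass F R M N] (f : F) :
    IsLinearMap R fun x => f x := ⟨map_add f, map_smul f⟩

@[fun_prop]
lemma isLinearMap_coe_apply_const {f : M → N →ₗ[R] P} (hf : IsLinearMap R f) (y : N) :
    IsLinearMap R fun x => f x y :=
  isLinearMap_comp (LinearMap.applyₗ (R := R) y).isLinear hf

@[fun_prop]
lemma isLinearMap_const_smul {f : M → N} (hf : IsLinearMap R f) (c : R) :
    IsLinearMap R fun x => c • f x :=
  isLinearMap_comp (LinearMap.lsmul R N c).isLinear hf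

@[fun_prop]
lemma isLinearMap_smul_const {f : M → R} (hf : IsLinearMap R f) (v : N) :
    IsLinearMap R fun x => f x • v :=
  isLinearMap_comp (LinearMap.toSpanSingleton R N v).isLinear hf

@[fun_prop]
lemma isLinearMap_mul_const {f : M → A} (hf : IsLinearMap R f) (a : A) :
    IsLinearMap R fun x => f x * a :=
  isLinearMap_comp (LinearMap.mulRight R a).isLinear hf

@[fun_prop]
lemma isLinearMap_const_mul {f : M → A} (hf : IsLinearMap R f) (a : A) :
    IsLinearMap R fun x => a * f x :=
  isLinearMap_comp (LinearMap.mulLeft R a).isLinear hf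

@[fun_prop]
lemma isLinearMap_mulLeft : IsLinearMap R (LinearMap.mulLeft R (A := A)) :=
  (LinearMap.mul R A).isLinear

@[fun_prop]
lemma isLinearMap_tmul_const {f : M → N} (hf : IsLinearMap R f) (v : P) :
    IsLinearMap R fun x => f x ⊗ₜ[R] v :=
  isLinearMap_comp (f := fun w => w ⊗ₜ[R] v) ((TensorProduct.mk R N P).flip v).isLinear hf

@[fun_prop]
lemma isLinearMap_const_tmul {f : M → N} (hf : IsLinearMap R f) (v : P) :
    IsLinearMap R fun x => v ⊗ₜ[R] f x :=
  isLinearMap_comp (TensorProduct.mk R P N v).isLinear hf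

lemma exists_bilinearMap {F : M → N → P} (h₁ : ∀ y, IsLinearMap R fun x => F x y)
    (h₂ : ∀ x, IsLinearMap R (F x)) : ∃ B : M →ₗ[R] N →ₗ[R] P, F = fun x y => B x y :=
  ⟨LinearMap.mk₂ R F (fun x y z => (h₁ z).map_add x y) (fun c x y => (h₁ y).map_smul c x)
    (fun x => (h₂ x).map_add) (fun c x => (h₂ x).map_smul c), rfl⟩

lemma exists_trilinearMap {F : M → N → P → Q} (h₁ : ∀ y z, IsLinearMap R fun x => F x y z)
    (h₂ : ∀ x z, IsLinearMap R fun y => F x y z) (h₃ : ∀ x y, IsLinearMap R (F x y)) :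
    ∃ T : M →ₗ[R] N →ₗ[R] P →ₗ[R] Q, F = fun x y z => T x y z :=
  ⟨LinearMap.mk₂ R (fun x y => (h₃ x y).mk' _)
    (fun x x' y => LinearMap.ext fun z => (h₁ y z).map_add x x')
    (fun c x y => LinearMap.ext fun z => (h₁ y z).map_smul c x)
    (fun x y y' => LinearMap.ext fun z => (h₂ x z).map_add y y')
    (fun c x y => LinearMap.ext fun z => (h₂ x z).map_smul c y), rfl⟩

end IsLinearMap

section Coalgebra

variable (R : Type*) {M N V : Type*} [CommSemiring R] [AddCommMonoid M] [Module R M]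
  [Coalgebra R M] [AddCommMonoid N] [Module R N] [AddCommMonoid V]

/-- The Sweedler sum `∑ F a₁ a₂`, where `Δ a = ∑ a₁ ⊗ a₂`. It is computed from an arbitrarily
chosen representation of `Δ a`, hence is meaningful only for bilinear `F`. -/
noncomputable def sweedler (a : M) (F : M → M → V) : V :=
  ∑ i ∈ (ℛ R a).index, F ((ℛ R a).left i) ((ℛ R a).right i)

variable {R}

lemma map_sweedler {W F : Type*} [AddCommMonoid W] [FunLike F V W] [AddMonoidHomClass F V W]
    (f : F) (a : M) (G : M → M → V) :
    f (sweedler R a G) = sweedler R a fun x y => f (G x y) := map_sum f _ _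

lemma sweedler_comm (a : M) {N : Type*} [AddCommMonoid N] [Module R N] [Coalgebra R N] (b : N)
    (F : M → M → N → N → V) :
    sweedler R a (fun x y => sweedler R b (F x y)) =
      sweedler R b fun z w => sweedler R a fun x y => F x y z w :=
  Finset.sum_comm

lemma sum_sweedler {ι : Type*} (s : Finset ι) (a : M) (F : ι → M → M → V) :
    ∑ i ∈ s, sweedler R a (F i) = sweedler R a fun x y => ∑ i ∈ s, F i x y :=
  Finset.sum_comm

lemma sweedler_tmul (a : M) : sweedler R a (fun x y => x ⊗ₜ[R] y) = comul a := (ℛ R a).eq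

lemma sweedler_mul {A : Type*} [Semiring A] (a : M) (F : M → M → A) (c : A) :
    sweedler R a F * c = sweedler R a fun x y => F x y * c := Finset.sum_mul _ _ _

lemma mul_sweedler {A : Type*} [Semiring A] (a : M) (F : M → M → A) (c : A) :
    c * sweedler R a F = sweedler R a fun x y => c * F x y := Finset.mul_sum _ _ _

variable [Module R V]

lemma smul_sweedler (c : R) (a : M) (F : M → M → V) :
    c • sweedler R a F = sweedler R a fun x y => c • F x y := Finset.smul_sum

lemma sweedler_eq_lift (a : M) (B : M →ₗ[R] M →ₗ[R] V) :
    sweedler R a (fun x y => B x y) = TensorProduct.lift B (comul a) := by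
  simp only [sweedler, ← (ℛ R a).eq, map_sum, TensorProduct.lift.tmul]

@[fun_prop]
lemma isLinearMap_sweedler {F : M → M → V} (h₁ : ∀ y, IsLinearMap R fun x => F x y)
    (h₂ : ∀ x, IsLinearMap R (F x)) : IsLinearMap R fun a => sweedler R a F := by
  obtain ⟨B, rfl⟩ := exists_bilinearMap h₁ h₂
  simp only [sweedler_eq_lift]
  fun_prop

lemma sweedler_smul (c : R) (a : M) {F : M → M → V}
    (h₁ : ∀ y, IsLinearMap R fun x => F x y := by fun_prop)
    (h₂ : ∀ x, IsLinearMap R (F x) := by fun_prop) :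
    sweedler R (c • a) F = c • sweedler R a F :=
  (isLinearMap_sweedler h₁ h₂).map_smul c a

@[fun_prop]
lemma isLinearMap_sweedler_apply (a : M) {F : N → M → M → V}
    (h : ∀ x y, IsLinearMap R fun z => F z x y) :
    IsLinearMap R fun z => sweedler R a (F z) where
  map_add z w := by
    simp only [sweedler, (h _ _).map_add, Finset.sum_add_distrib]
  map_smul c z := by
    simp only [sweedler, (h _ _).map_smul, Finset.smul_sum]

lemma sweedler_assoc (a : M) {F : M → M → M → V}
    (h₁ : ∀ y z, IsLinearMap R fun x => F x y z := by fun_prop)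
    (h₂ : ∀ x z, IsLinearMap R fun y => F x y z := by fun_prop)
    (h₃ : ∀ x y, IsLinearMap R fun z => F x y z := by fun_prop) :
    sweedler R a (fun x y => sweedler R x fun x₁ x₂ => F x₁ x₂ y) =
      sweedler R a fun x y => sweedler R y (F x) := by
  obtain ⟨T, rfl⟩ := exists_trilinearMap h₁ h₂ h₃
  have key := congrArg (TensorProduct.lift (TensorProduct.uncurry (.id R) M M V ∘ₗ T))
    (sum_tmul_tmul_eq (ℛ R a) (fun _ => ℛ R _) (fun _ => ℛ R _))
  simpa only [map_sum, TensorProduct.lift.tmul, LinearMap.comp_apply, TensorProduct.uncurry_apply,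
    sweedler] using key

lemma sweedler_counit_smul_right (a : M) {F : M → V} (h : IsLinearMap R F := by fun_prop) :
    sweedler R a (fun x y => counit (R := R) x • F y) = F a := by
  have key := congrArg (h.mk' F) (sum_counit_smul (ℛ R a))
  simpa only [map_sum, map_smul, IsLinearMap.mk'_apply, sweedler] using key

lemma sweedler_counit_smul_left (a : M) {F : M → V} (h : IsLinearMap R F := by fun_prop) :
    sweedler R a (fun x y => counit (R := R) y • F x) = F a := by
  have key := congrArg (TensorProduct.lift ((LinearMap.lsmul R V).flip ∘ₗ h.mk' F))
    (sum_tmul_counit_eq (ℛ R a))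
  simp only [map_sum, TensorProduct.lift.tmul] at key
  exact key.trans (one_smul R _)

lemma sweedler_groupLike {g : M} (hg : IsGroupLikeElem R g) {F : M → M → V}
    (h₁ : ∀ y, IsLinearMap R fun x => F x y := by fun_prop)
    (h₂ : ∀ x, IsLinearMap R (F x) := by fun_prop) : sweedler R g F = F g g := by
  obtain ⟨B, rfl⟩ := exists_bilinearMap h₁ h₂
  rw [sweedler_eq_lift, hg.comul_eq_tmul_self, TensorProduct.lift.tmul]

end Coalgebra

section HopfAlgebra

variable {R H V : Type*} [CommSemiring R] [Semiring H]

lemma sweedler_product [Bialgebra R H] [AddCommMonoid V] [Module R V] (a b : H) {F : H → H → V}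
    (h₁ : ∀ y, IsLinearMap R fun x => F x y := by fun_prop)
    (h₂ : ∀ x, IsLinearMap R (F x) := by fun_prop) :
    sweedler R (a * b) F =
      sweedler R a fun a₁ a₂ => sweedler R b fun b₁ b₂ => F (a₁ * b₁) (a₂ * b₂) := by
  obtain ⟨B, rfl⟩ := exists_bilinearMap h₁ h₂
  rw [sweedler_eq_lift, Bialgebra.comul_mul, ← (ℛ R a).eq, ← (ℛ R b).eq, Finset.sum_mul_sum]
  simp only [map_sum, Algebra.TensorProduct.tmul_mul_tmul, TensorProduct.lift.tmul, sweedler]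

variable [HopfAlgebra R H] [AddCommMonoid V] [Module R V]

lemma sweedler_antipode_mul (a : H) {F : H → V} (h : IsLinearMap R F := by fun_prop) :
    sweedler R a (fun x y => F (antipode R x * y)) = counit (R := R) a • F 1 := by
  have key := congrArg (h.mk' F) (sum_antipode_mul_eq_smul (ℛ R a))
  simpa only [map_sum, map_smul, IsLinearMap.mk'_apply, sweedler] using key

lemma sweedler_mul_antipode (a : H) {F : H → V} (h : IsLinearMap R F := by fun_prop) :
    sweedler R a (fun x y => F (x * antipode R y)) = counit (R := R) a • F 1 := by
  have key := congrArg (h.mk' F) (sum_mul_antipode_eq_smul (ℛ R a))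
  simpa only [map_sum, map_smul, IsLinearMap.mk'_apply, sweedler] using key

section cancel

variable (a : H) {F : H → H → V} (h₁ : ∀ y, IsLinearMap R fun x => F x y := by fun_prop)
    (h₂ : ∀ x, IsLinearMap R (F x) := by fun_prop)
include h₁ h₂

lemma sweedler_right_antipode_mul :
    sweedler R a (fun x y => sweedler R y fun y₁ y₂ => F x (antipode R y₁ * y₂)) = F a 1 := by
  simp only [sweedler_antipode_mul _ (h₂ _), sweedler_counit_smul_left a (h₁ 1)]

lemma sweedler_right_mul_antipode :
    sweedler R a (fun x y => sweedler R y fun y₁ y₂ => F x (y₁ * antipode R y₂)) = F a 1 := by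
  simp only [sweedler_mul_antipode _ (h₂ _), sweedler_counit_smul_left a (h₁ 1)]

lemma sweedler_left_antipode_mul :
    sweedler R a (fun x y => sweedler R x fun x₁ x₂ => F (antipode R x₁ * x₂) y) = F 1 a := by
  simp only [sweedler_antipode_mul _ (h₁ _), sweedler_counit_smul_right a (h₂ 1)]

lemma sweedler_left_mul_antipode :
    sweedler R a (fun x y => sweedler R x fun x₁ x₂ => F (x₁ * antipode R x₂) y) = F 1 a := by
  simp only [sweedler_mul_antipode _ (h₁ _), sweedler_counit_smul_right a (h₂ 1)]

end cancel

lemma comul_antipode (a : H) :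
    comul (antipode R a) = sweedler R a fun x y => antipode R y ⊗ₜ[R] antipode R x := by
  have hG : IsLinearMap R fun a : H =>
      sweedler R a fun x y => antipode R y ⊗ₜ[R] antipode R x := by fun_prop
  have left_inv : WithConv.toConv (hG.mk' _) * WithConv.toConv (comul (R := R)) = 1 := by
    ext a
    rw [(ℛ R a).convMul_apply, LinearMap.convOne_apply]
    change sweedler R a (fun x y => sweedler R x (fun x₁ x₂ => antipode R x₂ ⊗ₜ[R] antipode R x₁) *
      comul y) = _
    have inner (x y : H) : sweedler R y (fun y₁ y₂ => (antipode R y₁ ⊗ₜ[R] antipode R x) *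
        comul (R := R) y₂) = 1 ⊗ₜ[R] (antipode R x * y) := by
      simp only [← sweedler_tmul, mul_sweedler, Algebra.TensorProduct.tmul_mul_tmul]
      rw [← sweedler_assoc y (F := fun y₁ z₁ z₂ =>
        (antipode R y₁ * z₁) ⊗ₜ[R] (antipode R x * z₂))]
      exact sweedler_left_antipode_mul y (F := fun u v => u ⊗ₜ[R] (antipode R x * v))
    simp only [sweedler_mul]
    rw [sweedler_assoc a (F := fun x₁ x₂ y => (antipode R x₂ ⊗ₜ[R] antipode R x₁) * comul y)]
    simp only [inner]
    rw [sweedler_antipode_mul a (F := fun u => (1 : H) ⊗ₜ[R] u), Algebra.algebraMap_eq_smul_one]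
    rfl
  exact LinearMap.congr_fun (WithConv.toConv_injective
    (left_inv_eq_right_inv left_inv LinearMap.comul_right_inv).symm) a

lemma sweedler_antipode (a : H) {F : H → H → V}
    (h₁ : ∀ y, IsLinearMap R fun x => F x y := by fun_prop)
    (h₂ : ∀ x, IsLinearMap R (F x) := by fun_prop) :
    sweedler R (antipode R a) F = sweedler R a fun x y => F (antipode R y) (antipode R x) := by
  obtain ⟨B, rfl⟩ := exists_bilinearMap h₁ h₂
  simp only [sweedler_eq_lift, comul_antipode, map_sweedler, TensorProduct.lift.tmul]

end HopfAlgebra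

section Hits

variable {R M : Type*} [CommSemiring R] [AddCommMonoid M] [Module R M] [Coalgebra R M]

/-- The right hit action `a ↼ f = ∑ f(a₁) a₂` of the dual of a coalgebra. -/
noncomputable def rightHit (f : Module.Dual R M) : Module.End R M :=
  IsLinearMap.mk' (fun a => sweedler R a fun x y => f x • y) (by fun_prop)

/-- The left hit action `f ⇀ a = ∑ f(a₂) a₁` of the dual of a coalgebra. -/
noncomputable def leftHit (f : Module.Dual R M) : Module.End R M :=
  IsLinearMap.mk' (fun a => sweedler R a fun x y => f y • x) (by fun_prop)

lemma rightHit_apply (f : Module.Dual R M) (a : M) :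
    rightHit f a = sweedler R a fun x y => f x • y := rfl

lemma leftHit_apply (f : Module.Dual R M) (a : M) :
    leftHit f a = sweedler R a fun x y => f y • x := rfl

@[fun_prop]
lemma isLinearMap_rightHit : IsLinearMap R (rightHit (R := R) (M := M)) where
  map_add f g := LinearMap.ext fun a =>
    (by fun_prop : IsLinearMap R fun f : Module.Dual R M =>
      sweedler R a fun x y => f x • y).map_add f g
  map_smul c f := LinearMap.ext fun a =>
    (by fun_prop : IsLinearMap R fun f : Module.Dual R M =>
      sweedler R a fun x y => f x • y).map_smul c f

lemma conv_apply (f g : Module.Dual R M) (a : M) :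
    conv f g a = sweedler R a fun x y => f x * g y := by
  simp only [conv, LinearMap.comp_apply, ← sweedler_tmul, map_sweedler, TensorProduct.map_tmul,
    LinearMap.mul'_apply]

lemma conv_assoc (f g h : Module.Dual R M) : conv (conv f g) h = conv f (conv g h) := by
  ext a
  simp only [conv_apply, sweedler_mul, mul_sweedler, ← mul_assoc]
  exact sweedler_assoc a

lemma conv_smul (f g : Module.Dual R M) (c : R) : conv f (c • g) = c • conv f g := by
  simp only [conv, TensorProduct.map_smul_right, LinearMap.smul_comp, LinearMap.comp_smul]

lemma apply_rightHit (f g : Module.Dual R M) (a : M) : f (rightHit g a) = conv g f a := by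
  simp only [conv_apply, rightHit_apply, map_sweedler, map_smul, smul_eq_mul]

lemma apply_leftHit (f g : Module.Dual R M) (a : M) : f (leftHit g a) = conv f g a := by
  simp only [conv_apply, leftHit_apply, map_sweedler, map_smul, smul_eq_mul, mul_comm]

end Hits

section AntipodeSq

variable (R H : Type*) [CommSemiring R] [Semiring H] [HopfAlgebra R H]

/-- The square `S²` of the antipode. -/
noncomputable def antipodeSq : Module.End R H := antipode R ^ 2

variable {H}

lemma antipodeSq_apply (a : H) : antipodeSq R H a = antipode R (antipode R a) := rfl

lemma antipodeSq_mul (a b : H) :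
    antipodeSq R H (a * b) = antipodeSq R H a * antipodeSq R H b := by
  simp only [antipodeSq_apply, antipode_mul_antidistrib]

variable {R} {V : Type*} [AddCommMonoid V] [Module R V]

lemma sweedler_antipodeSq (a : H) {F : H → H → V}
    (h₁ : ∀ y, IsLinearMap R fun x => F x y := by fun_prop)
    (h₂ : ∀ x, IsLinearMap R (F x) := by fun_prop) :
    sweedler R (antipodeSq R H a) F =
      sweedler R a fun x y => F (antipodeSq R H x) (antipodeSq R H y) := by
  rw [antipodeSq_apply, sweedler_antipode _ h₁ h₂, sweedler_antipode]
  rfl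

end AntipodeSq

section TraceForm

variable {k H : Type*} [CommRing k] [Ring H] [HopfAlgebra k H]

lemma antipodeSq_rightHit_comp_mulLeft (f : Module.Dual k H) (a y : H) :
    antipodeSq k H (rightHit (f ∘ₗ LinearMap.mulLeft k a) y) =
      sweedler k a fun a₁ a₂ => antipode k a₂ * antipodeSq k H (rightHit f (a₁ * y)) := by
  have rightHit_mul (a₁ : H) : rightHit f (a₁ * y) =
      sweedler k a₁ fun u v => sweedler k y fun y₁ y₂ => f (u * y₁) • (v * y₂) := by
    rw [rightHit_apply, sweedler_product]
  have antipode_cancel (v w z : H) :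
      antipode k w * (antipodeSq k H v * z) = antipode k (antipode k v * w) * z := by
    rw [antipode_mul_antidistrib, antipodeSq_apply, mul_assoc]
  simp only [rightHit_mul, map_sweedler, mul_sweedler, map_smul, antipodeSq_mul, mul_smul_comm]
  rw [sweedler_assoc a (F := fun u v w => sweedler k y fun y₁ y₂ =>
    f (u * y₁) • (antipode k w * (antipodeSq k H v * antipodeSq k H y₂)))]
  simp only [antipode_cancel]
  rw [sweedler_right_antipode_mul a (F := fun u v => sweedler k y fun y₁ y₂ =>
    f (u * y₁) • (antipode k v * antipodeSq k H y₂))]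
  simp only [rightHit_apply, map_sweedler, map_smul, LinearMap.comp_apply, LinearMap.mulLeft_apply,
    antipode_one, one_mul]

/-- The bilinear form `(f, x) ↦ tr (y ↦ ∑ f(y₁) S²(y₂) x)` on `H* × H`. For fixed `x` it is
evaluation at a left integral. -/
noncomputable def traceForm (f : Module.Dual k H) (x : H) : k :=
  LinearMap.trace k H (LinearMap.mulRight k x * antipodeSq k H * rightHit f)

lemma traceForm_comp_mulLeft (f : Module.Dual k H) (a x : H) :
    traceForm (f ∘ₗ LinearMap.mulLeft k a) x = counit (R := k) a • traceForm f x := by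
  set T := LinearMap.mulRight k x * antipodeSq k H * rightHit f with hT
  have operator_eq :
      LinearMap.mulRight k x * antipodeSq k H * rightHit (f ∘ₗ LinearMap.mulLeft k a) =
        sweedler k a fun a₁ a₂ => LinearMap.mulLeft k (antipode k a₂) * T *
          LinearMap.mulLeft k a₁ := by
    ext y
    simp only [Module.End.mul_apply, antipodeSq_rightHit_comp_mulLeft, hT, sweedler,
      LinearMap.sum_apply, map_sum, LinearMap.mulLeft_apply, LinearMap.mulRight_apply, mul_assoc]
  have trace_cycle (a₁ a₂ : H) : LinearMap.trace k H
      (LinearMap.mulLeft k (antipode k a₂) * T * LinearMap.mulLeft k a₁) =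
        LinearMap.trace k H (LinearMap.mulLeft k (a₁ * antipode k a₂) * T) := by
    rw [LinearMap.trace_mul_comm, ← mul_assoc, LinearMap.mulLeft_mul]
    rfl
  rw [traceForm, operator_eq, map_sweedler]
  simp only [trace_cycle]
  rw [sweedler_mul_antipode a (F := fun b => LinearMap.trace k H (LinearMap.mulLeft k b * T)),
    LinearMap.mulLeft_one]
  rfl

lemma sum_mulRight_mul_rightHit_coord {ι : Type*} [Fintype ι] (b : Module.Basis ι k H) :
    ∑ i, LinearMap.mulRight k (antipode k (b i)) * antipodeSq k H * rightHit (b.coord i) =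
      (counit (R := k)).smulRight (1 : H) := by
  ext y
  have expand (u v : H) : ∑ i, b.coord i u • (antipodeSq k H v * antipode k (b i)) =
      antipode k (u * antipode k v) := by
    conv_rhs => rw [← b.sum_repr u]
    simp only [Finset.sum_mul, map_sum, smul_mul_assoc, map_smul, antipode_mul_antidistrib,
      Module.Basis.coord_apply, antipodeSq_apply]
  simp only [LinearMap.sum_apply, Module.End.mul_apply, rightHit_apply, map_sweedler, map_smul,
    sum_sweedler, LinearMap.mulRight_apply, expand]
  exact sweedler_mul_antipode y (F := fun z => antipode k z) |>.trans (by rw [antipode_one]; rfl)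

end TraceForm

section LeftIntegral

variable {k H : Type*} [Field k] [Ring H] [HopfAlgebra k H] [FiniteDimensional k H]

lemma exists_traceForm_ne_zero : ∃ (f : Module.Dual k H) (x : H), traceForm f x ≠ 0 := by
  by_contra! h0
  let b := Module.finBasis k H
  have trace_eq_one : ∑ i, traceForm (b.coord i) (antipode k (b i)) = 1 := by
    simp only [traceForm]
    rw [← map_sum, sum_mulRight_mul_rightHit_coord, LinearMap.trace_smulRight,
      Bialgebra.counit_one]
  simp only [h0, Finset.sum_const_zero, zero_ne_one] at trace_eq_one

lemma exists_isLeftIntegral_ne_zero : ∃ t : H, t ≠ 0 ∧ IsLeftIntegral k t := by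
  obtain ⟨f, x, hfx⟩ := exists_traceForm_ne_zero (k := k) (H := H)
  have hlin : IsLinearMap k fun f : Module.Dual k H => traceForm f x := by
    unfold traceForm
    fun_prop
  obtain ⟨t, ht⟩ := (Module.evalEquiv k H).surjective (hlin.mk' _)
  have eval_t (f : Module.Dual k H) : f t = traceForm f x := LinearMap.congr_fun ht f
  refine ⟨t, fun h => hfx (by rw [← eval_t, h, map_zero]), fun a => ?_⟩
  rw [← sub_eq_zero, ← Module.forall_dual_apply_eq_zero_iff k]
  intro f
  rw [map_sub, sub_eq_zero, map_smul, eval_t, ← traceForm_comp_mulLeft, ← eval_t]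
  rfl

end LeftIntegral

section FrobeniusMap

variable {k H V : Type*} [Field k] [Ring H] [HopfAlgebra k H] [AddCommGroup V] [Module k V]
  {t : H}

lemma sweedler_mul_antipode_of_isLeftIntegral (ht : IsLeftIntegral k t) (a : H) {F : H → H → V}
    (h₁ : ∀ y, IsLinearMap k fun x => F x y := by fun_prop)
    (h₂ : ∀ x, IsLinearMap k (F x) := by fun_prop) :
    sweedler k t (fun x y => F (a * x) (antipode k y)) =
      sweedler k t fun x y => F x (antipode k y * a) := by
  obtain ⟨B, rfl⟩ := exists_bilinearMap h₁ h₂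
  have counit_expand (u w : H) : sweedler k u (fun u₁ u₂ => sweedler k t fun x y =>
      B (u₁ * x) (antipode k y * (antipode k u₂ * w))) =
        counit (R := k) u • sweedler k t fun x y => B x (antipode k y * w) := by
    rw [← sweedler_smul _ _ (F := fun x y => B x (antipode k y * w)), ← ht, sweedler_product]
    simp only [antipode_mul_antidistrib, mul_assoc]
  calc sweedler k t (fun x y => B (a * x) (antipode k y))
    _ = sweedler k a fun u v => sweedler k v fun v₁ v₂ => sweedler k t fun x y =>
          B (u * x) (antipode k y * (antipode k v₁ * v₂)) := by
      rw [sweedler_right_antipode_mul a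
        (F := fun u v => sweedler k t fun x y => B (u * x) (antipode k y * v))]
      simp only [mul_one]
    _ = sweedler k a fun u v => counit (R := k) u •
          sweedler k t fun x y => B x (antipode k y * v) := by
      rw [← sweedler_assoc a (F := fun u v w => sweedler k t fun x y =>
        B (u * x) (antipode k y * (antipode k v * w)))]
      simp only [counit_expand]
    _ = sweedler k t fun x y => B x (antipode k y * a) :=
      sweedler_counit_smul_right a (F := fun v => sweedler k t fun x y => B x (antipode k y * v))

/-- The map `φ ↦ ∑ φ(S(t₂)) t₁` from the dual, an isomorphism when `t` is a nonzero left
integral. -/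
noncomputable def frobeniusMap (t : H) : Module.Dual k H →ₗ[k] H :=
  IsLinearMap.mk' (fun φ => sweedler k t fun x y => φ (antipode k y) • x) (by fun_prop)

lemma frobeniusMap_apply (t : H) (φ : Module.Dual k H) :
    frobeniusMap t φ = sweedler k t fun x y => φ (antipode k y) • x := rfl

lemma mul_frobeniusMap (ht : IsLeftIntegral k t) (φ : Module.Dual k H) (a : H) :
    a * frobeniusMap t φ = frobeniusMap t (φ ∘ₗ LinearMap.mulRight k a) := by
  simp only [frobeniusMap_apply, mul_sweedler, mul_smul_comm]
  exact sweedler_mul_antipode_of_isLeftIntegral ht a (F := fun x y => φ y • x)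

lemma sweedler_eq_sum_leftHit {ι : Type*} [Fintype ι] (b : Module.Basis ι k H) (u : H)
    {F : H → H → V} (h₁ : ∀ y, IsLinearMap k fun x => F x y := by fun_prop)
    (h₂ : ∀ x, IsLinearMap k (F x) := by fun_prop) :
    sweedler k u F = ∑ i, F (leftHit (b.coord i) u) (b i) := by
  obtain ⟨B, rfl⟩ := exists_bilinearMap h₁ h₂
  have expand (x y : H) : B x y = ∑ i, b.coord i y • B x (b i) := by
    conv_lhs => rw [← b.sum_repr y]
    simp only [map_sum, map_smul, Module.Basis.coord_apply]
  calc sweedler k u (fun x y => B x y)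
    _ = sweedler k u fun x y => ∑ i, b.coord i y • B x (b i) :=
      congrArg (sweedler k u) (funext₂ expand)
    _ = ∑ i, B (leftHit (b.coord i) u) (b i) := by
      simp only [← sum_sweedler, leftHit_apply]
      congr! 1 with i
      simpa only [map_smul, LinearMap.flip_apply] using
        (map_sweedler (B.flip (b i)) u fun x y => b.coord i y • x).symm

variable [FiniteDimensional k H]

lemma frobeniusMap_injective (ht : IsLeftIntegral k t) (ht0 : t ≠ 0) :
    Function.Injective (frobeniusMap (k := k) t) := by
  rw [injective_iff_map_eq_zero]
  intro φ hφ
  ext x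
  let b := Module.finBasis k H
  have vanish (y : H) : sweedler k t (fun u v => φ (antipode k v * y) • u) = 0 := by
    have := mul_frobeniusMap ht φ y
    rwa [hφ, mul_zero, eq_comm] at this
  have antipode_cancel (v w : H) : antipode k w * (antipodeSq k H v * x) =
      antipode k (antipode k v * w) * x := by
    rw [antipode_mul_antidistrib, antipodeSq_apply, mul_assoc]
  have smul_t : φ x • t = 0 := calc
    φ x • t = sweedler k t fun u v => sweedler k v fun v₁ v₂ =>
        φ (antipode k v₂ * (antipodeSq k H v₁ * x)) • u := by
      simp only [antipode_cancel]
      rw [sweedler_right_antipode_mul t (F := fun u v => φ (antipode k v * x) • u),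
        antipode_one, one_mul]
    _ = sweedler k t fun u v => sweedler k u fun u₁ u₂ =>
        φ (antipode k v * (antipodeSq k H u₂ * x)) • u₁ :=
      (sweedler_assoc t (F := fun u v w =>
        φ (antipode k w * (antipodeSq k H v * x)) • u)).symm
    _ = sweedler k t fun u v => ∑ i, leftHit (b.coord i)
        (φ (antipode k v * (antipodeSq k H (b i) * x)) • u) := by
      simp only [map_smul]
      congr! 3 with u v
      exact sweedler_eq_sum_leftHit b u (F := fun u₁ u₂ =>
        φ (antipode k v * (antipodeSq k H u₂ * x)) • u₁)
    _ = 0 := by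
      simp only [← sum_sweedler, ← map_sweedler, vanish, map_zero, Finset.sum_const_zero]
  exact (smul_eq_zero.mp smul_t).resolve_right ht0

/-- A left integral `t` of `H` together with a functional `l` normalised by `∑ l(S(t₂)) t₁ = 1`;
`l` is then a right integral of the dual. -/
structure IsIntegralPair (t : H) (l : Module.Dual k H) : Prop where
  isLeftIntegral : IsLeftIntegral k t
  frobeniusMap_eq_one : frobeniusMap t l = 1

variable (k H) in
lemma exists_isIntegralPair : ∃ (t : H) (l : Module.Dual k H), IsIntegralPair t l := by
  obtain ⟨t, ht0, ht⟩ := exists_isLeftIntegral_ne_zero (k := k) (H := H)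
  have surjective : Function.Surjective (frobeniusMap (k := k) t) :=
    (LinearMap.injective_iff_surjective_of_finrank_eq_finrank
      (Subspace.dual_finrank_eq (K := k) (V := H))).1 (frobeniusMap_injective ht ht0)
  obtain ⟨l, hl⟩ := surjective 1
  exact ⟨t, l, ht, hl⟩

end FrobeniusMap

lemma isRightIntegralDual_iff {k H : Type*} [Field k] [Ring H] [HopfAlgebra k H]
    {μ : Module.Dual k H} :
    IsRightIntegralDual k μ ↔ ∀ z, rightHit μ z = μ z • (1 : H) := by
  have separate (z : H) : rightHit μ z = μ z • (1 : H) ↔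
      ∀ f : Module.Dual k H, conv μ f z = (f 1 • μ) z := by
    simp only [← (Module.eval_apply_injective k (V := H)).eq_iff, LinearMap.ext_iff,
      Module.Dual.eval_apply, apply_rightHit, map_smul, LinearMap.smul_apply, smul_eq_mul,
      mul_comm (μ z)]
  simp only [separate, IsRightIntegralDual, LinearMap.ext_iff]
  exact forall_comm

section Dual

variable {k H : Type*} [Field k] [Ring H] [HopfAlgebra k H]

lemma _root_.IsRightIntegralDual.conv_left {μ : Module.Dual k H} (hμ : IsRightIntegralDual k μ)
    (f : Module.Dual k H) : IsRightIntegralDual k (conv f μ) := fun f' => by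
  rw [conv_assoc, hμ, conv_smul]

lemma _root_.IsRightIntegralDual.rightHit_mul {μ : Module.Dual k H} (hμ : IsRightIntegralDual k μ)
    (x y : H) : sweedler k x (fun x₁ x₂ => μ (x₁ * y) • x₂) =
      sweedler k y fun y₁ y₂ => μ (x * y₁) • antipode k y₂ := by
  have expand (y₁ y₂ : H) : μ (x * y₁) • antipode k y₂ =
      sweedler k x fun x₁ x₂ => sweedler k y₁ fun u v =>
        μ (x₁ * u) • (x₂ * (v * antipode k y₂)) := by
    rw [← one_mul (antipode k y₂), ← smul_mul_assoc, ← isRightIntegralDual_iff.mp hμ,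
      rightHit_apply, sweedler_product]
    simp only [sweedler_mul, smul_mul_assoc, mul_assoc, one_mul]
  simp only [expand]
  rw [sweedler_comm]
  congr! 3 with x₁ x₂
  rw [sweedler_assoc y (F := fun u v w => μ (x₁ * u) • (x₂ * (v * antipode k w))),
    sweedler_right_mul_antipode y (F := fun u v => μ (x₁ * u) • (x₂ * v)), mul_one]

end Dual

/-- The modular element `∑ l(t₂) t₁` of an integral pair `(t, l)`, the distinguished group-like
element of `H`. -/
noncomputable abbrev modularElem {k H : Type*} [CommRing k] [Ring H] [HopfAlgebra k H] (t : H)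
    (l : Module.Dual k H) : H :=
  leftHit l t

namespace IsIntegralPair

variable {k H : Type*} [Field k] [Ring H] [HopfAlgebra k H] {t : H} {l : Module.Dual k H}

lemma ne_zero (h : IsIntegralPair t l) : t ≠ 0 := by
  rintro rfl
  have zero : frobeniusMap (0 : H) l = 0 :=
    (by fun_prop : IsLinearMap k fun t : H => sweedler k t fun x y => l (antipode k y) • x).map_zero
  have := congrArg (counit (R := k)) (zero.symm.trans h.frobeniusMap_eq_one)
  rw [map_zero, Bialgebra.counit_one] at this
  exact zero_ne_one this

lemma frobeniusMap_comp_mulRight (h : IsIntegralPair t l) (a : H) :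
    frobeniusMap t (l ∘ₗ LinearMap.mulRight k a) = a := by
  rw [← mul_frobeniusMap h.isLeftIntegral, h.frobeniusMap_eq_one, mul_one]

lemma eq_smul (h : IsIntegralPair t l) {s : H} (hs : IsLeftIntegral k s) : s = l s • t := by
  conv_lhs => rw [← h.frobeniusMap_comp_mulRight s]
  simp only [frobeniusMap_apply, LinearMap.comp_apply, LinearMap.mulRight_apply, hs _, map_smul,
    counit_antipode, smul_eq_mul, mul_smul]
  exact sweedler_counit_smul_left t (F := fun x => l s • x)

lemma apply_eq_one (h : IsIntegralPair t l) : l t = 1 :=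
  smul_left_injective k h.ne_zero <| by
    simpa only [one_smul] using (h.eq_smul h.isLeftIntegral).symm

lemma _root_.IsRightIntegralDual.eq_smul (h : IsIntegralPair t l) {μ : Module.Dual k H}
    (hμ : IsRightIntegralDual k μ) : μ = μ t • l := by
  have key (x : H) : sweedler k t (fun u v => μ (x * u) • antipode k v) = μ t • x := by
    rw [← hμ.rightHit_mul]
    simp only [h.isLeftIntegral _, map_smul, smul_eq_mul, mul_smul]
    exact sweedler_counit_smul_right x (F := fun z => μ t • z)
  ext x
  rw [LinearMap.smul_apply, ← map_smul, ← key]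
  conv_lhs => rw [← mul_one x, ← h.frobeniusMap_eq_one]
  simp only [frobeniusMap_apply, mul_sweedler, map_sweedler, mul_smul_comm, map_smul, smul_eq_mul,
    mul_comm]

variable [FiniteDimensional k H]

lemma comp_mulRight_frobeniusMap (h : IsIntegralPair t l) (φ : Module.Dual k H) :
    l ∘ₗ LinearMap.mulRight k (frobeniusMap t φ) = φ :=
  frobeniusMap_injective h.isLeftIntegral h.ne_zero (h.frobeniusMap_comp_mulRight _)

lemma sweedler_smul_antipode (h : IsIntegralPair t l) (a : H) :
    sweedler k t (fun x y => l (a * x) • antipode k y) = a := by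
  refine Module.eval_apply_injective k <| LinearMap.ext fun φ => ?_
  simp only [Module.Dual.eval_apply]
  conv_rhs => rw [← h.comp_mulRight_frobeniusMap φ]
  simp only [LinearMap.comp_apply, LinearMap.mulRight_apply, frobeniusMap_apply, mul_sweedler,
    map_sweedler, mul_smul_comm, map_smul, smul_eq_mul, mul_comm]

lemma antipode_injective (h : IsIntegralPair t l) : Function.Injective (antipode k (A := H)) :=
  LinearMap.injective_iff_surjective.2 fun a => ⟨sweedler k t fun x y => l (a * x) • y, by
    simpa only [map_sweedler, map_smul] using h.sweedler_smul_antipode a⟩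

lemma isRightIntegralDual (h : IsIntegralPair t l) : IsRightIntegralDual k l := by
  refine isRightIntegralDual_iff.mpr fun x => ?_
  have hQ : IsLinearMap k fun u : H => sweedler k u fun u₁ u₂ => l (x * u₁) • antipode k u₂ := by
    fun_prop
  calc rightHit l x
    _ = sweedler k t fun u v => l (x * u) • sweedler k v fun v₁ v₂ =>
          l (antipode k v₂) • antipode k v₁ := by
      conv_lhs => rw [← h.sweedler_smul_antipode x]
      simp only [map_sweedler, map_smul, rightHit_apply]
      congr! 4 with u v
      exact sweedler_antipode v
    _ = sweedler k t fun u v => l (antipode k v) • sweedler k u fun u₁ u₂ =>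
          l (x * u₁) • antipode k u₂ := by
      simp only [smul_sweedler]
      rw [← sweedler_assoc t (F := fun u v w => l (x * u) • l (antipode k w) • antipode k v)]
      congr! 6
      exact smul_comm _ _ _
    _ = l x • 1 := by
      have linear := map_sweedler (R := k) (hQ.mk' _) t fun u v => l (antipode k v) • u
      simp only [map_smul, IsLinearMap.mk'_apply, ← frobeniusMap_apply, h.frobeniusMap_eq_one]
        at linear
      rw [← linear, sweedler_groupLike (R := k) .one, mul_one, antipode_one]

lemma leftHit_eq (h : IsIntegralPair t l) (z : H) : leftHit l z = l z • modularElem t l := by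
  refine Module.eval_apply_injective k <| LinearMap.ext fun f => ?_
  have := LinearMap.congr_fun ((h.isRightIntegralDual.conv_left f).eq_smul h) z
  simp only [Module.Dual.eval_apply, map_smul, apply_leftHit, this, LinearMap.smul_apply,
    smul_eq_mul, mul_comm]

lemma isGroupLikeElem_modularElem (h : IsIntegralPair t l) :
    IsGroupLikeElem k (modularElem t l) where
  counit_eq_one := by
    simp only [leftHit_apply, map_sweedler, map_smul, smul_eq_mul]
    rw [← h.apply_eq_one, ← sweedler_counit_smul_right t (F := l)]
    simp only [smul_eq_mul, mul_comm]
  comul_eq_tmul_self := by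
    have collapse (u w : H) : sweedler k w (fun x y => l y • (u ⊗ₜ[k] x)) =
        l w • (u ⊗ₜ[k] modularElem t l) := by
      rw [← TensorProduct.tmul_smul, ← h.leftHit_eq, leftHit_apply]
      simpa only [TensorProduct.mk_apply, TensorProduct.tmul_smul] using
        (map_sweedler (TensorProduct.mk k H H u) w fun x y => l y • x).symm
    calc comul (leftHit l t)
      _ = sweedler k t fun x y => sweedler k x fun x₁ x₂ => l y • (x₁ ⊗ₜ[k] x₂) := by
        simp only [leftHit_apply, map_sweedler, map_smul, ← sweedler_tmul, smul_sweedler]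
      _ = sweedler k t fun x y => l y • (x ⊗ₜ[k] modularElem t l) := by
        rw [sweedler_assoc t (F := fun u v w => l w • (u ⊗ₜ[k] v))]
        simp only [collapse]
      _ = modularElem t l ⊗ₜ[k] modularElem t l := by
        have linear := map_sweedler (R := k) ((TensorProduct.mk k H H).flip (modularElem t l)) t
          fun x y => l y • x
        simp only [map_smul, LinearMap.flip_apply, TensorProduct.mk_apply] at linear
        rw [← linear, ← leftHit_apply]

end IsIntegralPair

section Characters

variable {R H : Type*} [CommRing R] [Ring H] [HopfAlgebra R H]

lemma rightHit_groupLike (f : Module.Dual R H) {g : H} (hg : IsGroupLikeElem R g) :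
    rightHit f g = f g • g := by
  rw [rightHit_apply, sweedler_groupLike hg]

lemma rightHit_algHom_mul (α : H →ₐ[R] R) (a b : H) :
    rightHit α.toLinearMap (a * b) = rightHit α.toLinearMap a * rightHit α.toLinearMap b := by
  rw [rightHit_apply, sweedler_product]
  simp only [rightHit_apply, sweedler_mul, mul_sweedler, AlgHom.toLinearMap_apply, map_mul,
    smul_mul_smul_comm]
  rw [sweedler_comm]

lemma algHom_antipode_mul_cancel {g : H} (hg : IsGroupLikeElem R g) (α : H →ₐ[R] R) :
    α (antipode R g) * α g = 1 := by
  rw [← map_mul, hg.antipode_mul_cancel, map_one]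

lemma rightHit_algHom_conj (α : H →ₐ[R] R) {g : H} (hg : IsGroupLikeElem R g) (a : H) :
    rightHit α.toLinearMap (antipode R g * a * g) =
      antipode R g * rightHit α.toLinearMap a * g := by
  rw [rightHit_algHom_mul, rightHit_algHom_mul, rightHit_groupLike _ hg,
    rightHit_groupLike _ (hg.antipode), smul_mul_assoc, smul_mul_assoc, mul_smul_comm,
    smul_smul, AlgHom.toLinearMap_apply, AlgHom.toLinearMap_apply,
    algHom_antipode_mul_cancel hg, one_smul]

lemma algHom_antipodeSq (α : H →ₐ[R] R) (a : H) : α (antipodeSq R H a) = α a := by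
  calc α (antipodeSq R H a)
    _ = sweedler R a fun u v => sweedler R u fun u₁ u₂ =>
          α (u₁ * antipode R u₂) * α (antipodeSq R H v) := by
      rw [sweedler_left_mul_antipode a (F := fun u v => α u * α (antipodeSq R H v)), map_one,
        one_mul]
    _ = sweedler R a fun u v => sweedler R v fun v₁ v₂ =>
          α u * α (antipode R (v₁ * antipode R v₂)) := by
      simp only [antipode_mul_antidistrib, ← antipodeSq_apply, map_mul,
        mul_comm (α (antipodeSq _ _ _)), ← mul_assoc]
      exact sweedler_assoc a (F := fun u v w =>
        α u * α (antipode R v) * α (antipodeSq R H w))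
    _ = α a := by
      rw [sweedler_right_mul_antipode a (F := fun u v => α u * α (antipode R v)), antipode_one,
        map_one, mul_one]

lemma algHom_comp_antipode_comp_antipodeSq (α : H →ₐ[R] R) :
    (α.toLinearMap ∘ₗ antipode R) ∘ₗ antipodeSq R H = α.toLinearMap ∘ₗ antipode R :=
  LinearMap.ext fun a => algHom_antipodeSq α (antipode R a)

lemma commute_rightHit_antipodeSq {f : Module.Dual R H} (hf : f ∘ₗ antipodeSq R H = f) :
    Commute (rightHit f) (antipodeSq R H) := LinearMap.ext fun a => by
  have hf' (x : H) : f (antipodeSq R H x) = f x := LinearMap.congr_fun hf x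
  simp only [Module.End.mul_apply, rightHit_apply, map_sweedler, map_smul]
  rw [sweedler_antipodeSq a (F := fun x y => f x • y)]
  simp only [hf']

lemma commute_leftHit_antipodeSq {f : Module.Dual R H} (hf : f ∘ₗ antipodeSq R H = f) :
    Commute (leftHit f) (antipodeSq R H) := LinearMap.ext fun a => by
  have hf' (x : H) : f (antipodeSq R H x) = f x := LinearMap.congr_fun hf x
  simp only [Module.End.mul_apply, leftHit_apply, map_sweedler, map_smul]
  rw [sweedler_antipodeSq a (F := fun x y => f y • x)]
  simp only [hf']

lemma semiconjBy_antipode_leftHit_rightHit (f : Module.Dual R H) :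
    SemiconjBy (antipode R : Module.End R H) (leftHit (f ∘ₗ antipode R)) (rightHit f) :=
  LinearMap.ext fun a => by
    simp only [Module.End.mul_apply, leftHit_apply, rightHit_apply, map_sweedler, map_smul]
    rw [sweedler_antipode a (F := fun x y => f x • y)]
    simp only [LinearMap.comp_apply]

lemma commute_leftHit_rightHit (f f' : Module.Dual R H) : Commute (leftHit f) (rightHit f') :=
  LinearMap.ext fun a => by
    simp only [Module.End.mul_apply, leftHit_apply, rightHit_apply, map_sweedler, map_smul,
      smul_sweedler]
    rw [sweedler_assoc a (F := fun u v w => f w • f' u • v)]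
    simp only [smul_comm (f _)]

end Characters

namespace IsIntegralPair

variable {k H : Type*} [Field k] [Ring H] [HopfAlgebra k H] {t : H} {l : Module.Dual k H}

lemma mul_eq_apply_smul (h : IsIntegralPair t l) (a : H) : t * a = l (t * a) • t :=
  h.eq_smul fun b => by rw [← mul_assoc, h.isLeftIntegral, smul_mul_assoc]

/-- The modular character of an integral pair `(t, l)`, that is `α` with `t * a = α a • t`. -/
noncomputable def modularChar (h : IsIntegralPair t l) : H →ₐ[k] k :=
  AlgHom.ofLinearMap (l ∘ₗ LinearMap.mulLeft k t)
    (by rw [LinearMap.comp_apply, LinearMap.mulLeft_apply, mul_one, h.apply_eq_one])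
    fun a b => by
      simp only [LinearMap.comp_apply, LinearMap.mulLeft_apply]
      rw [← mul_assoc, h.mul_eq_apply_smul a, smul_mul_assoc, map_smul, map_smul, h.apply_eq_one,
        smul_eq_mul, smul_eq_mul, mul_one]

lemma mul_eq_modularChar_smul (h : IsIntegralPair t l) (a : H) : t * a = h.modularChar a • t :=
  h.mul_eq_apply_smul a

lemma sweedler_mul_right (h : IsIntegralPair t l) {V : Type*} [AddCommGroup V] [Module k V]
    (a : H) {F : H → H → V} (h₁ : ∀ y, IsLinearMap k fun x => F x y := by fun_prop)
    (h₂ : ∀ x, IsLinearMap k (F x) := by fun_prop) :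
    sweedler k t (fun u v => F (u * a) v) =
      sweedler k t fun u v => F u (v * antipode k (rightHit h.modularChar.toLinearMap a)) := by
  obtain ⟨B, rfl⟩ := exists_bilinearMap h₁ h₂
  symm
  calc sweedler k t (fun u v => B u (v * antipode k (rightHit h.modularChar.toLinearMap a)))
    _ = sweedler k a fun a₁ a₂ => sweedler k (t * a₁) fun u v => B u (v * antipode k a₂) := by
      simp only [h.mul_eq_modularChar_smul, rightHit_apply, map_sweedler, mul_sweedler, map_smul,
        mul_smul_comm, AlgHom.toLinearMap_apply]
      rw [sweedler_comm]
      congr! 3 with a₁ a₂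
      rw [sweedler_smul _ _ (F := fun u v => B u (v * antipode k a₂)), smul_sweedler]
    _ = sweedler k a fun a₁ a₂ => sweedler k t fun u v => sweedler k a₁ fun x y =>
          B (u * x) (v * (y * antipode k a₂)) := by
      congr! 3 with a₁ a₂
      rw [sweedler_product]
      simp only [mul_assoc]
    _ = sweedler k t fun u v => B (u * a) v := by
      rw [sweedler_comm]
      congr! 3 with u v
      rw [sweedler_assoc a (F := fun x y z => B (u * x) (v * (y * antipode k z))),
        sweedler_right_mul_antipode a (F := fun x y => B (u * x) (v * y)), mul_one]

variable [FiniteDimensional k H]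

lemma apply_antipode_mul_modularElem (h : IsIntegralPair t l) (u : H) :
    l (antipode k u * modularElem t l) = l u := by
  have expand : sweedler k t (fun x y => l (antipode k u * x) • y) = u := h.antipode_injective <| by
    simpa only [map_sweedler, map_smul] using h.sweedler_smul_antipode (antipode k u)
  conv_rhs => rw [← expand]
  simp only [leftHit_apply, mul_sweedler, map_sweedler, mul_smul_comm, map_smul, smul_eq_mul,
    mul_comm]

lemma ext_left (h : IsIntegralPair t l) {c d : H} (hcd : ∀ z, l (c * z) = l (d * z)) : c = d := by
  rw [← h.sweedler_smul_antipode c, ← h.sweedler_smul_antipode d]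
  simp only [hcd]

-- `∑ l(w t₁ a) l(S t₂)` is evaluated by `frobeniusMap t l = 1` on one side and, after moving `a`
-- across the coproduct of `t`, by the dual basis property of `(t, l)` on the other.
lemma apply_mul_comm (h : IsIntegralPair t l) (w a : H) :
    l (w * a) = l (antipodeSq k H (rightHit h.modularChar.toLinearMap a) * w) := by
  calc l (w * a)
    _ = sweedler k t fun u v => l (l (w * (u * a)) • antipode k v) := by
      conv_lhs => rw [← one_mul a, ← h.frobeniusMap_eq_one]
      simp only [frobeniusMap_apply, sweedler_mul, mul_sweedler, map_sweedler, smul_mul_assoc,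
        mul_smul_comm, map_smul, smul_eq_mul, mul_comm]
    _ = sweedler k t fun u v =>
          l (l (w * u) • antipode k (v * antipode k (rightHit h.modularChar.toLinearMap a))) :=
      h.sweedler_mul_right a (F := fun u v => l (l (w * u) • antipode k v))
    _ = l (antipodeSq k H (rightHit h.modularChar.toLinearMap a) * w) := by
      conv_rhs => rw [← h.sweedler_smul_antipode w]
      simp only [antipode_mul_antidistrib, ← antipodeSq_apply, mul_sweedler, map_sweedler,
        mul_smul_comm]

lemma antipode_eq_antipodeSq_rightHit_conj (h : IsIntegralPair t l) (a : H) :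
    antipode k a = antipodeSq k H (rightHit h.modularChar.toLinearMap
      (antipode k (modularElem t l) *
        antipode k (antipodeSq k H (rightHit h.modularChar.toLinearMap a)) * modularElem t l)) := by
  have hg := h.isGroupLikeElem_modularElem
  refine h.ext_left fun z => ?_
  obtain ⟨w, hw⟩ := LinearMap.injective_iff_surjective.1 h.antipode_injective
    (z * antipode k (modularElem t l))
  obtain rfl : antipode k w * modularElem t l = z := by
    rw [hw, mul_assoc, hg.antipode_mul_cancel, mul_one]
  rw [← h.apply_mul_comm]
  calc l (antipode k a * (antipode k w * modularElem t l))
    _ = l (antipodeSq k H (rightHit h.modularChar.toLinearMap a) * w) := by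
      rw [← mul_assoc, ← antipode_mul_antidistrib, h.apply_antipode_mul_modularElem,
        h.apply_mul_comm]
    _ = _ := by
      rw [← h.apply_antipode_mul_modularElem, antipode_mul_antidistrib]
      simp only [mul_assoc, ← mul_assoc (modularElem t l) (antipode k _),
        hg.mul_antipode_cancel, one_mul]

theorem radford_antipodeSq_sq (h : IsIntegralPair t l) :
    antipodeSq k H ^ 2 * (leftHit (h.modularChar.toLinearMap ∘ₗ antipode k) *
        rightHit h.modularChar.toLinearMap) =
      LinearMap.mulLeft k (modularElem t l) *
        LinearMap.mulRight k (antipode k (modularElem t l)) := by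
  have hg := h.isGroupLikeElem_modularElem
  have hRT := commute_leftHit_antipodeSq (algHom_comp_antipode_comp_antipodeSq h.modularChar)
  ext a
  set g := modularElem t l
  set L := rightHit h.modularChar.toLinearMap
  set R := leftHit (h.modularChar.toLinearMap ∘ₗ antipode k)
  set T := antipodeSq k H
  have hLS (x : H) : L (antipode k x) = antipode k (R x) :=
    (LinearMap.congr_fun (semiconjBy_antipode_leftHit_rightHit _).eq x).symm
  have hTg : T g = g := hg.antipode_antipode
  have hTg' : T (antipode k g) = antipode k g := hg.antipode.antipode_antipode
  have conj : antipode k g * T (R (T (L a))) * g = a := h.antipode_injective <| calc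
    antipode k (antipode k g * T (R (T (L a))) * g)
    _ = T (antipode k g * antipode k (R (T (L a))) * g) := by
      rw [antipodeSq_mul, antipodeSq_mul, hTg, hTg', antipode_mul_antidistrib,
        antipode_mul_antidistrib, hg.antipode_antipode, mul_assoc]
      rfl
    _ = antipode k a := by
      rw [h.antipode_eq_antipodeSq_rightHit_conj a, rightHit_algHom_conj _ hg, hLS]
  calc (T ^ 2) (R (L a))
    _ = T (R (T (L a))) := congrArg T (LinearMap.congr_fun hRT.eq (L a)).symm
    _ = g * a * antipode k g := by
      conv_rhs => rw [← conj]
      simp only [mul_assoc, hg.mul_antipode_cancel, mul_one]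
      rw [← mul_assoc, hg.mul_antipode_cancel, one_mul]
    _ = g * (a * antipode k g) := mul_assoc _ _ _

theorem antipodeSq_pow_eq_one (h : IsIntegralPair t l) {N : ℕ} (hg : modularElem t l ^ N = 1)
    (hα : rightHit h.modularChar.toLinearMap ^ N = 1) : antipodeSq k H ^ (2 * N) = 1 := by
  set g := modularElem t l
  have hgl : IsGroupLikeElem k g := h.isGroupLikeElem_modularElem
  set L := rightHit h.modularChar.toLinearMap
  set R := leftHit (h.modularChar.toLinearMap ∘ₗ antipode k)
  set T := antipodeSq k H
  have hLT : Commute L T := commute_rightHit_antipodeSq <|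
    LinearMap.ext fun a => algHom_antipodeSq h.modularChar a
  have hRT : Commute R T :=
    commute_leftHit_antipodeSq (algHom_comp_antipode_comp_antipodeSq h.modularChar)
  have hRN : R ^ N = 1 := LinearMap.ext fun x => h.antipode_injective <| by
    have := (semiconjBy_antipode_leftHit_rightHit h.modularChar.toLinearMap).pow_right N
    rw [hα] at this
    exact LinearMap.congr_fun this.eq x
  have hgN : antipode k g ^ N = 1 := by
    have comm : Commute g (antipode k g) :=
      hgl.mul_antipode_cancel.trans hgl.antipode_mul_cancel.symm
    calc antipode k g ^ N
      _ = g ^ N * antipode k g ^ N := by rw [hg, one_mul]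
      _ = 1 := by rw [← comm.mul_pow, hgl.mul_antipode_cancel, one_pow]
  calc T ^ (2 * N)
    _ = (T ^ 2 * (R * L)) ^ N := by
      rw [((hRT.mul_left hLT).symm.pow_left 2).mul_pow, (commute_leftHit_rightHit _ _).mul_pow, hRN,
        hα, mul_one, mul_one, pow_mul]
    _ = 1 := by
      rw [h.radford_antipodeSq_sq, (LinearMap.commute_mulLeft_right g _).mul_pow,
        LinearMap.pow_mulLeft, LinearMap.pow_mulRight, hg, hgN, LinearMap.mulLeft_one,
        LinearMap.mulRight_one]
      rfl

end IsIntegralPair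

section Traces

variable {k H V : Type*} [Field k] [Ring H] [HopfAlgebra k H] [AddCommGroup V] [Module k V]

-- Maschke's theorem: averaging a linear projection over `t` makes it `H`-linear.
lemma isSemisimpleRing_of_counit_ne_zero {t : H} (ht : IsLeftIntegral k t)
    (hε : counit (R := k) t ≠ 0) : IsSemisimpleRing H := by
  refine (isSemisimpleModule_iff H H).2 ⟨fun W => ?_⟩
  obtain ⟨π, hπ⟩ := (W.restrictScalars k).subtype.exists_leftInverse_of_injective
    (LinearMap.ker_eq_bot.2 (Submodule.injective_subtype _))
  have π_apply (w : H) (hw : w ∈ W) : (π w : H) = w :=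
    congrArg (W.restrictScalars k).subtype (LinearMap.congr_fun hπ ⟨w, hw⟩)
  let average (m : H) : H := (counit (R := k) t)⁻¹ •
    sweedler k t fun x y => x * (W.restrictScalars k).subtype (π (antipode k y * m))
  have average_mem (m : H) : average m ∈ W := (W.restrictScalars k).smul_mem _ <|
    W.sum_mem fun i _ => W.smul_mem _ (π _).2
  let P : H →ₗ[H] W :=
    { toFun := fun m => ⟨average m, average_mem m⟩
      map_add' := fun m m' => Subtype.ext <| (by fun_prop : IsLinearMap k average).map_add m m'
      map_smul' := fun a m => Subtype.ext <| by
        have := sweedler_mul_antipode_of_isLeftIntegral ht a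
          (F := fun x y => x * (W.restrictScalars k).subtype (π (y * m)))
        simp only [mul_assoc] at this
        simp only [average, RingHom.id_apply, smul_eq_mul, SetLike.val_smul, ← this, mul_smul_comm,
          mul_sweedler] }
  refine ⟨LinearMap.ker P, LinearMap.isCompl_of_proj fun w => Subtype.ext ?_⟩
  calc average w
    _ = (counit (R := k) t)⁻¹ • sweedler k t fun x y => x * antipode k y * (w : H) := by
      refine congrArg _ (congrArg (sweedler k t) (funext₂ fun x y => ?_))
      rw [mul_assoc]
      exact congrArg (x * ·) (π_apply _ (W.smul_mem (antipode k y) w.2))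
    _ = w := by
      rw [sweedler_mul_antipode t (F := fun x => x * (w : H)), one_mul, inv_smul_smul₀ hε]

lemma IsIntegralPair.counit_eq_zero {t : H} {l : Module.Dual k H} (h : IsIntegralPair t l)
    (hss : ¬ IsSemisimpleRing H) : counit (R := k) t = 0 :=
  not_ne_iff.mp fun hε => hss (isSemisimpleRing_of_counit_ne_zero h.isLeftIntegral hε)

/-- The map `x ⊗ y ↦ ∑ x φ(y₁) ⊗ y₂`: the Galois map of `H` for `φ = id`, and its inverse for
`φ = S`. -/
noncomputable def galoisMap (φ : Module.End k H) : Module.End k (H ⊗[k] H) :=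
  LinearMap.rTensor H (LinearMap.mul' k H) ∘ₗ (TensorProduct.assoc k H H H).symm.toLinearMap ∘ₗ
    LinearMap.lTensor H (LinearMap.rTensor H φ ∘ₗ comul)

lemma galoisMap_tmul (φ : Module.End k H) (x y : H) :
    galoisMap φ (x ⊗ₜ y) = sweedler k y fun y₁ y₂ => (x * φ y₁) ⊗ₜ[k] y₂ := by
  have tmul_sum := map_sweedler (R := k) (TensorProduct.mk k H (H ⊗[k] H) x) y
    fun y₁ y₂ => φ y₁ ⊗ₜ[k] y₂
  simp only [TensorProduct.mk_apply] at tmul_sum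
  simp only [galoisMap, LinearMap.comp_apply, LinearMap.lTensor_tmul, ← sweedler_tmul,
    map_sweedler, LinearMap.rTensor_tmul, tmul_sum, LinearEquiv.coe_coe,
    TensorProduct.assoc_symm_tmul, LinearMap.mul'_apply]

variable (k H) in
/-- The Galois map `x ⊗ y ↦ ∑ x y₁ ⊗ y₂` as a linear equivalence. -/
noncomputable def galoisEquiv : H ⊗[k] H ≃ₗ[k] H ⊗[k] H :=
  LinearEquiv.ofLinearMap (galoisMap LinearMap.id) (galoisMap (antipode k))
    (TensorProduct.ext' fun x y => by
      simp only [LinearMap.comp_apply, LinearMap.id_apply, galoisMap_tmul, map_sweedler, mul_assoc]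
      rw [← sweedler_assoc y (F := fun u v w => (x * (antipode k u * v)) ⊗ₜ[k] w),
        sweedler_left_antipode_mul y (F := fun u v => (x * u) ⊗ₜ[k] v), mul_one])
    (TensorProduct.ext' fun x y => by
      simp only [LinearMap.comp_apply, LinearMap.id_apply, galoisMap_tmul, map_sweedler, mul_assoc]
      rw [← sweedler_assoc y (F := fun u v w => (x * (u * antipode k v)) ⊗ₜ[k] w),
        sweedler_left_mul_antipode y (F := fun u v => (x * u) ⊗ₜ[k] v), mul_one])

lemma galoisEquiv_tmul (x y : H) :
    galoisEquiv k H (x ⊗ₜ y) = sweedler k y fun y₁ y₂ => (x * y₁) ⊗ₜ[k] y₂ :=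
  galoisMap_tmul _ x y

lemma sweedler_rightHit (f : Module.Dual k H) (a : H) {F : H → H → V}
    (h₁ : ∀ y, IsLinearMap k fun x => F x y := by fun_prop)
    (h₂ : ∀ x, IsLinearMap k (F x) := by fun_prop) :
    sweedler k (rightHit f a) F = sweedler k a fun x y => F (rightHit f x) y := by
  obtain ⟨B, rfl⟩ := exists_bilinearMap h₁ h₂
  have linear := map_sweedler (R := k)
    ((isLinearMap_sweedler h₁ h₂).mk' _) a fun x y => f x • y
  simp only [map_smul, IsLinearMap.mk'_apply, smul_sweedler, ← rightHit_apply] at linear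
  rw [linear, ← sweedler_assoc a (F := fun u v w => f u • B v w)]
  congr! 3 with x y
  simpa only [map_smul, LinearMap.flip_apply, ← rightHit_apply] using
    (map_sweedler (R := k) (B.flip y) x fun u v => f u • v).symm

variable [FiniteDimensional k H]

lemma trace_eq_of_semiconj {M N : Type*} [AddCommGroup M] [Module k M] [AddCommGroup N]
    [Module k N] (e : M ≃ₗ[k] N) {f : Module.End k M} {g : Module.End k N}
    (hfg : e.toLinearMap ∘ₗ f = g ∘ₗ e.toLinearMap) :
    LinearMap.trace k M f = LinearMap.trace k N g := by
  rw [← LinearMap.trace_conj' f e, LinearEquiv.conj_apply, hfg, LinearMap.comp_assoc,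
    LinearEquiv.comp_symm, LinearMap.comp_id]

-- The Galois map conjugates `1 ⊗ R_g` to `R_g ⊗ R_g`.
lemma trace_mulRight_sq {g : H} (hg : IsGroupLikeElem k g) :
    LinearMap.trace k H (LinearMap.mulRight k g) ^ 2 =
      Module.finrank k H * LinearMap.trace k H (LinearMap.mulRight k g) := by
  have trace_eq := trace_eq_of_semiconj (galoisEquiv k H)
    (f := TensorProduct.map LinearMap.id (LinearMap.mulRight k g))
    (g := TensorProduct.map (LinearMap.mulRight k g) (LinearMap.mulRight k g))
    (TensorProduct.ext' fun x y => by
      simp only [LinearMap.comp_apply, TensorProduct.map_tmul, LinearEquiv.coe_coe,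
        galoisEquiv_tmul, map_sweedler, LinearMap.id_apply, LinearMap.mulRight_apply]
      rw [sweedler_product]
      simp only [mul_assoc]
      congr! 3 with u v
      exact sweedler_groupLike hg (F := fun w z => (x * (u * w)) ⊗ₜ[k] (v * z)))
  rw [LinearMap.trace_tensorProduct', LinearMap.trace_tensorProduct', LinearMap.trace_id]
    at trace_eq
  rw [sq, trace_eq]

-- The Galois map conjugates `L ⊗ L` to `L ⊗ 1`, where `L` is the right hit by `α`.
lemma trace_rightHit_sq (α : H →ₐ[k] k) :
    LinearMap.trace k H (rightHit α.toLinearMap) ^ 2 =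
      Module.finrank k H * LinearMap.trace k H (rightHit α.toLinearMap) := by
  have trace_eq := trace_eq_of_semiconj (galoisEquiv k H)
    (f := TensorProduct.map (rightHit α.toLinearMap) (rightHit α.toLinearMap))
    (g := TensorProduct.map (rightHit α.toLinearMap) LinearMap.id)
    (TensorProduct.ext' fun x y => by
      simp only [LinearMap.comp_apply, TensorProduct.map_tmul, LinearEquiv.coe_coe,
        galoisEquiv_tmul, map_sweedler, LinearMap.id_apply, rightHit_algHom_mul]
      exact sweedler_rightHit _ y (F := fun u v => (rightHit α.toLinearMap x * u) ⊗ₜ[k] v))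
  rw [LinearMap.trace_tensorProduct', LinearMap.trace_tensorProduct', LinearMap.trace_id]
    at trace_eq
  rw [sq, trace_eq, mul_comm]

namespace IsIntegralPair

variable {t : H} {l : Module.Dual k H}

lemma trace_eq_sweedler (h : IsIntegralPair t l) (f : Module.End k H) :
    LinearMap.trace k H f = sweedler k t fun x y => l (antipode k y * f x) := by
  have expand : f = sweedler k t fun x y =>
      (l ∘ₗ LinearMap.mulLeft k (antipode k y)).smulRight (f x) := by
    ext a
    conv_lhs => rw [← h.frobeniusMap_comp_mulRight a, frobeniusMap_apply, map_sweedler]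
    simp only [sweedler, LinearMap.sum_apply, LinearMap.smulRight_apply, LinearMap.comp_apply,
      LinearMap.mulLeft_apply, LinearMap.mulRight_apply, map_smul]
  conv_lhs => rw [expand, map_sweedler]
  simp only [LinearMap.trace_smulRight, LinearMap.comp_apply, LinearMap.mulLeft_apply]

lemma trace_mulRight_mul_antipodeSq (h : IsIntegralPair t l) (z : H) :
    LinearMap.trace k H (LinearMap.mulRight k z * antipodeSq k H) =
      counit (R := k) t * l z := by
  have antipode_cancel (v w : H) : antipode k w * (antipodeSq k H v * z) =
      antipode k (antipode k v * w) * z := by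
    rw [antipode_mul_antidistrib, antipodeSq_apply, mul_assoc]
  rw [h.trace_eq_sweedler]
  simp only [Module.End.mul_apply, LinearMap.mulRight_apply, antipode_cancel]
  rw [sweedler_antipode_mul t (F := fun x => l (antipode k x * z)), antipode_one, one_mul,
    smul_eq_mul]

lemma trace_antipodeSq_mul_rightHit (h : IsIntegralPair t l) (f : Module.Dual k H) :
    LinearMap.trace k H (antipodeSq k H * rightHit f) = f t * l 1 := by
  have expand (u w : H) : l (antipode k w * antipodeSq k H (rightHit f u)) =
      sweedler k u fun u₁ u₂ => f u₁ * l (antipode k (antipode k u₂ * w)) := by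
    simp only [rightHit_apply, map_sweedler, mul_sweedler, map_smul, mul_smul_comm,
      antipode_mul_antidistrib, antipodeSq_apply, smul_eq_mul]
  rw [h.trace_eq_sweedler]
  simp only [Module.End.mul_apply, expand]
  rw [sweedler_assoc t (F := fun u v w => f u * l (antipode k (antipode k v * w))),
    sweedler_right_antipode_mul t (F := fun u v => f u * l (antipode k v)), antipode_one]

lemma trace_mulRight_mul_antipodeSq_eq_zero (h : IsIntegralPair t l) (hss : ¬ IsSemisimpleRing H)
    (z : H) : LinearMap.trace k H (LinearMap.mulRight k z * antipodeSq k H) = 0 := by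
  rw [h.trace_mulRight_mul_antipodeSq, h.counit_eq_zero hss, zero_mul]

lemma trace_antipodeSq_mul_rightHit_eq_zero (h : IsIntegralPair t l) (hss : ¬ IsSemisimpleRing H)
    (α : H →ₐ[k] k) :
    LinearMap.trace k H (antipodeSq k H * rightHit α.toLinearMap) = 0 := by
  have hα : α t = 0 := by
    have sq_eq := congrArg α (h.isLeftIntegral t)
    rw [map_mul, map_smul, h.counit_eq_zero hss, zero_smul] at sq_eq
    exact mul_self_eq_zero.1 sq_eq
  rw [h.trace_antipodeSq_mul_rightHit, AlgHom.toLinearMap_apply, hα, zero_mul]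

end IsIntegralPair

end Traces

section Spectral

lemma pow_val_add {M : Type*} [Monoid M] {N : ℕ} [NeZero N] {x : M} (hx : x ^ N = 1)
    (a b : ZMod N) : x ^ (a + b).val = x ^ a.val * x ^ b.val := by
  rw [ZMod.val_add, ← pow_eq_pow_mod _ hx, pow_add]

lemma pow_val_mul {M : Type*} [Monoid M] {N : ℕ} {x : M} (hx : x ^ N = 1) (a b : ZMod N) :
    x ^ (a * b).val = (x ^ a.val) ^ b.val := by
  rw [ZMod.val_mul, ← pow_eq_pow_mod _ hx, pow_mul]

variable {k A : Type*} [Field k] [Ring A] [Algebra k A] {N : ℕ} [NeZero N]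

/-- The spectral projection of `R`, where `R ^ N = 1`, onto the eigenspace on which every power
`R ^ m` acts by `χ (m * j)`. -/
noncomputable def spectralProj (χ : AddChar (ZMod N) k) (R : A) (j : ZMod N) : A :=
  (N : k)⁻¹ • ∑ m : ZMod N, χ (-(m * j)) • R ^ m.val

variable {χ : AddChar (ZMod N) k} {R : A}

lemma sum_addChar_mul_convolution (c d : ZMod N → k) (m : ZMod N) :
    ∑ j, χ (m * j) * ∑ a, c a * d (j - a) = (∑ a, χ (m * a) * c a) * ∑ b, χ (m * b) * d b := by
  rw [Finset.sum_mul_sum]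
  simp only [Finset.mul_sum]
  rw [Finset.sum_comm]
  refine Finset.sum_congr rfl fun a _ => ?_
  rw [← Equiv.sum_comp (Equiv.subRight a) fun b => χ (m * a) * c a * (χ (m * b) * d b)]
  refine Finset.sum_congr rfl fun j _ => ?_
  rw [Equiv.subRight_apply, show m * j = m * a + m * (j - a) by ring, AddChar.map_add_eq_mul]
  ring

lemma commute_spectralProj {B : A} (h : Commute B R) (j : ZMod N) :
    Commute B (spectralProj χ R j) :=
  (Commute.sum_right _ _ _ fun _ _ => (h.pow_right _).smul_right _).smul_right _

lemma pow_val_mul_spectralProj (hR : R ^ N = 1) (a j : ZMod N) :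
    R ^ a.val * spectralProj χ R j = χ (a * j) • spectralProj χ R j := by
  rw [spectralProj, mul_smul_comm, smul_comm]
  congr 1
  rw [Finset.mul_sum, Finset.smul_sum, ← Equiv.sum_comp (Equiv.subRight a)]
  refine Finset.sum_congr rfl fun m _ => ?_
  rw [mul_smul_comm, smul_smul, ← pow_val_add hR, ← AddChar.map_add_eq_mul, Equiv.subRight_apply]
  ring_nf

variable [CharZero k]

lemma inv_mul_sum_addChar_mul (hχ : χ.IsPrimitive) (b : ZMod N) :
    (N : k)⁻¹ * ∑ m : ZMod N, χ (m * b) = if b = 0 then 1 else 0 := by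
  rw [AddChar.sum_mulShift b hχ, ZMod.card]
  split_ifs <;> simp [NeZero.ne]

lemma eq_of_sum_addChar_mul_eq (hχ : χ.IsPrimitive) {c d : ZMod N → k}
    (h : ∀ m, ∑ j, χ (m * j) * c j = ∑ j, χ (m * j) * d j) : c = d := by
  have inversion (c : ZMod N → k) (i : ZMod N) :
      (N : k)⁻¹ * ∑ m, χ (-(m * i)) * ∑ j, χ (m * j) * c j = c i := calc
    _ = ∑ j, ((N : k)⁻¹ * ∑ m, χ (m * (j - i))) * c j := by
      simp only [Finset.mul_sum, Finset.sum_mul]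
      rw [Finset.sum_comm]
      refine Finset.sum_congr rfl fun j _ => Finset.sum_congr rfl fun m _ => ?_
      rw [show m * (j - i) = -(m * i) + m * j by ring, AddChar.map_add_eq_mul]
      ring
    _ = c i := by simp [inv_mul_sum_addChar_mul hχ, sub_eq_zero]
  ext i
  rw [← inversion c, ← inversion d]
  simp only [h]

lemma isIdempotentElem_spectralProj (hR : R ^ N = 1) (j : ZMod N) :
    IsIdempotentElem (spectralProj χ R j) := by
  rw [IsIdempotentElem]
  nth_rw 1 [spectralProj]
  simp only [smul_mul_assoc, Finset.sum_mul, pow_val_mul_spectralProj hR, smul_smul,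
    ← AddChar.map_add_eq_mul, neg_add_cancel]
  rw [← Finset.sum_smul, smul_smul]
  simp [NeZero.ne]

lemma sum_spectralProj (hχ : χ.IsPrimitive) : ∑ j, spectralProj χ R j = 1 := calc
  _ = ∑ m : ZMod N, ((N : k)⁻¹ * ∑ j : ZMod N, χ (j * -m)) • R ^ m.val := by
    simp only [spectralProj, Finset.smul_sum, smul_smul, Finset.mul_sum, Finset.sum_smul, mul_neg]
    rw [Finset.sum_comm]
    simp only [mul_comm]
  _ = 1 := by simp only [inv_mul_sum_addChar_mul hχ]; simp

lemma pow_val_eq_sum_spectralProj (hχ : χ.IsPrimitive) (hR : R ^ N = 1) (a : ZMod N) :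
    R ^ a.val = ∑ j, χ (a * j) • spectralProj χ R j := by
  simp only [← pow_val_mul_spectralProj hR]
  rw [← Finset.mul_sum, sum_spectralProj hχ, mul_one]

lemma natCast_mul_map_spectralProj_zero_mul {X : A} {τ : A →ₗ[k] k}
    (h : ∀ a : ZMod N, a ≠ 0 → τ (R ^ a.val * X) = 0) :
    (N : k) * τ (spectralProj χ R 0 * X) = τ X := by
  have h0 : ∑ a : ZMod N, τ (R ^ a.val * X) = τ X := by
    rw [Fintype.sum_eq_single 0 h, ZMod.val_zero, pow_zero, one_mul]
  simp [spectralProj, Finset.sum_mul, h0, NeZero.ne]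

end Spectral

section Idempotents

lemma isIdempotentElem_two_inv_smul_one_add (k : Type*) {A : Type*} [Field k] [CharZero k]
    [Ring A] [Algebra k A] {σ : A} (hσ : σ * σ = 1) :
    IsIdempotentElem ((2 : k)⁻¹ • (1 + σ)) := by
  have h : (1 + σ) * (1 + σ) = (2 : k) • (1 + σ) := by
    rw [mul_add, add_mul, add_mul, hσ, two_smul]
    simp only [one_mul, mul_one]
    abel
  rw [IsIdempotentElem, smul_mul_smul_comm, h, smul_smul]
  norm_num

lemma exists_trace_eq_natCast {k V : Type*} [Field k] [AddCommGroup V] [Module k V]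
    [FiniteDimensional k V] {E : Module.End k V} (hE : IsIdempotentElem E) :
    ∃ r : ℕ, LinearMap.trace k V E = r ∧ (r = 0 → E = 0) :=
  ⟨Module.finrank k (LinearMap.range E), (LinearMap.IsIdempotentElem.isProj_range E hE).trace,
    fun h => LinearMap.range_eq_bot.1 (Submodule.finrank_eq_zero.1 h)⟩

variable {k V : Type*} [Field k] [CharZero k] [AddCommGroup V] [Module k V]
  [FiniteDimensional k V]

-- `r` and `r'` are the multiplicities of the eigenvalues `1` and `-1` of `σ` on the range of `E`.
lemma exists_trace_involution {E σ : Module.End k V} (hE : IsIdempotentElem E)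
    (hσ : σ * σ = 1) (hc : Commute σ E) :
    ∃ r r' : ℕ, LinearMap.trace k V E = r + r' ∧ LinearMap.trace k V (σ * E) = r - r' ∧
      (r = 0 → σ * E = -E) ∧ (r' = 0 → σ * E = E) := by
  have eigen {τ : Module.End k V} (hτ : τ * τ = 1) (hc : Commute τ E) :
      ∃ r : ℕ, LinearMap.trace k V ((2 : k)⁻¹ • (E + τ * E)) = r ∧ (r = 0 → τ * E = -E) := by
    have hP := (isIdempotentElem_two_inv_smul_one_add k hτ).mul_of_commute
      (((Commute.one_left E).add_left hc).smul_left _) hE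
    rw [smul_mul_assoc, add_mul, one_mul] at hP
    obtain ⟨r, hr, hr0⟩ := exists_trace_eq_natCast hP
    refine ⟨r, hr, fun h => (neg_eq_of_add_eq_zero_right ?_).symm⟩
    exact (smul_eq_zero.1 (hr0 h)).resolve_left (by norm_num)
  obtain ⟨r, hr, hr0⟩ := eigen hσ hc
  obtain ⟨r', hr', hr0'⟩ := eigen (τ := -σ) (by rw [neg_mul_neg, hσ]) hc.neg_left
  simp only [map_smul, map_add, neg_mul, map_neg, smul_eq_mul] at hr hr'
  refine ⟨r, r', ?_, ?_, hr0, fun h => neg_injective (by rw [← neg_mul, hr0' h])⟩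
  · rw [← hr, ← hr']; ring
  · rw [← hr, ← hr']; ring

lemma even_finrank_of_involution {σ : Module.End k V} (hσ : σ * σ = 1)
    (ht : LinearMap.trace k V σ = 0) : Even (Module.finrank k V) := by
  obtain ⟨r, r', h1, h2, -⟩ := exists_trace_involution IsIdempotentElem.one hσ
    (Commute.one_right σ)
  rw [mul_one, ht, eq_comm, sub_eq_zero, Nat.cast_inj] at h2
  rw [LinearMap.trace_one, h2] at h1
  exact ⟨r', by exact_mod_cast h1⟩

lemma involution_mul_eq_of_trace {p : ℕ} (hodd : Odd p) {E σ : Module.End k V}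
    (hE : IsIdempotentElem E) (hσ : σ * σ = 1) (hc : Commute σ E)
    (htr : LinearMap.trace k V E = p) {z : ℤ} (hz : LinearMap.trace k V (σ * E) = p * z)
    (hne : σ * E ≠ -E) : σ * E = E := by
  obtain ⟨r, r', h1, h2, h3, h4⟩ := exists_trace_involution hE hσ hc
  have hsum : p = r + r' := by exact_mod_cast htr.symm.trans h1
  have hdiff : (p : ℤ) * z = r - r' := by exact_mod_cast hz.symm.trans h2
  have hdvd : (p : ℤ) ∣ 2 * r := ⟨z + 1, by rw [mul_add, hdiff, hsum]; push_cast; ring⟩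
  have hpr : p ∣ r := (Nat.coprime_two_right.2 hodd).dvd_of_dvd_mul_left (by exact_mod_cast hdvd)
  have hle := Nat.le_of_dvd (Nat.pos_of_ne_zero (hne ∘ h3)) hpr
  exact h4 (by lia)

end Idempotents

section Multiplicity

lemma card_mul_eq_sum_of_convolution_eq {G : Type*} [AddCommGroup G] [Fintype G] {r : G → ℕ}
    (hpos : ∀ j, r j ≠ 0) (hconv : ∀ j, ∑ a, r a * r (j - a) = (∑ a, r a) * r j) (j : G) :
    Fintype.card G * r j = ∑ a, r a := by
  obtain ⟨m, -, hmax⟩ := Finset.exists_max_image Finset.univ r Finset.univ_nonempty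
  -- At a maximum of `r` the convolution identity leaves no slack in any summand.
  have hconst (j : G) : r j = r m := by
    have hle : ∀ a ∈ Finset.univ, r a * r (m - a) ≤ r a * r m :=
      fun a _ => Nat.mul_le_mul_left _ (hmax _ (Finset.mem_univ _))
    have heq := (Finset.sum_eq_sum_iff_of_le hle).1 (by rw [hconv, Finset.sum_mul])
    simpa using Nat.eq_of_mul_eq_mul_left (Nat.pos_of_ne_zero (hpos _))
      (heq (m - j) (Finset.mem_univ _))
  simp [hconst]

variable {k V : Type*} [Field k] [AddCommGroup V] [Module k V]
  {N : ℕ} [NeZero N] {χ : AddChar (ZMod N) k} {R : Module.End k V}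

lemma eq_one_of_commute_of_cyclic [FiniteDimensional k V] {T : Module.End k V} {v : V}
    (hv : LinearIndependent k fun m : ZMod N => (R ^ m.val) v) (hN : N = Module.finrank k V)
    (hTR : Commute T R) (hT : T v = v) : T = 1 := by
  refine LinearMap.ext_on_range (hv.span_eq_top_of_card_eq_finrank' (by rw [ZMod.card, hN]))
    fun m => ?_
  rw [← Module.End.mul_apply, (hTR.pow_right m.val).eq, Module.End.mul_apply, hT,
    Module.End.one_apply]

variable [CharZero k]

lemma spectralProj_apply_ne_zero {v : V}
    (hv : LinearIndependent k fun m : ZMod N => (R ^ m.val) v) (j : ZMod N) :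
    spectralProj χ R j v ≠ 0 := by
  intro h0
  rw [spectralProj, LinearMap.smul_apply, smul_eq_zero, LinearMap.sum_apply] at h0
  have h1 := Fintype.linearIndependent_iff.1 hv _ (h0.resolve_left (by simp [NeZero.ne])) 0
  simp at h1

variable [FiniteDimensional k V]

lemma natCast_mul_trace_spectralProj (hχ : χ.IsPrimitive) (hR : R ^ N = 1)
    (hne : ∀ j, spectralProj χ R j ≠ 0)
    (hsq : ∀ m : ℕ, LinearMap.trace k V (R ^ m) ^ 2 =
      Module.finrank k V * LinearMap.trace k V (R ^ m)) (j : ZMod N) :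
    (N : k) * LinearMap.trace k V (spectralProj χ R j) = Module.finrank k V ∧
      N ∣ Module.finrank k V := by
  choose r hr hr0 using
    fun j => exists_trace_eq_natCast (isIdempotentElem_spectralProj (χ := χ) hR j)
  have hpow (m : ZMod N) : LinearMap.trace k V (R ^ m.val) = ∑ j, χ (m * j) * (r j : k) := by
    rw [pow_val_eq_sum_spectralProj hχ hR m, map_sum]
    simp [hr]
  have hsum : ∑ j, r j = Module.finrank k V := by
    have h := hpow 0
    simp only [ZMod.val_zero, pow_zero, LinearMap.trace_one, zero_mul, AddChar.map_zero_eq_one,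
      one_mul] at h
    exact_mod_cast h.symm
  have hconv : (fun j => ∑ a, (r a * r (j - a) : k)) = fun j => (Module.finrank k V * r j : k) := by
    refine eq_of_sum_addChar_mul_eq hχ fun m => ?_
    rw [sum_addChar_mul_convolution (fun a => (r a : k)) fun a => (r a : k), ← hpow, ← sq,
      hsq, hpow, Finset.mul_sum]
    exact Finset.sum_congr rfl fun _ _ => mul_left_comm _ _ _
  have hcard := card_mul_eq_sum_of_convolution_eq (fun j h => hne j (hr0 j h))
    (fun j => by rw [hsum]; exact_mod_cast congrFun hconv j) j
  rw [ZMod.card, hsum] at hcard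
  exact ⟨by rw [hr]; exact_mod_cast hcard, ⟨_, hcard.symm⟩⟩

end Multiplicity

section Galois

variable {k V : Type*} [Field k] [CharZero k] {p : ℕ} [Fact p.Prime] {ω : k}

lemma sum_intCast_mul_pow_val_eq_zero (hω : IsPrimitiveRoot ω p) (D : ZMod p → ℤ)
    (hD : ∑ i, (D i : k) * ω ^ i.val = 0) {c : ZMod p} (hc : c ≠ 0) :
    ∑ i, (D i : k) * (ω ^ c.val) ^ i.val = 0 := by
  let P : Polynomial ℤ := ∑ i, Polynomial.C (D i) * Polynomial.X ^ i.val
  have hP (z : k) : Polynomial.aeval z P = ∑ i, (D i : k) * z ^ i.val := by simp [P]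
  have hcop : Nat.Coprime c.val p := (ZMod.isUnit_iff_coprime c.val p).1 (by simpa using hc)
  have hdvd : minpoly ℤ (ω ^ c.val) ∣ P := by
    rw [← hω.minpoly_eq_pow_coprime hcop]
    exact minpoly.isIntegrallyClosed_dvd (hω.isIntegral (NeZero.pos p)) (by rw [hP, hD])
  rw [← hP]
  exact Polynomial.aeval_eq_zero_of_dvd_aeval_eq_zero hdvd (minpoly.aeval ℤ _)

variable [AddCommGroup V] [Module k V] [FiniteDimensional k V]

lemma trace_involution_mul_pow_eq_zero (hω : IsPrimitiveRoot ω p) {σ W : Module.End k V}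
    (hσ : σ * σ = 1) (hc : Commute σ W) (hW : W ^ p = 1)
    (ht : LinearMap.trace k V (σ * W) = 0) {c : ZMod p} (hc0 : c ≠ 0) :
    LinearMap.trace k V (σ * W ^ c.val) = 0 := by
  let χ := AddChar.zmodChar p hω.pow_eq_one
  have hχ : χ.IsPrimitive := AddChar.zmodChar_primitive_of_primitive_root p hω
  have hint (j : ZMod p) : ∃ z : ℤ, LinearMap.trace k V (σ * spectralProj χ W j) = z := by
    obtain ⟨r, r', -, h, -⟩ := exists_trace_involution
      (isIdempotentElem_spectralProj (χ := χ) hW j) hσ (commute_spectralProj hc j)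
    exact ⟨r - r', by rw [h]; push_cast; rfl⟩
  choose D hD using hint
  have htr (c : ZMod p) : LinearMap.trace k V (σ * W ^ c.val) =
      ∑ i, (D i : k) * (ω ^ c.val) ^ i.val := by
    rw [pow_val_eq_sum_spectralProj hχ hW c, Finset.mul_sum, map_sum]
    refine Finset.sum_congr rfl fun i _ => ?_
    rw [mul_smul_comm, map_smul, hD, smul_eq_mul, mul_comm, ← pow_val_mul hω.pow_eq_one]
    rfl
  rw [htr]
  refine sum_intCast_mul_pow_val_eq_zero hω D ?_ hc0
  simpa [ZMod.val_one p, ht] using (htr 1).symm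

end Galois

section Involution

variable {k V : Type*} [Field k] [CharZero k] [AddCommGroup V] [Module k V]
  [FiniteDimensional k V]

lemma exists_trace_involution_mul_eq_natCast_mul {N : ℕ} [NeZero N] {χ : AddChar (ZMod N) k}
    {E σ Q : Module.End k V} (hE : IsIdempotentElem E) (hσ : σ * σ = 1) (hσE : Commute σ E)
    (hσQ : Commute σ Q) (hQE : Commute Q E) (hQ : Q ^ N = 1)
    (h : ∀ a : ZMod N, a ≠ 0 → LinearMap.trace k V (Q ^ a.val * (σ * E)) = 0) :
    ∃ z : ℤ, LinearMap.trace k V (σ * E) = N * z := by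
  obtain ⟨s, s', -, hs, -⟩ := exists_trace_involution
    ((isIdempotentElem_spectralProj (χ := χ) hQ 0).mul_of_commute
      (commute_spectralProj hQE.symm 0).symm hE) hσ ((commute_spectralProj hσQ 0).mul_right hσE)
  refine ⟨s - s', ?_⟩
  rw [← natCast_mul_map_spectralProj_zero_mul (χ := χ) h, ← mul_assoc _ σ,
    ← (commute_spectralProj hσQ 0).eq, mul_assoc, hs]
  push_cast
  rfl

variable {p : ℕ} [Fact p.Prime] {ω : k}

lemma trace_involution_mul_pow_mul_spectralProj_eq_zero (hω : IsPrimitiveRoot ω p)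
    {σ Q R : Module.End k V} (hσ : σ * σ = 1) (hσQ : Commute σ Q) (hσR : Commute σ R)
    (hQR : Commute Q R) (hQ : Q ^ p = 1) (hR : R ^ p = 1)
    (htr : ∀ m : ℕ, LinearMap.trace k V (σ * (Q * R ^ m)) = 0) {a : ZMod p} (ha : a ≠ 0)
    (χ : AddChar (ZMod p) k) (j : ZMod p) :
    LinearMap.trace k V (σ * (Q ^ a.val * spectralProj χ R j)) = 0 := by
  have hpow (b : ZMod p) : LinearMap.trace k V (σ * (Q ^ a.val * R ^ b.val)) = 0 := by
    have hcomm : Commute Q (R ^ (b / a).val) := hQR.pow_right _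
    have hW : (Q * R ^ (b / a).val) ^ p = 1 := by
      rw [hcomm.mul_pow, hQ, one_mul, pow_right_comm, hR, one_pow]
    have h := trace_involution_mul_pow_eq_zero hω hσ (hσQ.mul_right (hσR.pow_right _)) hW
      (htr _) ha
    rwa [hcomm.mul_pow, ← pow_val_mul hR, div_mul_cancel₀ b ha] at h
  simp [spectralProj, Finset.mul_sum, hpow]

-- With `T = σ * Q`, `σ = T ^ p`, `Q = T ^ (p + 1)`, Galois conjugation and vanishing traces force
-- `tr (σ * E)` into `p ℤ` on each `p`-dimensional eigenspace of `R`, so `σ = ±1` there.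
lemma pow_prime_eq_one_of_trace (hω : IsPrimitiveRoot ω p) (hodd : Odd p)
    {T R : Module.End k V} (hTR : Commute T R) (hT : T ^ (2 * p) = 1) (hR : R ^ p = 1)
    (htr : ∀ m : ℕ, LinearMap.trace k V (T * R ^ m) = 0) {χ : AddChar (ZMod p) k}
    (hχ : χ.IsPrimitive) (hmult : ∀ j, LinearMap.trace k V (spectralProj χ R j) = p)
    {v : V} (hv : T v = v) (hne : ∀ j, spectralProj χ R j v ≠ 0) : T ^ p = 1 := by
  have hσσ : T ^ p * T ^ p = 1 := by rw [← pow_add, ← two_mul, hT]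
  have hσQ : T ^ p * T ^ (p + 1) = T := by
    rw [← pow_add, show p + (p + 1) = 2 * p + 1 by ring, pow_succ, hT, one_mul]
  have hQ : (T ^ (p + 1)) ^ p = 1 := by
    obtain ⟨s, hs⟩ := hodd
    rw [← pow_mul, show (p + 1) * p = 2 * p * (s + 1) by rw [hs]; ring, pow_mul, hT, one_pow]
  have hfix (j : ZMod p) : T ^ p * spectralProj χ R j = spectralProj χ R j := by
    have hσE : Commute (T ^ p) (spectralProj χ R j) := commute_spectralProj (hTR.pow_left _) j
    have hE := isIdempotentElem_spectralProj (χ := χ) hR j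
    obtain ⟨z, hz⟩ := exists_trace_involution_mul_eq_natCast_mul (χ := χ) hE hσσ hσE
      (Commute.pow_pow_self T _ (p + 1)) (commute_spectralProj (hTR.pow_left _) j) hQ
      fun a ha => by
        rw [← mul_assoc, ← (Commute.pow_pow_self T p _ |>.pow_right _).eq, mul_assoc]
        exact trace_involution_mul_pow_mul_spectralProj_eq_zero hω hσσ
          (Commute.pow_pow_self T _ _) (hTR.pow_left _) (hTR.pow_left _) hQ hR
          (fun m => by rw [← mul_assoc, hσQ, htr]) ha χ j
    refine involution_mul_eq_of_trace hodd hE hσσ hσE (hmult j) hz fun hneg => hne j ?_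
    have hfixv : (T ^ p) v = v := by rw [Module.End.pow_apply, Function.iterate_fixed hv]
    have hv' := LinearMap.congr_fun (hσE.eq.symm.trans hneg) v
    rw [Module.End.mul_apply, hfixv, LinearMap.neg_apply, eq_neg_iff_add_eq_zero,
      ← two_smul k] at hv'
    exact (smul_eq_zero.1 hv').resolve_left two_ne_zero
  rw [← mul_one (T ^ p), ← sum_spectralProj hχ (R := R), Finset.mul_sum]
  simp only [hfix]

end Involution

section Orbit

variable {G k V : Type*} [Group G] [Field k] [AddCommGroup V] [Module k V]

/-- A representation `ρ` of a group by operators on `V` that commute with `T`, whose orbit of the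
`T`-fixed vector `v` is linearly independent, and which satisfies the trace identities shared by
the group-like elements of a non-semisimple Hopf algebra and of its dual when `T` is the squared
antipode. -/
structure IsTracelessAction (ρ : G →* Module.End k V) (T : Module.End k V) (v : V) : Prop where
  linearIndependent : LinearIndependent k fun x => ρ x v
  commute : ∀ x, Commute T (ρ x)
  apply_eq : T v = v
  trace_mul : ∀ x, LinearMap.trace k V (T * ρ x) = 0
  trace_sq : ∀ x, LinearMap.trace k V (ρ x) ^ 2 =
    Module.finrank k V * LinearMap.trace k V (ρ x)

namespace IsTracelessAction

variable {ρ : G →* Module.End k V} {T : Module.End k V} {v : V}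

lemma finite [FiniteDimensional k V] (h : IsTracelessAction ρ T v) : Finite G :=
  h.linearIndependent.finite

lemma linearIndependent_pow_val (h : IsTracelessAction ρ T v) (u : G) [NeZero (orderOf u)] :
    LinearIndependent k fun m : ZMod (orderOf u) => (ρ u ^ m.val) v := by
  simp only [← map_pow]
  refine h.linearIndependent.comp (fun m : ZMod (orderOf u) => u ^ m.val) fun a b hab => ?_
  exact ZMod.val_injective _ (pow_injOn_Iio_orderOf (ZMod.val_lt a) (ZMod.val_lt b) hab)

lemma trace_eq_zero (h : IsTracelessAction ρ T v) : LinearMap.trace k V T = 0 := by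
  simpa using h.trace_mul 1

variable [CharZero k] [FiniteDimensional k V]

lemma ne_one (h : IsTracelessAction ρ T v) : T ≠ 1 := by
  rintro rfl
  have hV := h.trace_eq_zero
  rw [LinearMap.trace_one, Nat.cast_eq_zero, Module.finrank_eq_zero_iff_of_free] at hV
  exact h.linearIndependent.ne_zero 1 (Subsingleton.elim _ _)

lemma natCast_orderOf_mul_trace_spectralProj (h : IsTracelessAction ρ T v) (u : G)
    [NeZero (orderOf u)] {χ : AddChar (ZMod (orderOf u)) k} (hχ : χ.IsPrimitive)
    (j : ZMod (orderOf u)) :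
    (orderOf u : k) * LinearMap.trace k V (spectralProj χ (ρ u) j) = Module.finrank k V ∧
      orderOf u ∣ Module.finrank k V :=
  natCast_mul_trace_spectralProj hχ (by rw [← map_pow, pow_orderOf_eq_one, map_one])
    (fun j h0 => spectralProj_apply_ne_zero (h.linearIndependent_pow_val u) j (by rw [h0]; rfl))
    (fun m => by rw [← map_pow ρ]; exact h.trace_sq _) j

variable [IsAlgClosed k] {p : ℕ}

lemma orderOf_dvd_prime (h : IsTracelessAction ρ T v) (hp : p.Prime)
    (hdim : Module.finrank k V = p ^ 2) (u : G) : orderOf u ∣ p := by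
  have := h.finite
  have : NeZero (orderOf u) := ⟨(orderOf_pos u).ne'⟩
  obtain ⟨ω, hω⟩ := HasEnoughRootsOfUnity.exists_primitiveRoot k (orderOf u)
  have hdvd := (h.natCast_orderOf_mul_trace_spectralProj u
    (AddChar.zmodChar_primitive_of_primitive_root _ hω) 0).2
  have hne : orderOf u ≠ p ^ 2 := fun hu => h.ne_one <|
    eq_one_of_commute_of_cyclic (h.linearIndependent_pow_val u) (hu.trans hdim.symm)
      (h.commute u) h.apply_eq
  obtain ⟨i, hi, hu⟩ := (Nat.dvd_prime_pow hp).1 (hdim ▸ hdvd)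
  have hi1 : i ≤ 1 := Nat.lt_succ_iff.1 (hi.lt_of_ne fun h2 => hne (h2 ▸ hu))
  exact hu ▸ (pow_dvd_pow p hi1).trans (pow_one p).dvd

lemma pow_prime_eq_one (h : IsTracelessAction ρ T v) (hp : p.Prime) (hodd : Odd p)
    (hdim : Module.finrank k V = p ^ 2) (hT : T ^ (2 * p) = 1) {u : G} (hu : u ≠ 1) :
    T ^ p = 1 := by
  obtain rfl : orderOf u = p := ((Nat.dvd_prime hp).1 (h.orderOf_dvd_prime hp hdim u)).resolve_left
    (hu ∘ orderOf_eq_one_iff.1)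
  have : Fact (orderOf u).Prime := ⟨hp⟩
  have hp0 : (orderOf u : k) ≠ 0 := Nat.cast_ne_zero.2 hp.ne_zero
  have : NeZero (orderOf u : k) := ⟨hp0⟩
  obtain ⟨ω, hω⟩ := HasEnoughRootsOfUnity.exists_primitiveRoot k (orderOf u)
  have hχ := AddChar.zmodChar_primitive_of_primitive_root _ hω
  refine pow_prime_eq_one_of_trace hω hodd (h.commute u) hT
    (by rw [← map_pow, pow_orderOf_eq_one, map_one])
    (fun m => by rw [← map_pow ρ]; exact h.trace_mul _) hχ (fun j => mul_left_cancel₀ hp0 ?_)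
    h.apply_eq (spectralProj_apply_ne_zero (h.linearIndependent_pow_val u))
  rw [(h.natCast_orderOf_mul_trace_spectralProj u hχ j).1, hdim, Nat.cast_pow, sq]

end IsTracelessAction

end Orbit

section GroupLikeAction

variable {k H : Type*} [Field k] [Ring H] [HopfAlgebra k H]

variable (k H) in
/-- The action of the group-like elements of `H` on `H` by right multiplication. -/
noncomputable def groupLikeAction : (GroupLike k H)ᵐᵒᵖ →* Module.End k H where
  toFun g := LinearMap.mulRight k g.unop
  map_one' := LinearMap.mulRight_one k H
  map_mul' _ _ := LinearMap.mulRight_mul k H _ _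

lemma commute_antipodeSq_mulRight {g : H} (hg : IsGroupLikeElem k g) :
    Commute (antipodeSq k H) (LinearMap.mulRight k g) := LinearMap.ext fun a => by
  simp only [Module.End.mul_apply, LinearMap.mulRight_apply, antipodeSq_mul,
    antipodeSq_apply k g, hg.antipode_antipode]

lemma IsIntegralPair.isTracelessAction_groupLikeAction [FiniteDimensional k H] {t : H}
    {l : Module.Dual k H} (h : IsIntegralPair t l) (hss : ¬ IsSemisimpleRing H) :
    IsTracelessAction (groupLikeAction k H) (antipodeSq k H) 1 where
  linearIndependent := by
    simp only [groupLikeAction, MonoidHom.coe_mk, OneHom.coe_mk, LinearMap.mulRight_apply, one_mul]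
    exact linearIndep_groupLikeVal.comp _ MulOpposite.unop_injective
  commute g := commute_antipodeSq_mulRight g.unop.2
  apply_eq := by rw [antipodeSq_apply, antipode_one, antipode_one]
  trace_mul g := by
    rw [LinearMap.trace_mul_comm]
    exact h.trace_mulRight_mul_antipodeSq_eq_zero hss _
  trace_sq g := trace_mulRight_sq g.unop.2

end GroupLikeAction

section CharacterAction

variable {k H : Type*} [Field k] [Ring H] [HopfAlgebra k H]

lemma dualMap_mul {V : Type*} [AddCommGroup V] [Module k V] (A B : Module.End k V) :
    (A * B).dualMap = B.dualMap * A.dualMap := rfl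

lemma dualMap_pow {V : Type*} [AddCommGroup V] [Module k V] (A : Module.End k V) (n : ℕ) :
    (A ^ n).dualMap = (A.dualMap : Module.End k (Module.Dual k V)) ^ n := by
  induction n with
  | zero => rfl
  | succ n ih => rw [pow_succ, dualMap_mul, ih, pow_succ']

lemma dualMap_eq_one_iff {V : Type*} [AddCommGroup V] [Module k V] {A : Module.End k V} :
    (A.dualMap : Module.End k (Module.Dual k V)) = 1 ↔ A = 1 :=
  ⟨fun hA => LinearMap.ext fun x => Module.eval_apply_injective k <| LinearMap.ext fun f =>
      LinearMap.congr_fun (LinearMap.congr_fun hA f) x,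
    fun hA => hA ▸ rfl⟩

lemma conv_counit (f : Module.Dual k H) : conv f (counit (R := k)) = f := LinearMap.ext fun a => by
  simp only [conv_apply, mul_comm (f _), ← smul_eq_mul]
  exact sweedler_counit_smul_left a

lemma counit_conv (f : Module.Dual k H) : conv (counit (R := k)) f = f := LinearMap.ext fun a => by
  simp only [conv_apply, ← smul_eq_mul]
  exact sweedler_counit_smul_right a

lemma dualMap_rightHit (f g : Module.Dual k H) : (rightHit g).dualMap f = conv g f :=
  LinearMap.ext fun a => apply_rightHit f g a

/-- A character `α` as a unit of the convolution monoid of characters, with inverse `α ∘ S`. -/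
noncomputable def characterUnit (α : H →ₐ[k] k) : (WithConv (H →ₐ[k] k))ˣ where
  val := .toConv α
  inv := .toConv <| AlgHom.ofLinearMap (α.toLinearMap ∘ₗ antipode k)
    (by rw [LinearMap.comp_apply, antipode_one, AlgHom.toLinearMap_apply, map_one])
    fun a b => by
      simp only [LinearMap.comp_apply, antipode_mul_antidistrib, AlgHom.toLinearMap_apply, map_mul,
        mul_comm]
  val_inv := WithConv.ext <| AlgHom.ext fun a => by
    change conv α.toLinearMap (α.toLinearMap ∘ₗ antipode k) a = _
    simp only [conv_apply, LinearMap.comp_apply, AlgHom.toLinearMap_apply, ← map_mul]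
    rw [sweedler_mul_antipode a (F := fun x => α x), map_one, smul_eq_mul, mul_one]
    rfl
  inv_val := WithConv.ext <| AlgHom.ext fun a => by
    change conv (α.toLinearMap ∘ₗ antipode k) α.toLinearMap a = _
    simp only [conv_apply, LinearMap.comp_apply, AlgHom.toLinearMap_apply, ← map_mul]
    rw [sweedler_antipode_mul a (F := fun x => α x), map_one, smul_eq_mul, mul_one]
    rfl

variable (k H) in
/-- The action of the characters of `H` on the dual of `H` by left convolution. -/
noncomputable def characterAction :
    (WithConv (H →ₐ[k] k))ˣ →* Module.End k (Module.Dual k H) where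
  toFun α := (rightHit α.val.ofConv.toLinearMap).dualMap
  map_one' := LinearMap.ext fun f => (dualMap_rightHit f _).trans (counit_conv f)
  map_mul' α β := LinearMap.ext fun f => by
    simp only [Module.End.mul_apply, dualMap_rightHit]
    exact conv_assoc α.val.ofConv.toLinearMap β.val.ofConv.toLinearMap f

lemma IsIntegralPair.isTracelessAction_characterAction [FiniteDimensional k H] {t : H}
    {l : Module.Dual k H} (h : IsIntegralPair t l) (hss : ¬ IsSemisimpleRing H) :
    IsTracelessAction (characterAction k H) (antipodeSq k H).dualMap (counit (R := k)) where
  linearIndependent := by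
    simp only [characterAction, MonoidHom.coe_mk, OneHom.coe_mk, dualMap_rightHit, conv_counit]
    exact (linearIndependent_toLinearMap k H k).comp _
      (WithConv.ofConv_injective.comp Units.val_injective)
  commute α := congrArg LinearMap.dualMap (commute_rightHit_antipodeSq <|
    LinearMap.ext fun a => algHom_antipodeSq α.val.ofConv a).eq
  apply_eq := LinearMap.ext fun a => algHom_antipodeSq (Bialgebra.counitAlgHom k H) a
  trace_mul α := by
    rw [LinearMap.trace_mul_comm]
    exact (LinearMap.trace_transpose' _).trans
      (h.trace_antipodeSq_mul_rightHit_eq_zero hss α.val.ofConv)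
  trace_sq α := by
    have trace_eq : LinearMap.trace k _ (characterAction k H α) =
      LinearMap.trace k H (rightHit α.val.ofConv.toLinearMap) := LinearMap.trace_transpose' _
    rw [trace_eq, Subspace.dual_finrank_eq, trace_rightHit_sq]

end CharacterAction

section PrimeSquare

variable {k H : Type*} [Field k] [IsAlgClosed k] [CharZero k] [Ring H] [HopfAlgebra k H]
  [FiniteDimensional k H] {p : ℕ} {t : H} {l : Module.Dual k H}

theorem IsIntegralPair.antipodeSq_pow_prime (h : IsIntegralPair t l) (hp : p.Prime)
    (hodd : Odd p) (hdim : Module.finrank k H = p ^ 2) (hss : ¬ IsSemisimpleRing H) :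
    antipodeSq k H ^ p = 1 := by
  let g : (GroupLike k H)ᵐᵒᵖ := .op ⟨modularElem t l, h.isGroupLikeElem_modularElem⟩
  let α := characterUnit h.modularChar
  have hG := h.isTracelessAction_groupLikeAction hss
  have hX := h.isTracelessAction_characterAction hss
  have hdim' := (Subspace.dual_finrank_eq (K := k) (V := H)).trans hdim
  have modular_pow {n : ℕ} (hg : g ^ n = 1) (hα : α ^ n = 1) : antipodeSq k H ^ (2 * n) = 1 := by
    refine h.antipodeSq_pow_eq_one (congrArg (fun x => x.unop.val) hg) ?_
    rw [← dualMap_eq_one_iff, dualMap_pow]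
    exact (map_pow (characterAction k H) α n).symm.trans (hα ▸ map_one _)
  have antipodeSq_pow : antipodeSq k H ^ (2 * p) = 1 :=
    modular_pow (orderOf_dvd_iff_pow_eq_one.1 (hG.orderOf_dvd_prime hp hdim g))
      (orderOf_dvd_iff_pow_eq_one.1 (hX.orderOf_dvd_prime hp hdim' α))
  by_cases hg : g = 1
  · by_cases hα : α = 1
    · have involution : antipodeSq k H * antipodeSq k H = 1 := by
        simpa only [mul_one, sq] using modular_pow (n := 1) (by rw [hg, one_pow])
          (by rw [hα, one_pow])
      have even_dim := even_finrank_of_involution involution hG.trace_eq_zero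
      exact absurd (hdim ▸ even_dim) (Nat.not_even_iff_odd.2 hodd.pow)
    · rw [← dualMap_eq_one_iff, dualMap_pow]
      refine hX.pow_prime_eq_one hp hodd hdim' ?_ hα
      rw [← dualMap_pow, dualMap_eq_one_iff, antipodeSq_pow]
  · exact hG.pow_prime_eq_one hp hodd hdim antipodeSq_pow hg

end PrimeSquare

end FiniteDimHopf

/-- from the proof of Theorem 6.5. If `H` is a non-semisimple Hopf algebra of
dimension `p²`, `p` an odd prime, over an algebraically closed field of characteristic `0`,
then `S^{2p} = id` and the order of `S²` is `p`. -/
theorem stmt5 (k : Type*) [Field k] [IsAlgClosed k] [CharZero k]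
    (p : ℕ) (hp : p.Prime) (hpodd : Odd p)
    (H : Type*) [Ring H] [HopfAlgebra k H] [FiniteDimensional k H]
    (hdim : Module.finrank k H = p ^ 2) (hss : ¬ IsSemisimpleRing H) :
    (HopfAlgebra.antipode (R := k) (A := H) : Module.End k H) ^ (2 * p) = 1 ∧
      orderOf ((HopfAlgebra.antipode (R := k) (A := H) : Module.End k H) ^ 2) = p := by
  obtain ⟨t, l, h⟩ := FiniteDimHopf.exists_isIntegralPair k H
  have : Fact p.Prime := ⟨hp⟩
  have antipodeSq_pow := h.antipodeSq_pow_prime hp hpodd hdim hss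
  exact ⟨(pow_mul _ 2 p).trans antipodeSq_pow,
    orderOf_eq_prime antipodeSq_pow (h.isTracelessAction_groupLikeAction hss).ne_one⟩
end
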